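/- Let n ≥ 1 and p ∈ (1,∞), and let ν_pⁿ be the probability measure on ℝⁿ with density c_pⁿ·exp(−Σ_{i=1}ⁿ |x_i|^p / p) with respect to Lebesgue measure. For λ > 0 let N(λ) denote the number of indices k ≥ 1 with λ_k^Lip(ℝⁿ,|·|,ν_pⁿ) ≤ λ. Then N(λ) is finite for every λ > 0, and as λ → ∞, N(λ) / λ^{(n/2)·p/(p−1)} converges to 2^{n/(p−1)}·Γ(1/(2(p−1)) + 1)ⁿ / ( π^{n/2}·Γ((n/2)·p/(p−1) + 1) ), where Γ denotes the Gamma function. -/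

import Mathlib

open MeasureTheory Filter Topology ENNReal

/-- The local Lipschitz constant `|∇f|(x) = limsup_{y→x} |f(y)-f(x)|/d(y,x)`
(equal to `0` at isolated points, by the convention `Real.sInf ∅ = 0`). -/
noncomputable def localLip {Ω : Type*} [PseudoMetricSpace Ω] (f : Ω → ℝ) (x : Ω) : ℝ :=
  Filter.limsup (fun y => |f y - f x| / dist y x) (nhdsWithin x {x}ᶜ)

/-- Membership in the metric Sobolev space `W^{1,2}_Lip(Ω,d,μ)`. -/
def memW12Lip {Ω : Type*} [PseudoMetricSpace Ω] [MeasurableSpace Ω]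
    (μ : Measure Ω) (f : Ω → ℝ) : Prop :=
  LocallyLipschitz f ∧
    (∫⁻ x, ENNReal.ofReal ((f x) ^ 2) ∂μ) + (∫⁻ x, ENNReal.ofReal ((localLip f x) ^ 2) ∂μ) < ⊤

/-- The `k`-th metric eigenvalue `λ_k^Lip(Ω,d,μ)`: the infimum over `k`-dimensional
linear subspaces `F ⊆ W^{1,2}_Lip` of the supremum of the Rayleigh quotient over `F`. -/
noncomputable def lambdaLip {Ω : Type*} [PseudoMetricSpace Ω] [MeasurableSpace Ω]
    (μ : Measure Ω) (k : ℕ) : ℝ :=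
  sInf { a : ℝ | ∃ F : Submodule ℝ (Ω → ℝ), Module.finrank ℝ F = k ∧
    (∀ f ∈ F, memW12Lip μ f) ∧
    a = sSup { r : ℝ | ∃ f ∈ F, (∫ x, (f x) ^ 2 ∂μ) ≠ 0 ∧
      r = (∫ x, (localLip f x) ^ 2 ∂μ) / (∫ x, (f x) ^ 2 ∂μ) } }

/-- The `p`-exponential probability measure `ν_pⁿ` on `ℝⁿ`, with density proportional
to `exp(-∑ᵢ |xᵢ|^p / p)` with respect to Lebesgue measure, normalized to mass one. -/
noncomputable def nuP (n : ℕ) (p : ℝ) : Measure (EuclideanSpace ℝ (Fin n)) :=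
  ((volume.withDensity fun x : EuclideanSpace ℝ (Fin n) =>
      ENNReal.ofReal (Real.exp (-(∑ i, |x i| ^ p) / p))) Set.univ)⁻¹ •
    volume.withDensity fun x : EuclideanSpace ℝ (Fin n) =>
      ENNReal.ofReal (Real.exp (-(∑ i, |x i| ^ p) / p))

/-!
With `V s = |s| ^ p / p`, multiplication by `exp (-∑ V (x i) / 2)` turns the Dirichlet form of
`ν_pⁿ` into a quadratic form on `L²(ℝⁿ)` which, up to a factor `1 - δ` and an additive constant,
agrees with that of the Schrödinger operator `-Δ + ∑ V' (x i) ^ 2 / 4`. Cut `ℝⁿ` into cubes of side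
`l`. Replacing the potential on each cube by its maximum and imposing Dirichlet conditions yields
trial spaces; replacing it by its minimum and imposing Neumann conditions bounds the dimension of
every space of low energy, because no nonzero function in it is orthogonal to all low modes. On both
sides the levels are `∑ i, (((kᵢ + σ) l) ^ (2 (p - 1)) / 4 + (mᵢ π / l) ^ 2)` with `σ = 1` or
`σ = 0`.

For a suitable `l` depending on the energy `Λ`, counting the levels below `Λ` amounts to counting
the lattice points in a dilate of the superellipsoid `∑ s i ^ (2 (p - 1)) + ∑ t i ^ 2 ≤ 1`, whose
volume is a quotient of Gamma functions. Finally `δ → 0`.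
-/

namespace WeylAsymptotics

/-! ### Locally Lipschitz functions -/

section LocallyLipschitz

variable {α κ : Type*} [PseudoEMetricSpace α]

theorem locallyLipschitz_mul {f g : α → ℝ} (hf : LocallyLipschitz f) (hg : LocallyLipschitz g) :
    LocallyLipschitz fun x => f x * g x :=
  (contDiff_fst.mul contDiff_snd : ContDiff ℝ 1 fun q : ℝ × ℝ => q.1 * q.2).locallyLipschitz.comp
    (hf.prodMk hg)

theorem locallyLipschitz_finsetSum (s : Finset κ) {f : κ → α → ℝ}
    (hf : ∀ i ∈ s, LocallyLipschitz (f i)) : LocallyLipschitz fun x => ∑ i ∈ s, f i x := by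
  classical
  induction s using Finset.induction_on with
  | empty => simpa only [Finset.sum_empty] using LocallyLipschitz.const (0 : ℝ)
  | insert a s ha ih =>
    simp only [Finset.sum_insert ha]
    exact (hf a (by simp)).add (ih fun i hi => hf i (by simp [hi]))

theorem locallyLipschitz_finsetProd (s : Finset κ) {f : κ → α → ℝ}
    (hf : ∀ i ∈ s, LocallyLipschitz (f i)) : LocallyLipschitz fun x => ∏ i ∈ s, f i x := by
  classical
  induction s using Finset.induction_on with
  | empty => simpa only [Finset.prod_empty] using LocallyLipschitz.const (1 : ℝ)
  | insert a s ha ih =>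
    simp only [Finset.prod_insert ha]
    exact locallyLipschitz_mul (hf a (by simp)) (ih fun i hi => hf i (by simp [hi]))

end LocallyLipschitz

theorem ae_differentiableAt_of_locallyLipschitz {E : Type*} [NormedAddCommGroup E]
    [NormedSpace ℝ E] [FiniteDimensional ℝ E] [MeasurableSpace E] [BorelSpace E] {μ : Measure E}
    [μ.IsAddHaarMeasure] {f : E → ℝ} (hf : LocallyLipschitz f) :
    ∀ᵐ x ∂μ, DifferentiableAt ℝ f x := by
  refine ae_iff.2 (measure_null_of_locally_null _ fun x _ => ?_)
  obtain ⟨K, t, ht, hK⟩ := hf x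
  obtain ⟨u, hut, huo, hxu⟩ := mem_nhds_iff.1 ht
  refine ⟨{a | ¬DifferentiableAt ℝ f a} ∩ u, inter_mem_nhdsWithin _ (huo.mem_nhds hxu), ?_⟩
  refine measure_mono_null ?_
    (ae_iff.1 ((hK.mono hut).ae_differentiableWithinAt_of_mem_of_real (μ := μ)))
  rintro y ⟨hy, hyu⟩ h
  exact hy ((h hyu).differentiableAt (huo.mem_nhds hyu))

section Line

variable {g : ℝ → ℝ}

theorem exists_lipschitzOnWith_Icc (hg : LocallyLipschitz g) (a b : ℝ) :
    ∃ K, LipschitzOnWith K g (Set.Icc a b) :=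
  hg.locallyLipschitzOn.exists_lipschitzOnWith_of_compact isCompact_Icc

theorem absolutelyContinuousOnInterval_of_locallyLipschitz (hg : LocallyLipschitz g) (a b : ℝ) :
    AbsolutelyContinuousOnInterval g a b :=
  let ⟨_, hK⟩ := exists_lipschitzOnWith_Icc hg (min a b) (max a b)
  hK.absolutelyContinuousOnInterval

theorem exists_abs_deriv_le_of_locallyLipschitz (hg : LocallyLipschitz g) (a b : ℝ) :
    ∃ K, ∀ x ∈ Set.Icc a b, |deriv g x| ≤ K := by
  obtain ⟨K, hK⟩ := exists_lipschitzOnWith_Icc hg (a - 1) (b + 1)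
  refine ⟨K, fun x hx => norm_deriv_le_of_lipschitzOn (s := Set.Icc (a - 1) (b + 1)) ?_ hK⟩
  exact Icc_mem_nhds (by linarith [hx.1]) (by linarith [hx.2])

theorem integrableOn_Icc_comp_deriv (hg : LocallyLipschitz g) {Φ : ℝ × ℝ → ℝ}
    (hΦ : Continuous Φ) (a b : ℝ) :
    IntegrableOn (fun x => Φ (x, deriv g x)) (Set.Icc a b) := by
  obtain ⟨K, hK⟩ := exists_abs_deriv_le_of_locallyLipschitz hg a b
  obtain ⟨C, hC⟩ := (isCompact_Icc.prod isCompact_Icc).exists_bound_of_continuousOn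
    (s := Set.Icc a b ×ˢ Set.Icc (-K) K) hΦ.continuousOn
  have hm : Measurable fun x => Φ (x, deriv g x) :=
    hΦ.measurable.comp (measurable_id.prodMk (measurable_deriv g))
  refine Measure.integrableOn_of_bounded (M := C) (by simp) hm.aestronglyMeasurable ?_
  exact (ae_restrict_iff' measurableSet_Icc).2
    (ae_of_all _ fun x hx => hC _ ⟨hx, abs_le.1 (hK x hx)⟩)

theorem exists_lipschitzWith_of_hasCompactSupport (hg : LocallyLipschitz g)
    (hc : HasCompactSupport g) : ∃ K, LipschitzWith K g := by
  obtain ⟨R, hR, hsupp⟩ := hc.isBounded.subset_closedBall_lt 0 0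
  have hzero : ∀ x, R < |x| → g x = 0 := fun x hx => by
    by_contra h
    have := hsupp (subset_tsupport g h)
    rw [mem_closedBall_zero_iff, Real.norm_eq_abs] at this
    exact absurd this hx.not_ge
  have hend : ∀ x, |x| = R + 1 → g x = 0 := fun x hx => hzero x (by linarith)
  obtain ⟨K, hK⟩ := exists_lipschitzOnWith_Icc hg (-(R + 1)) (R + 1)
  have hRR : -(R + 1) ≤ R + 1 := by linarith
  have hproj : g = Set.IccExtend hRR ((Set.Icc (-(R + 1)) (R + 1)).domRestrict g) := by
    funext x
    rcases le_total x (-(R + 1)) with h | h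
    · rw [Set.IccExtend_of_le_left _ _ h, Set.domRestrict_apply,
        hend (-(R + 1)) (by rw [abs_neg, abs_of_pos (by linarith)]),
        hzero x (by rw [abs_of_neg (by linarith)]; linarith)]
    · rcases le_total (R + 1) x with h' | h'
      · rw [Set.IccExtend_of_right_le _ _ h', Set.domRestrict_apply,
          hend (R + 1) (abs_of_pos (by linarith)),
          hzero x (by rw [abs_of_pos (by linarith)]; linarith)]
      · rw [Set.IccExtend_of_mem _ _ (Set.mem_Icc.2 ⟨h, h'⟩), Set.domRestrict_apply]
  rw [hproj]
  exact ⟨K * 1, hK.to_restrict.comp (LipschitzWith.projIcc hRR)⟩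

end Line

/-! ### Twisted derivatives on the line -/

/-- `w` is a locally Lipschitz substitute for `v`: it stays within distance `A` of `v`, has the sign
of its argument, and its derivative is at most `B * |v|`. With `v = V'` the logarithmic derivative
of a density, it allows an integration by parts of `v * g * g'` even where `v'` is unbounded. -/
structure IsLipschitzSubstitute (v w : ℝ → ℝ) (A B : ℝ) : Prop where
  locallyLipschitz : LocallyLipschitz w
  abs_sub_le : ∀ x, |v x - w x| ≤ A
  sign : ∀ x, 0 ≤ x * w x
  deriv_le : ∀ᵐ x, deriv w x ≤ B * |v x|

section TwistedDerivative

variable {v w g : ℝ → ℝ} {A B δ : ℝ}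

theorem one_sub_mul_add_mul_deriv_le (hδ : 0 < δ) {a b c d e : ℝ} (hAc : |c - d| ≤ A)
    (hBe : e ≤ B * |c|) :
    (1 - δ) * (a ^ 2 + c ^ 2 * b ^ 2 / 4) + (e * b ^ 2 + d * (2 * b * a)) / 2 ≤
      (a + c * b / 2) ^ 2 + (A ^ 2 + B ^ 2) / (4 * δ) * b ^ 2 := by
  have hcross : 0 ≤ δ * a ^ 2 + (c - d) * b * a + A ^ 2 / (4 * δ) * b ^ 2 := by
    have hsq : (c - d) ^ 2 ≤ A ^ 2 := sq_le_sq.2 (hAc.trans (le_abs_self A))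
    have hle : (c - d) ^ 2 / (4 * δ) * b ^ 2 ≤ A ^ 2 / (4 * δ) * b ^ 2 := by gcongr
    have hform : δ * a ^ 2 + (c - d) * b * a + (c - d) ^ 2 / (4 * δ) * b ^ 2 =
        (2 * δ * a + (c - d) * b) ^ 2 / (4 * δ) := by field_simp; ring
    have : 0 ≤ (2 * δ * a + (c - d) * b) ^ 2 / (4 * δ) := by positivity
    linarith
  have hderiv : 0 ≤ δ * c ^ 2 / 4 - e / 2 + B ^ 2 / (4 * δ) := by
    have hform : δ * c ^ 2 / 4 - B * |c| / 2 + B ^ 2 / (4 * δ) = (δ * |c| - B) ^ 2 / (4 * δ) := by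
      rw [← sq_abs c]; field_simp; ring
    have : 0 ≤ (δ * |c| - B) ^ 2 / (4 * δ) := by positivity
    linarith
  have hsplit : (A ^ 2 + B ^ 2) / (4 * δ) = A ^ 2 / (4 * δ) + B ^ 2 / (4 * δ) := add_div _ _ _
  rw [hsplit]
  nlinarith [mul_nonneg (sq_nonneg b) hderiv]

theorem integral_deriv_substitute_mul_sq_nonneg (hw : IsLipschitzSubstitute v w A B)
    (hg : LocallyLipschitz g) {R : ℝ} (hR : 0 ≤ R) :
    0 ≤ ∫ x in -R..R, deriv (fun x => w x * (g x * g x)) x := by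
  rw [(absolutelyContinuousOnInterval_of_locallyLipschitz (locallyLipschitz_mul
    hw.locallyLipschitz (locallyLipschitz_mul hg hg)) _ _).integral_deriv_eq_sub]
  rcases hR.eq_or_lt with rfl | hpos
  · simp
  · have hpw : 0 ≤ w R := nonneg_of_mul_nonneg_right (hw.sign R) hpos
    have hnw : w (-R) ≤ 0 := by nlinarith [hw.sign (-R)]
    nlinarith [mul_nonneg hpw (mul_self_nonneg (g R)),
      mul_nonneg (neg_nonneg.2 hnw) (mul_self_nonneg (g (-R)))]

theorem ae_schrodinger_add_deriv_substitute_le_twisted (hw : IsLipschitzSubstitute v w A B)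
    (hg : LocallyLipschitz g) (hδ : 0 < δ) :
    ∀ᵐ x, (1 - δ) * (deriv g x ^ 2 + v x ^ 2 * g x ^ 2 / 4) +
      deriv (fun x => w x * (g x * g x)) x / 2 ≤
        (deriv g x + v x * g x / 2) ^ 2 + (A ^ 2 + B ^ 2) / (4 * δ) * g x ^ 2 := by
  filter_upwards [ae_differentiableAt_of_locallyLipschitz hg,
    ae_differentiableAt_of_locallyLipschitz hw.locallyLipschitz, hw.deriv_le] with x hgx hwx hle
  have hd : HasDerivAt (fun x => w x * (g x * g x))
      (deriv w x * g x ^ 2 + w x * (2 * g x * deriv g x)) x :=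
    (hwx.hasDerivAt.mul (hgx.hasDerivAt.mul hgx.hasDerivAt)).congr_deriv (by
      simp only [Pi.mul_apply]; ring)
  rw [hd.deriv]
  exact one_sub_mul_add_mul_deriv_le hδ (hw.abs_sub_le x) hle

theorem setIntegral_Ioc_schrodinger_le_twisted (hv : Continuous v)
    (hw : IsLipschitzSubstitute v w A B) (hg : LocallyLipschitz g) (hδ : 0 < δ) {R : ℝ}
    (hR : 0 ≤ R) :
    ∫ x in Set.Ioc (-R) R, (1 - δ) * (deriv g x ^ 2 + v x ^ 2 * g x ^ 2 / 4) ≤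
      ∫ x in Set.Ioc (-R) R,
        ((deriv g x + v x * g x / 2) ^ 2 + (A ^ 2 + B ^ 2) / (4 * δ) * g x ^ 2) := by
  have hRR : -R ≤ R := by linarith
  have hgc := hg.continuous
  have hac : AbsolutelyContinuousOnInterval (fun x => w x * (g x * g x)) (-R) R :=
    absolutelyContinuousOnInterval_of_locallyLipschitz
      (locallyLipschitz_mul hw.locallyLipschitz (locallyLipschitz_mul hg hg)) _ _
  have hboundary := integral_deriv_substitute_mul_sq_nonneg hw hg hR
  have hleft : IntervalIntegrable
      (fun x => (1 - δ) * (deriv g x ^ 2 + v x ^ 2 * g x ^ 2 / 4)) volume (-R) R :=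
    (intervalIntegrable_iff_integrableOn_Icc_of_le hRR).2 (integrableOn_Icc_comp_deriv hg
      (Φ := fun q => (1 - δ) * (q.2 ^ 2 + v q.1 ^ 2 * g q.1 ^ 2 / 4)) (by fun_prop) _ _)
  have hright : IntervalIntegrable (fun x => (deriv g x + v x * g x / 2) ^ 2 +
      (A ^ 2 + B ^ 2) / (4 * δ) * g x ^ 2) volume (-R) R :=
    (intervalIntegrable_iff_integrableOn_Icc_of_le hRR).2 (integrableOn_Icc_comp_deriv hg
      (Φ := fun q => (q.2 + v q.1 * g q.1 / 2) ^ 2 + (A ^ 2 + B ^ 2) / (4 * δ) * g q.1 ^ 2)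
      (by fun_prop) _ _)
  have hderiv := hac.intervalIntegrable_deriv.div_const 2
  have hle := intervalIntegral.integral_mono_ae hRR (hleft.add hderiv) hright
    (ae_schrodinger_add_deriv_substitute_le_twisted hw hg hδ)
  rw [intervalIntegral.integral_add hleft hderiv, intervalIntegral.integral_div] at hle
  rw [← intervalIntegral.integral_of_le hRR, ← intervalIntegral.integral_of_le hRR]
  linarith

theorem lintegral_schrodinger_le_twisted (hv : Continuous v) (hw : IsLipschitzSubstitute v w A B)
    (hg : LocallyLipschitz g) (hδ : 0 < δ) (hδ1 : δ < 1) :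
    ∫⁻ x, ENNReal.ofReal ((1 - δ) * (deriv g x ^ 2 + v x ^ 2 * g x ^ 2 / 4)) ≤
      ∫⁻ x, ENNReal.ofReal
        ((deriv g x + v x * g x / 2) ^ 2 + (A ^ 2 + B ^ 2) / (4 * δ) * g x ^ 2) := by
  have := measurable_deriv g
  have hmg := hg.continuous.measurable
  have hmv := hv.measurable
  have hgc := hg.continuous
  have hcover : AECover volume atTop fun n : ℕ => Set.Ioc (-(n : ℝ)) n :=
    aecover_Ioc (tendsto_neg_atTop_atBot.comp tendsto_natCast_atTop_atTop)
      tendsto_natCast_atTop_atTop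
  refine le_of_tendsto_of_tendsto'
    (hcover.lintegral_tendsto_of_countably_generated (by fun_prop))
    (hcover.lintegral_tendsto_of_countably_generated (by fun_prop)) fun n => ?_
  have hleft : IntegrableOn (fun x => (1 - δ) * (deriv g x ^ 2 + v x ^ 2 * g x ^ 2 / 4))
      (Set.Ioc (-(n : ℝ)) n) :=
    (integrableOn_Icc_comp_deriv hg (Φ := fun q => (1 - δ) * (q.2 ^ 2 + v q.1 ^ 2 * g q.1 ^ 2 / 4))
      (by fun_prop) _ _).mono_set Set.Ioc_subset_Icc_self
  have hright : IntegrableOn (fun x => (deriv g x + v x * g x / 2) ^ 2 +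
      (A ^ 2 + B ^ 2) / (4 * δ) * g x ^ 2) (Set.Ioc (-(n : ℝ)) n) :=
    (integrableOn_Icc_comp_deriv hg
      (Φ := fun q => (q.2 + v q.1 * g q.1 / 2) ^ 2 + (A ^ 2 + B ^ 2) / (4 * δ) * g q.1 ^ 2)
      (by fun_prop) _ _).mono_set Set.Ioc_subset_Icc_self
  have : 0 ≤ 1 - δ := by linarith
  rw [← ofReal_integral_eq_lintegral_ofReal hleft (ae_of_all _ fun x => by positivity),
    ← ofReal_integral_eq_lintegral_ofReal hright (ae_of_all _ fun x => by positivity)]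
  exact ENNReal.ofReal_le_ofReal
    (setIntegral_Ioc_schrodinger_le_twisted hv hw hg hδ n.cast_nonneg)

theorem integral_deriv_mul_nonpos_of_monotone {f : ℝ → ℝ} {K : NNReal} (hf : LipschitzWith K f)
    (hfc : HasCompactSupport f) (hf0 : ∀ x, 0 ≤ f x) (hvm : Monotone v) (hv : Continuous v) :
    ∫ x, deriv f x * v x ≤ 0 := by
  have hlim := hf.integral_inv_smul_sub_mul_tendsto_integral_lineDeriv_mul' (μ := volume) hfc hv 1
  have hline : ∀ x, lineDeriv ℝ f x 1 = deriv f x := fun x => by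
    simp only [lineDeriv, smul_eq_mul, mul_one]
    simpa only [add_zero] using deriv_comp_const_add (f := f) x 0
  simp only [hline, smul_eq_mul, mul_one] at hlim
  refine le_of_tendsto hlim ?_
  filter_upwards [self_mem_nhdsWithin] with t (ht : 0 < t)
  have hint : Integrable fun x => f x * v x :=
    (hf.continuous.mul hv).integrable_of_hasCompactSupport hfc.mul_right
  have hint' : Integrable fun x => f x * v (x - t) :=
    (hf.continuous.mul (hv.comp (continuous_sub_right t))).integrable_of_hasCompactSupport
      hfc.mul_right
  have hshift : ∫ x, f (x + t) * v x = ∫ x, f x * v (x - t) := by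
    simpa only [add_sub_cancel_right] using
      integral_add_right_eq_self (fun x => f x * v (x - t)) t
  have hint'' : Integrable fun x => f (x + t) * v x := by
    simpa only [add_sub_cancel_right] using hint'.comp_add_right t
  calc ∫ x, t⁻¹ * (f (x + t) - f x) * v x
      = t⁻¹ * ∫ x, (f (x + t) * v x - f x * v x) := by
        rw [← integral_const_mul]; exact integral_congr_ae (ae_of_all _ fun x => by ring)
    _ = t⁻¹ * ∫ x, f x * (v (x - t) - v x) := by
        rw [integral_sub hint'' hint, hshift, ← integral_sub hint' hint]
        simp only [mul_sub]
    _ ≤ 0 := mul_nonpos_of_nonneg_of_nonpos (by positivity) (integral_nonpos fun x =>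
        mul_nonpos_of_nonneg_of_nonpos (hf0 x) (sub_nonpos.2 (hvm (by linarith))))

theorem integrable_comp_deriv_of_hasCompactSupport (hg : LocallyLipschitz g)
    (hc : HasCompactSupport g) {Φ : ℝ → ℝ × ℝ → ℝ} (hΦ : Continuous Φ.uncurry)
    (hΦ0 : ∀ x, Φ x (0, 0) = 0) : Integrable fun x => Φ x (g x, deriv g x) := by
  obtain ⟨R, hsupp⟩ := hc.isBounded.subset_closedBall 0
  have hgc := hg.continuous
  refine (integrableOn_iff_integrable_of_support_subset (s := Set.Icc (-R) R) fun x hx => ?_).1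
    (integrableOn_Icc_comp_deriv hg (Φ := fun q => Φ q.1 (g q.1, q.2))
      (hΦ.comp (continuous_fst.prodMk ((hgc.comp continuous_fst).prodMk continuous_snd))) _ _)
  by_contra h
  have hx' : x ∉ tsupport g := fun hxs =>
    h (by simpa only [Real.closedBall_eq_Icc, zero_sub, zero_add] using hsupp hxs)
  refine hx ?_
  simp only
  rw [image_eq_zero_of_notMem_tsupport hx',
    image_eq_zero_of_notMem_tsupport fun h' => hx' (tsupport_deriv_subset (𝕜 := ℝ) h'), hΦ0]

theorem lintegral_twisted_le_schrodinger (hvm : Monotone v) (hv : Continuous v)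
    (hg : LocallyLipschitz g) (hc : HasCompactSupport g) :
    ∫⁻ x, ENNReal.ofReal ((deriv g x + v x * g x / 2) ^ 2) ≤
      ∫⁻ x, ENNReal.ofReal (deriv g x ^ 2 + v x ^ 2 * g x ^ 2 / 4) := by
  have htwisted : Integrable fun x => (deriv g x + v x * g x / 2) ^ 2 :=
    integrable_comp_deriv_of_hasCompactSupport hg hc
      (Φ := fun x q => (q.2 + v x * q.1 / 2) ^ 2)
      (by unfold Function.uncurry; fun_prop) (by simp)
  have hschr : Integrable fun x => deriv g x ^ 2 + v x ^ 2 * g x ^ 2 / 4 :=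
    integrable_comp_deriv_of_hasCompactSupport hg hc
      (Φ := fun x q => q.2 ^ 2 + v x ^ 2 * q.1 ^ 2 / 4)
      (by unfold Function.uncurry; fun_prop) (by simp)
  have hcross : Integrable fun x => 2 * g x * deriv g x * v x :=
    integrable_comp_deriv_of_hasCompactSupport hg hc (Φ := fun x q => 2 * q.1 * q.2 * v x)
      (by unfold Function.uncurry; fun_prop) (by simp)
  rw [← ofReal_integral_eq_lintegral_ofReal htwisted (ae_of_all _ fun x => by positivity),
    ← ofReal_integral_eq_lintegral_ofReal hschr (ae_of_all _ fun x => by positivity)]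
  refine ENNReal.ofReal_le_ofReal ?_
  have hsqc : HasCompactSupport fun x => g x * g x := hc.mul_right
  obtain ⟨K, hK⟩ := exists_lipschitzWith_of_hasCompactSupport (locallyLipschitz_mul hg hg) hsqc
  have hcross_nonpos : ∫ x, 2 * g x * deriv g x * v x ≤ 0 := by
    refine (integral_congr_ae ?_).trans_le
      (integral_deriv_mul_nonpos_of_monotone hK hsqc (fun x => mul_self_nonneg _) hvm hv)
    filter_upwards [ae_differentiableAt_of_locallyLipschitz hg] with x hx
    have : deriv (fun x => g x * g x) x = deriv g x * g x + g x * deriv g x :=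
      (hx.hasDerivAt.mul hx.hasDerivAt).deriv
    rw [this]; ring
  calc ∫ x, (deriv g x + v x * g x / 2) ^ 2
      = ∫ x, ((deriv g x ^ 2 + v x ^ 2 * g x ^ 2 / 4) + 2 * g x * deriv g x * v x / 2) :=
        integral_congr_ae (ae_of_all _ fun x => by ring)
    _ = (∫ x, (deriv g x ^ 2 + v x ^ 2 * g x ^ 2 / 4)) +
          (∫ x, 2 * g x * deriv g x * v x) / 2 := by
        rw [integral_add hschr (hcross.div_const 2), integral_div]
    _ ≤ ∫ x, (deriv g x ^ 2 + v x ^ 2 * g x ^ 2 / 4) := by linarith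

end TwistedDerivative

/-! ### The local Lipschitz constant of a differentiable function -/

section LocalLip

variable {E : Type*} [NormedAddCommGroup E] [NormedSpace ℝ E] {f : E → ℝ} {L : E →L[ℝ] ℝ} {x : E}
  {ε : ℝ}

theorem eventually_abs_sub_div_dist_le (hf : HasFDerivAt f L x) (hε : 0 < ε) :
    ∀ᶠ y in 𝓝[{x}ᶜ] x, |f y - f x| / dist y x ≤ ‖L‖ + ε := by
  filter_upwards [nhdsWithin_le_nhds ((hasFDerivAt_iff_isLittleO.1 hf).def hε),
    self_mem_nhdsWithin] with y hy hyx
  have hpos : 0 < ‖y - x‖ := norm_pos_iff.2 (sub_ne_zero.2 hyx)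
  rw [dist_eq_norm, div_le_iff₀ hpos]
  calc |f y - f x| = ‖(f y - f x - L (y - x)) + L (y - x)‖ := by
        rw [sub_add_cancel, Real.norm_eq_abs]
    _ ≤ ‖f y - f x - L (y - x)‖ + ‖L (y - x)‖ := norm_add_le _ _
    _ ≤ ε * ‖y - x‖ + ‖L‖ * ‖y - x‖ := add_le_add hy (L.le_opNorm _)
    _ = (‖L‖ + ε) * ‖y - x‖ := by ring

theorem frequently_le_abs_sub_div_dist (hf : HasFDerivAt f L x) (hε : 0 < ε) {v : E} (hv : v ≠ 0) :
    ∃ᶠ y in 𝓝[{x}ᶜ] x, |L v| / ‖v‖ - ε ≤ |f y - f x| / dist y x := by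
  have hline : Tendsto (fun t : ℝ => x + t • v) (𝓝[>] 0) (𝓝[{x}ᶜ] x) := by
    refine tendsto_nhdsWithin_iff.2 ⟨?_, ?_⟩
    · have hcont : Continuous fun t : ℝ => x + t • v := by fun_prop
      simpa only [zero_smul, add_zero] using (hcont.tendsto 0).mono_left nhdsWithin_le_nhds
    · filter_upwards [self_mem_nhdsWithin] with t ht
      simpa only [Set.mem_compl_iff, Set.mem_singleton_iff, add_eq_left, smul_eq_zero, not_or]
        using ⟨ne_of_gt ht, hv⟩
  have : 0 < ‖v‖ := norm_pos_iff.2 hv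
  have happrox := nhdsWithin_le_nhds (s := {x}ᶜ) ((hasFDerivAt_iff_isLittleO.1 hf).def hε)
  refine hline.frequently (Eventually.frequently ?_)
  filter_upwards [hline.eventually happrox, self_mem_nhdsWithin] with t ht (ht0 : 0 < t)
  simp only [add_sub_cancel_left, map_smul, smul_eq_mul, norm_smul, Real.norm_eq_abs,
    abs_of_pos ht0, dist_eq_norm] at ht ⊢
  rw [le_div_iff₀ (by positivity)]
  have hsub := abs_sub_abs_le_abs_sub (t * L v) (f (x + t • v) - f x)
  rw [abs_sub_comm (t * L v), abs_mul, abs_of_pos ht0] at hsub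
  have hexpand : (|L v| / ‖v‖ - ε) * (t * ‖v‖) = t * |L v| - ε * (t * ‖v‖) := by field_simp
  linarith

theorem localLip_eq_norm_fderiv [Nontrivial E] (hf : DifferentiableAt ℝ f x) :
    localLip f x = ‖fderiv ℝ f x‖ := by
  have hne : (𝓝[{x}ᶜ] x).NeBot := Module.punctured_nhds_neBot ℝ _ x
  have hd := hf.hasFDerivAt
  have hbdd : IsBoundedUnder (· ≤ ·) (𝓝[{x}ᶜ] x) fun y => |f y - f x| / dist y x :=
    ⟨_, eventually_map.2 (eventually_abs_sub_div_dist_le hd one_pos)⟩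
  have hcobdd : IsCoboundedUnder (· ≤ ·) (𝓝[{x}ᶜ] x) fun y => |f y - f x| / dist y x :=
    IsBoundedUnder.isCoboundedUnder_le ⟨0, eventually_map.2 (.of_forall fun y => by positivity)⟩
  refine le_antisymm (_root_.le_of_forall_pos_le_add fun ε hε =>
    limsup_le_of_le hcobdd (eventually_abs_sub_div_dist_le hd hε)) ?_
  refine ContinuousLinearMap.opNorm_le_bound _ (le_limsup_of_frequently_le
    (Eventually.frequently (.of_forall fun y => by positivity)) hbdd) fun v => ?_
  rcases eq_or_ne v 0 with rfl | hv
  · simp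
  rw [← div_le_iff₀ (norm_pos_iff.2 hv)]
  refine _root_.le_of_forall_pos_le_add fun ε hε => sub_le_iff_le_add.1 ?_
  exact le_limsup_of_frequently_le (frequently_le_abs_sub_div_dist hd hε hv) hbdd

end LocalLip

/-! ### Metric eigenvalues -/

section Mass

variable {Ω : Type*} [PseudoMetricSpace Ω] [MeasurableSpace Ω]

/-- The squared `L²` norm of `f`, as an extended nonnegative real. -/
noncomputable def mass {X : Type*} [MeasurableSpace X] (μ : Measure X) (f : X → ℝ) : ℝ≥0∞ :=
  ∫⁻ x, ENNReal.ofReal (f x ^ 2) ∂μ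

/-- The Dirichlet energy `∫ |∇f|² dμ` built from the local Lipschitz constant, as an extended
nonnegative real. -/
noncomputable def lipEnergy (μ : Measure Ω) (f : Ω → ℝ) : ℝ≥0∞ :=
  ∫⁻ x, ENNReal.ofReal (localLip f x ^ 2) ∂μ

theorem memW12Lip_iff {μ : Measure Ω} {f : Ω → ℝ} :
    memW12Lip μ f ↔ LocallyLipschitz f ∧ mass μ f < ⊤ ∧ lipEnergy μ f < ⊤ :=
  and_congr_right fun _ => ENNReal.add_lt_top

theorem memW12Lip_smul_iff {c : ℝ≥0∞} (hc0 : c ≠ 0) (hc : c ≠ ⊤) {μ : Measure Ω} {f : Ω → ℝ} :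
    memW12Lip (c • μ) f ↔ memW12Lip μ f := by
  simp only [memW12Lip_iff, mass, lipEnergy, lintegral_smul_measure, smul_eq_mul,
    lt_top_iff_ne_top, ne_eq, ENNReal.mul_eq_top, hc0, hc, not_false_eq_true, true_and, false_and,
    or_false]

theorem lambdaLip_smul {c : ℝ≥0∞} (hc0 : c ≠ 0) (hc : c ≠ ⊤) (μ : Measure Ω) (k : ℕ) :
    lambdaLip (c • μ) k = lambdaLip μ k := by
  have hcr : c.toReal ≠ 0 := ENNReal.toReal_ne_zero.2 ⟨hc0, hc⟩
  simp only [lambdaLip, memW12Lip_smul_iff hc0 hc, integral_smul_measure, smul_eq_mul,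
    mul_div_mul_left _ _ hcr, mul_ne_zero_iff_left hcr]

/-- The Rayleigh quotients of the elements of nonzero mass of a space `F` of functions. -/
def rayleighQuotients (μ : Measure Ω) (F : Submodule ℝ (Ω → ℝ)) : Set ℝ :=
  {r : ℝ | ∃ f ∈ F, (∫ x, f x ^ 2 ∂μ) ≠ 0 ∧
    r = (∫ x, localLip f x ^ 2 ∂μ) / ∫ x, f x ^ 2 ∂μ}

/-- The set of reals of which `lambdaLip μ k` is the infimum. -/
def minMaxCandidates (μ : Measure Ω) (k : ℕ) : Set ℝ :=
  {a : ℝ | ∃ F : Submodule ℝ (Ω → ℝ), Module.finrank ℝ F = k ∧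
    (∀ f ∈ F, memW12Lip μ f) ∧ a = sSup (rayleighQuotients μ F)}

theorem lambdaLip_eq_sInf_minMaxCandidates (μ : Measure Ω) (k : ℕ) :
    lambdaLip μ k = sInf (minMaxCandidates μ k) := rfl

theorem bddBelow_minMaxCandidates (μ : Measure Ω) (k : ℕ) : BddBelow (minMaxCandidates μ k) := by
  refine ⟨0, ?_⟩
  rintro _ ⟨F, -, -, rfl⟩
  refine Real.sSup_nonneg ?_
  rintro _ ⟨f, -, -, rfl⟩
  exact div_nonneg (integral_nonneg fun _ => sq_nonneg _) (integral_nonneg fun _ => sq_nonneg _)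

end Mass

section L2

variable {X G : Type*} [MeasurableSpace X] {μ : Measure X} [NormedAddCommGroup G]

theorem eLpNorm_two_sq (f : X → G) :
    eLpNorm f 2 μ ^ 2 = ∫⁻ x, ENNReal.ofReal (‖f x‖ ^ 2) ∂μ := by
  have h := eLpNorm_nnreal_pow_eq_lintegral (μ := μ) (f := f) (p := 2) two_ne_zero
  simp only [NNReal.coe_ofNat, ENNReal.rpow_ofNat, ENNReal.coe_ofNat] at h
  simp only [h, ENNReal.ofReal_pow (norm_nonneg _), ofReal_norm]

theorem mass_eq_eLpNorm_sq (f : X → ℝ) : mass μ f = eLpNorm f 2 μ ^ 2 := by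
  simp only [eLpNorm_two_sq, mass, Real.norm_eq_abs, sq_abs]

theorem memLp_two_of_mass_lt_top {f : X → ℝ} (hf : AEStronglyMeasurable f μ)
    (h : mass μ f < ⊤) : MemLp f 2 μ := by
  rw [mass_eq_eLpNorm_sq, ENNReal.pow_lt_top_iff] at h
  exact ⟨hf, h.resolve_right two_ne_zero⟩

theorem integral_sq_eq_toReal_mass {f : X → ℝ} (hf : AEStronglyMeasurable f μ) :
    ∫ x, f x ^ 2 ∂μ = (mass μ f).toReal :=
  integral_eq_lintegral_of_nonneg_ae (.of_forall fun _ => sq_nonneg _) (hf.pow 2)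

theorem eq_zero_of_mass_eq_zero [TopologicalSpace X] [OpensMeasurableSpace X]
    [μ.IsOpenPosMeasure] {f : X → ℝ} (hf : Continuous f) (h : mass μ f = 0) : f = 0 := by
  rw [mass, lintegral_eq_zero_iff (by fun_prop)] at h
  refine (hf.ae_eq_iff_eq μ continuous_zero).1 ?_
  filter_upwards [h] with x hx
  simpa only [Pi.zero_apply, ENNReal.ofReal_eq_zero, sq_nonpos_iff] using hx

variable {M : Type*} [AddCommGroup M] [Module ℝ M] [NormedSpace ℝ G]

/-- The linear map into `L²` induced by a family of square-integrable functions that is linear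
up to null sets. -/
noncomputable def toLpLinearMap (D : M → X → G) (hD : ∀ f, MemLp (D f) 2 μ)
    (hadd : ∀ f g, D (f + g) =ᵐ[μ] D f + D g) (hsmul : ∀ (c : ℝ) f, D (c • f) =ᵐ[μ] c • D f) :
    M →ₗ[ℝ] Lp G 2 μ where
  toFun f := (hD f).toLp (D f)
  map_add' f g := by
    rw [← MemLp.toLp_add]
    exact MemLp.toLp_congr _ _ (hadd f g)
  map_smul' c f := by
    rw [RingHom.id_apply, ← MemLp.toLp_const_smul]
    exact MemLp.toLp_congr _ _ (hsmul c f)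

theorem exists_norm_le_mul_norm_of_injective {Y Z : Type*} [NormedAddCommGroup Y]
    [NormedSpace ℝ Y] [NormedAddCommGroup Z] [NormedSpace ℝ Z] [FiniteDimensional ℝ M]
    (A : M →ₗ[ℝ] Y) (hA : Function.Injective A) (B : M →ₗ[ℝ] Z) :
    ∃ K : ℝ, 0 ≤ K ∧ ∀ f, ‖B f‖ ≤ K * ‖A f‖ := by
  let e := LinearEquiv.ofInjective A hA
  let C := LinearMap.toContinuousLinearMap (B ∘ₗ e.symm.toLinearMap)
  refine ⟨‖C‖, norm_nonneg C, fun f => ?_⟩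
  have hef : (e f : Y) = A f := rfl
  simpa [C, hef] using C.le_opNorm (e f)

end L2

section NormedSpace

variable {E : Type*} [NormedAddCommGroup E] [NormedSpace ℝ E] [FiniteDimensional ℝ E]
  [MeasurableSpace E] [BorelSpace E] {μ ν : Measure E} [ν.IsAddHaarMeasure]

theorem ae_localLip_eq_norm_fderiv [Nontrivial E] (hμ : μ ≪ ν) {f : E → ℝ}
    (hf : LocallyLipschitz f) : ∀ᵐ x ∂μ, localLip f x = ‖fderiv ℝ f x‖ := by
  filter_upwards [hμ.ae_le (ae_differentiableAt_of_locallyLipschitz (μ := ν) hf)] with x hx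
  exact localLip_eq_norm_fderiv hx

theorem lipEnergy_eq_eLpNorm_fderiv_sq [Nontrivial E] (hμ : μ ≪ ν) {f : E → ℝ}
    (hf : LocallyLipschitz f) : lipEnergy μ f = eLpNorm (fderiv ℝ f) 2 μ ^ 2 := by
  rw [eLpNorm_two_sq]
  refine lintegral_congr_ae ?_
  filter_upwards [ae_localLip_eq_norm_fderiv hμ hf] with x hx
  rw [hx]

theorem integral_localLip_sq_eq_toReal_lipEnergy [Nontrivial E] (hμ : μ ≪ ν) {f : E → ℝ}
    (hf : LocallyLipschitz f) : ∫ x, localLip f x ^ 2 ∂μ = (lipEnergy μ f).toReal := by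
  refine integral_eq_lintegral_of_nonneg_ae (.of_forall fun _ => sq_nonneg _) ?_
  refine ((measurable_fderiv ℝ f).norm.pow_const 2).aestronglyMeasurable.congr ?_
  filter_upwards [ae_localLip_eq_norm_fderiv hμ hf] with x hx
  rw [hx]

theorem memLp_fderiv_of_memW12Lip [Nontrivial E] (hμ : μ ≪ ν) {f : E → ℝ}
    (hf : memW12Lip μ f) : MemLp (fderiv ℝ f) 2 μ := by
  obtain ⟨hlip, -, henergy⟩ := memW12Lip_iff.1 hf
  rw [lipEnergy_eq_eLpNorm_fderiv_sq hμ hlip, ENNReal.pow_lt_top_iff] at henergy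
  exact ⟨(measurable_fderiv ℝ f).aestronglyMeasurable, henergy.resolve_right two_ne_zero⟩

theorem exists_lipEnergy_le_mul_mass [Nontrivial E] [μ.IsOpenPosMeasure] (hμ : μ ≪ ν)
    (F : Submodule ℝ (E → ℝ)) [FiniteDimensional ℝ F] (hF : ∀ f ∈ F, memW12Lip μ f) :
    ∃ K : ℝ, ∀ f ∈ F, lipEnergy μ f ≤ ENNReal.ofReal K * mass μ f := by
  have hcont : ∀ f : F, Continuous f.1 := fun f => (hF f f.2).1.continuous
  have hmem : ∀ f : F, MemLp f.1 2 μ := fun f => memLp_two_of_mass_lt_top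
    (hcont f).aestronglyMeasurable (memW12Lip_iff.1 (hF f f.2)).2.1
  have hdiff : ∀ f : F, ∀ᵐ x ∂μ, DifferentiableAt ℝ f.1 x := fun f =>
    hμ.ae_le (ae_differentiableAt_of_locallyLipschitz (hF f f.2).1)
  let A := toLpLinearMap (fun f : F => f.1) hmem (fun _ _ => .rfl) (fun _ _ => .rfl)
  let B := toLpLinearMap (fun f : F => fderiv ℝ f.1)
    (fun f => memLp_fderiv_of_memW12Lip hμ (hF f f.2))
    (fun f g => by filter_upwards [hdiff f, hdiff g] with x hf hg using fderiv_add hf hg)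
    (fun c f => by filter_upwards [hdiff f] with x hf using fderiv_const_smul hf c)
  have hA : Function.Injective A := (injective_iff_map_eq_zero A).2 fun f hf => by
    have hf0 : eLpNorm f.1 2 μ = 0 := eLpNorm_eq_zero_iff (hmem f).1 two_ne_zero |>.2
      ((Lp.eq_zero_iff_ae_eq_zero.1 hf).symm.trans (hmem f).coeFn_toLp).symm
    refine Subtype.ext (eq_zero_of_mass_eq_zero (hcont f) (μ := μ) ?_)
    rw [mass_eq_eLpNorm_sq, hf0, zero_pow two_ne_zero]
  obtain ⟨K, hK0, hK⟩ := exists_norm_le_mul_norm_of_injective A hA B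
  refine ⟨K ^ 2, fun f hf => ?_⟩
  rw [lipEnergy_eq_eLpNorm_fderiv_sq hμ (hF f hf).1, mass_eq_eLpNorm_sq, ENNReal.ofReal_pow hK0,
    ← mul_pow]
  refine ENNReal.pow_le_pow_left ?_
  have hB := memLp_fderiv_of_memW12Lip hμ (hF f hf)
  have hle : (eLpNorm (fderiv ℝ f) 2 μ).toReal ≤ K * (eLpNorm f 2 μ).toReal := by
    simpa only [A, B, toLpLinearMap, LinearMap.coe_mk, AddHom.coe_mk, Lp.norm_toLp]
      using hK ⟨f, hf⟩
  rw [← ENNReal.ofReal_toReal hB.2.ne, ← ENNReal.ofReal_toReal (hmem ⟨f, hf⟩).2.ne,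
    ← ENNReal.ofReal_mul hK0]
  exact ENNReal.ofReal_le_ofReal hle

theorem rayleigh_le [Nontrivial E] (hμ : μ ≪ ν) {f : E → ℝ} (hf : memW12Lip μ f) {a : ℝ}
    (ha : 0 ≤ a) (hle : lipEnergy μ f ≤ ENNReal.ofReal a * mass μ f) :
    (∫ x, localLip f x ^ 2 ∂μ) / ∫ x, f x ^ 2 ∂μ ≤ a := by
  obtain ⟨hlip, hmass, -⟩ := memW12Lip_iff.1 hf
  rw [integral_localLip_sq_eq_toReal_lipEnergy hμ hlip,
    integral_sq_eq_toReal_mass hlip.continuous.aestronglyMeasurable]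
  refine div_le_of_le_mul₀ ENNReal.toReal_nonneg ha ?_
  refine (ENNReal.toReal_mono (ENNReal.mul_ne_top ENNReal.ofReal_ne_top hmass.ne) hle).trans_eq ?_
  rw [ENNReal.toReal_mul, ENNReal.toReal_ofReal ha]

theorem lambdaLip_finrank_le [Nontrivial E] (hμ : μ ≪ ν) {F : Submodule ℝ (E → ℝ)} {a : ℝ}
    (ha : 0 ≤ a) (hF : ∀ f ∈ F, memW12Lip μ f ∧ lipEnergy μ f ≤ ENNReal.ofReal a * mass μ f) :
    lambdaLip μ (Module.finrank ℝ F) ≤ a := by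
  refine (csInf_le (bddBelow_minMaxCandidates μ _) ⟨F, rfl, fun f hf => (hF f hf).1, rfl⟩).trans
    (Real.sSup_le ?_ ha)
  rintro _ ⟨f, hf, -, rfl⟩
  exact rayleigh_le hμ (hF f hf).1 ha (hF f hf).2

theorem exists_submodule_of_lambdaLip_lt [Nontrivial E] [μ.IsOpenPosMeasure] (hμ : μ ≪ ν) {k : ℕ}
    (hk : k ≠ 0)
    (hex : ∃ F : Submodule ℝ (E → ℝ), Module.finrank ℝ F = k ∧ ∀ f ∈ F, memW12Lip μ f) {a : ℝ}
    (h : lambdaLip μ k < a) :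
    ∃ F : Submodule ℝ (E → ℝ), Module.finrank ℝ F = k ∧
      ∀ f ∈ F, memW12Lip μ f ∧ lipEnergy μ f ≤ ENNReal.ofReal a * mass μ f := by
  obtain ⟨F₀, hF₀⟩ := hex
  have hne : (minMaxCandidates μ k).Nonempty := ⟨_, F₀, hF₀.1, hF₀.2, rfl⟩
  rw [lambdaLip_eq_sInf_minMaxCandidates] at h
  obtain ⟨_, ⟨F, hrank, hF, rfl⟩, hlt⟩ := exists_lt_of_csInf_lt hne h
  have : FiniteDimensional ℝ F := Module.finite_of_finrank_pos (by omega)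
  obtain ⟨K, hK⟩ := exists_lipEnergy_le_mul_mass hμ F hF
  have hbdd : BddAbove (rayleighQuotients μ F) := by
    refine ⟨max K 0, ?_⟩
    rintro _ ⟨g, hg, -, rfl⟩
    exact rayleigh_le hμ (hF g hg) (le_max_right _ _)
      ((hK g hg).trans (by gcongr; exact le_max_left _ _))
  refine ⟨F, hrank, fun f hf => ⟨hF f hf, ?_⟩⟩
  obtain ⟨hlip, hmass, henergy⟩ := memW12Lip_iff.1 (hF f hf)
  rcases eq_or_ne (mass μ f) 0 with h0 | h0
  · simpa only [h0, mul_zero] using hK f hf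
  have hint := integral_sq_eq_toReal_mass hlip.continuous.aestronglyMeasurable (μ := μ)
  have hpos : 0 < (mass μ f).toReal := ENNReal.toReal_pos h0 hmass.ne
  have hquot : (lipEnergy μ f).toReal / (mass μ f).toReal ≤ a := by
    rw [← integral_localLip_sq_eq_toReal_lipEnergy hμ hlip, ← hint]
    exact (le_csSup hbdd ⟨f, hf, by rw [hint]; exact hpos.ne', rfl⟩).trans hlt.le
  rw [div_le_iff₀ hpos] at hquot
  rw [← ENNReal.ofReal_toReal henergy.ne, ← ENNReal.ofReal_toReal hmass.ne,
    ← ENNReal.ofReal_mul' ENNReal.toReal_nonneg]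
  exact ENNReal.ofReal_le_ofReal hquot

end NormedSpace

/-! ### Partial derivatives and slicing -/

section PartialDeriv

variable {ι : Type*} [DecidableEq ι]

/-- The partial derivative in the `i`-th coordinate. -/
noncomputable def partialDeriv (i : ι) (G : (ι → ℝ) → ℝ) (y : ι → ℝ) : ℝ :=
  deriv (fun s => G (Function.update y i s)) (y i)

theorem partialDeriv_update (i : ι) (G : (ι → ℝ) → ℝ) (y : ι → ℝ) (s : ℝ) :
    partialDeriv i G (Function.update y i s) = deriv (fun s => G (Function.update y i s)) s := by
  simp only [partialDeriv, Function.update_idem, Function.update_self]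

theorem hasCompactSupport_comp_update {G : (ι → ℝ) → ℝ} (hG : HasCompactSupport G) (y : ι → ℝ)
    (i : ι) : HasCompactSupport fun s => G (Function.update y i s) := by
  refine .intro (hG.image (continuous_apply i)) fun s hs => ?_
  refine image_eq_zero_of_notMem_tsupport fun hmem => hs ⟨_, hmem, Function.update_self ..⟩

theorem measurable_partialDeriv [Finite ι] (i : ι) {G : (ι → ℝ) → ℝ} (hG : Continuous G) :
    Measurable (partialDeriv i G) :=
  (measurable_deriv_with_param (𝕜 := ℝ) (f := fun (y : ι → ℝ) s => G (Function.update y i s))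
    (hG.comp (continuous_fst.update i continuous_snd))).comp
    (measurable_id.prodMk (measurable_pi_apply i))

theorem measurable_twisted [Finite ι] {v : ℝ → ℝ} {G : (ι → ℝ) → ℝ} (hG : Continuous G)
    (hv : Continuous v) (i : ι) :
    Measurable fun y => (partialDeriv i G y + v (y i) * G y / 2) ^ 2 := by
  have := measurable_partialDeriv i hG
  have : Measurable fun y : ι → ℝ => v (y i) := by fun_prop
  fun_prop

theorem measurable_schrodinger [Finite ι] {v : ℝ → ℝ} {G : (ι → ℝ) → ℝ} (hG : Continuous G)
    (hv : Continuous v) (i : ι) :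
    Measurable fun y => partialDeriv i G y ^ 2 + v (y i) ^ 2 * G y ^ 2 / 4 := by
  have := measurable_partialDeriv i hG
  have : Measurable fun y : ι → ℝ => v (y i) := by fun_prop
  fun_prop

theorem hasDerivAt_comp_toLp_update [Finite ι] {f : EuclideanSpace ℝ ι → ℝ} {y : ι → ℝ}
    (hf : DifferentiableAt ℝ f (WithLp.toLp 2 y)) (i : ι) :
    HasDerivAt (fun s => f (WithLp.toLp 2 (Function.update y i s)))
      (fderiv ℝ f (WithLp.toLp 2 y) (EuclideanSpace.single i 1)) (y i) := by
  cases nonempty_fintype ι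
  have hupdate : HasDerivAt (fun s => WithLp.toLp 2 (Function.update y i s))
      (EuclideanSpace.single i (1 : ℝ)) (y i) :=
    (PiLp.continuousLinearEquiv 2 ℝ fun _ : ι => ℝ).symm.toContinuousLinearMap.hasFDerivAt
      |>.comp_hasDerivAt _ (hasDerivAt_update y i (y i))
  refine HasFDerivAt.comp_hasDerivAt (y i) ?_ hupdate
  simpa only [Function.update_eq_self] using hf.hasFDerivAt

variable [Fintype ι]

theorem locallyLipschitz_comp_update {G : (ι → ℝ) → ℝ} (hG : LocallyLipschitz G) (y : ι → ℝ)
    (i : ι) : LocallyLipschitz fun s => G (Function.update y i s) := by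
  refine hG.comp (LipschitzWith.locallyLipschitz (K := 1) (.of_dist_le_mul fun a b => ?_))
  rw [NNReal.coe_one, one_mul, dist_pi_le_iff dist_nonneg]
  intro k
  rcases eq_or_ne k i with rfl | hk
  · simp
  · simp [Function.update_of_ne hk]

theorem lintegral_le_lintegral_of_slices (i : ι) {f g : (ι → ℝ) → ℝ≥0∞} (hf : Measurable f)
    (hg : Measurable g)
    (h : ∀ y, ∫⁻ s, f (Function.update y i s) ≤ ∫⁻ s, g (Function.update y i s)) :
    ∫⁻ y, f y ≤ ∫⁻ y, g y := by
  refine lintegral_le_of_lmarginal_le {i} hf hg fun y => ?_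
  simpa only [lmarginal_singleton] using h y

theorem norm_sq_eq_sum_apply_single_sq (L : EuclideanSpace ℝ ι →L[ℝ] ℝ) :
    ‖L‖ ^ 2 = ∑ i, L (EuclideanSpace.single i 1) ^ 2 := by
  rw [(EuclideanSpace.basisFun ι ℝ).norm_dual L]
  simp

end PartialDeriv

/-! ### The ground state transform -/

section GroundState

variable {ι : Type*} [Fintype ι] {V v : ℝ → ℝ}

/-- The measure with density `exp (-∑ V (x i))` with respect to Lebesgue measure. -/
noncomputable def gibbs (ι : Type*) [Fintype ι] (V : ℝ → ℝ) : Measure (EuclideanSpace ℝ ι) :=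
  volume.withDensity fun x => ENNReal.ofReal (Real.exp (-∑ i, V (x i)))

/-- Multiplication by the square root of the density of `gibbs ι V`, read in coordinates. It is an
isometry from `L²(gibbs ι V)` to `L²(volume)` sending the constant `1` to the ground state
of the operator `-Δ + ∑ i, (V' (y i) ^ 2 / 4 - V'' (y i) / 2)`. -/
noncomputable def groundStateTransform (ι : Type*) [Fintype ι] (V : ℝ → ℝ) :
    (EuclideanSpace ℝ ι → ℝ) ≃ₗ[ℝ] ((ι → ℝ) → ℝ) where
  toFun f y := f (WithLp.toLp 2 y) * Real.exp (-(∑ i, V (y i)) / 2)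
  invFun G x := G (WithLp.ofLp x) * Real.exp ((∑ i, V (x i)) / 2)
  map_add' f g := by
    ext y
    exact add_mul ..
  map_smul' c f := by
    ext y
    exact mul_assoc ..
  left_inv f := by
    ext x
    simp [mul_assoc, ← Real.exp_add, neg_div]
  right_inv G := by
    ext y
    simp [mul_assoc, ← Real.exp_add, neg_div]

theorem measurable_gibbs_density (hV : Continuous V) :
    Measurable fun x : EuclideanSpace ℝ ι => ENNReal.ofReal (Real.exp (-∑ i, V (x i))) := by
  have (i : ι) : Measurable fun x : EuclideanSpace ℝ ι => V (x i) := by fun_prop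
  fun_prop

theorem gibbs_absolutelyContinuous : gibbs ι V ≪ volume :=
  withDensity_absolutelyContinuous _ _

theorem isOpenPosMeasure_gibbs (hV : Continuous V) : (gibbs ι V).IsOpenPosMeasure :=
  (withDensity_absolutelyContinuous' (measurable_gibbs_density hV).aemeasurable
    (.of_forall fun _ => (ENNReal.ofReal_pos.2 (Real.exp_pos _)).ne')).isOpenPosMeasure

theorem lintegral_gibbs (hV : Continuous V) (φ : EuclideanSpace ℝ ι → ℝ≥0∞) :
    ∫⁻ x, φ x ∂gibbs ι V =
      ∫⁻ y : ι → ℝ, φ (WithLp.toLp 2 y) * ENNReal.ofReal (Real.exp (-∑ i, V (y i))) := by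
  rw [gibbs, lintegral_withDensity_eq_lintegral_mul_non_measurable _ (measurable_gibbs_density hV)
    (.of_forall fun _ => ENNReal.ofReal_lt_top)]
  refine ((PiLp.volume_preserving_toLp ι).lintegral_map_equiv _
    (MeasurableEquiv.toLp 2 (ι → ℝ))).trans (lintegral_congr fun y => ?_)
  exact mul_comm ..

theorem exp_neg_half_sq (a : ℝ) : Real.exp (-a / 2) ^ 2 = Real.exp (-a) := by
  rw [← Real.exp_nat_mul]
  congr 1
  ring

theorem mass_gibbs (hV : Continuous V) (f : EuclideanSpace ℝ ι → ℝ) :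
    mass (gibbs ι V) f = mass volume (groundStateTransform ι V f) := by
  refine (lintegral_gibbs hV _).trans (lintegral_congr fun y => ?_)
  rw [← ENNReal.ofReal_mul (sq_nonneg _), ← exp_neg_half_sq, ← mul_pow]
  rfl

theorem locallyLipschitz_exp_mul_sum (hV : ∀ s, HasDerivAt V (v s) s) (hv : Continuous v)
    (c : ℝ) : LocallyLipschitz fun y : ι → ℝ => Real.exp (c * ∑ i, V (y i)) := by
  have hVdiff : ContDiff ℝ 1 V := contDiff_one_iff_deriv.2
    ⟨fun s => (hV s).differentiableAt, by rwa [funext fun s => (hV s).deriv]⟩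
  exact ContDiff.locallyLipschitz (𝕂 := ℝ) (by fun_prop)

theorem locallyLipschitz_groundStateTransform (hV : ∀ s, HasDerivAt V (v s) s)
    (hv : Continuous v) {f : EuclideanSpace ℝ ι → ℝ} (hf : LocallyLipschitz f) :
    LocallyLipschitz (groundStateTransform ι V f) := by
  convert locallyLipschitz_mul
    (hf.comp (PiLp.lipschitzWith_toLp 2 fun _ : ι => ℝ).locallyLipschitz)
    (locallyLipschitz_exp_mul_sum hV hv (-1 / 2)) using 2 with y
  simp only [groundStateTransform, LinearEquiv.coe_mk, LinearMap.coe_mk, AddHom.coe_mk]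
  congr 2
  ring

theorem locallyLipschitz_groundStateTransform_symm (hV : ∀ s, HasDerivAt V (v s) s)
    (hv : Continuous v) {G : (ι → ℝ) → ℝ} (hG : LocallyLipschitz G) :
    LocallyLipschitz ((groundStateTransform ι V).symm G) := by
  convert (locallyLipschitz_mul hG (locallyLipschitz_exp_mul_sum hV hv (1 / 2))).comp
    (PiLp.lipschitzWith_ofLp 2 fun _ : ι => ℝ).locallyLipschitz using 1
  ext x
  simp only [groundStateTransform, LinearEquiv.coe_symm_mk', Function.comp_apply]
  congr 2
  ring

variable [DecidableEq ι]

theorem partialDeriv_groundStateTransform (hV : ∀ s, HasDerivAt V (v s) s)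
    {f : EuclideanSpace ℝ ι → ℝ} {y : ι → ℝ} (hf : DifferentiableAt ℝ f (WithLp.toLp 2 y))
    (i : ι) :
    partialDeriv i (groundStateTransform ι V f) y + v (y i) * groundStateTransform ι V f y / 2 =
      fderiv ℝ f (WithLp.toLp 2 y) (EuclideanSpace.single i 1) *
        Real.exp (-(∑ k, V (y k)) / 2) := by
  have hsum : HasDerivAt (fun s => ∑ k, V (Function.update y i s k)) (v (y i)) (y i) := by
    have hterm (k : ι) : HasDerivAt (fun s => V (Function.update y i s k))
        (v (y k) * Pi.single (M := fun _ => ℝ) i 1 k) (y i) := by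
      have hcoord := hasDerivAt_pi.1 (hasDerivAt_update y i (y i)) k
      exact HasDerivAt.comp (y i) (by simpa using hV (y k)) hcoord
    simpa [Pi.single_apply] using HasDerivAt.fun_sum fun k (_ : k ∈ Finset.univ) => hterm k
  have hexp := ((hsum.neg).div_const 2).exp
  have hmul := (hasDerivAt_comp_toLp_update hf i).mul hexp
  have hderiv : partialDeriv i (groundStateTransform ι V f) y = _ := hmul.deriv
  rw [hderiv]
  simp only [groundStateTransform, LinearEquiv.coe_mk, LinearMap.coe_mk, AddHom.coe_mk,
    Function.update_eq_self, Pi.neg_apply]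
  ring

/-- The Dirichlet form of `gibbs ι V`, where `v = V'`, after the ground state transform. -/
noncomputable def twistedEnergy (v : ℝ → ℝ) (G : (ι → ℝ) → ℝ) : ℝ≥0∞ :=
  ∑ i, ∫⁻ y, ENNReal.ofReal ((partialDeriv i G y + v (y i) * G y / 2) ^ 2)

/-- The quadratic form of the Schrödinger operator `-Δ + ∑ i, v (y i) ^ 2 / 4`. -/
noncomputable def schrodingerEnergy (v : ℝ → ℝ) (G : (ι → ℝ) → ℝ) : ℝ≥0∞ :=
  ∑ i, ∫⁻ y, ENNReal.ofReal (partialDeriv i G y ^ 2 + v (y i) ^ 2 * G y ^ 2 / 4)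

theorem lipEnergy_gibbs [Nonempty ι] (hV : ∀ s, HasDerivAt V (v s) s) (hv : Continuous v)
    {f : EuclideanSpace ℝ ι → ℝ} (hf : LocallyLipschitz f) :
    lipEnergy (gibbs ι V) f = twistedEnergy v (groundStateTransform ι V f) := by
  have hVc : Continuous V := continuous_iff_continuousAt.2 fun s => (hV s).continuousAt
  have hGc := (locallyLipschitz_groundStateTransform hV hv hf).continuous
  rw [lipEnergy, lintegral_gibbs hVc, twistedEnergy,
    ← lintegral_finsetSum _ fun i _ => (measurable_twisted hGc hv i).ennreal_ofReal]
  refine lintegral_congr_ae ?_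
  filter_upwards [(PiLp.volume_preserving_toLp ι).quasiMeasurePreserving.ae
    (ae_differentiableAt_of_locallyLipschitz hf)] with y hy
  rw [localLip_eq_norm_fderiv hy, norm_sq_eq_sum_apply_single_sq, ← exp_neg_half_sq,
    ← ENNReal.ofReal_mul (Finset.sum_nonneg fun _ _ => sq_nonneg _), Finset.sum_mul,
    ENNReal.ofReal_sum_of_nonneg fun i _ => by positivity]
  simp only [← mul_pow, partialDeriv_groundStateTransform hV hy]

theorem ofReal_mul_schrodingerEnergy_le {w : ℝ → ℝ} {A B δ : ℝ} (hv : Continuous v)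
    (hw : IsLipschitzSubstitute v w A B) (hδ : 0 < δ) (hδ1 : δ < 1) {G : (ι → ℝ) → ℝ}
    (hG : LocallyLipschitz G) :
    ENNReal.ofReal (1 - δ) * schrodingerEnergy v G ≤
      twistedEnergy v G +
        ENNReal.ofReal (Fintype.card ι * ((A ^ 2 + B ^ 2) / (4 * δ))) * mass volume G := by
  have hδ' : 0 ≤ 1 - δ := by linarith
  have hκ : 0 ≤ (A ^ 2 + B ^ 2) / (4 * δ) := by positivity
  have hslice (i : ι) : ENNReal.ofReal (1 - δ) *
        ∫⁻ y, ENNReal.ofReal (partialDeriv i G y ^ 2 + v (y i) ^ 2 * G y ^ 2 / 4) ≤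
      (∫⁻ y, ENNReal.ofReal ((partialDeriv i G y + v (y i) * G y / 2) ^ 2)) +
        ENNReal.ofReal ((A ^ 2 + B ^ 2) / (4 * δ)) * mass volume G := by
    have hS := measurable_schrodinger hG.continuous hv i
    have hT := measurable_twisted hG.continuous hv i
    have hGm := hG.continuous.measurable
    rw [mass, ← lintegral_const_mul _ hS.ennreal_ofReal, ← lintegral_const_mul _ (by fun_prop),
      ← lintegral_add_left hT.ennreal_ofReal]
    simp only [← ENNReal.ofReal_mul hδ', ← ENNReal.ofReal_mul hκ]
    simp only [← ENNReal.ofReal_add (sq_nonneg _) (mul_nonneg hκ (sq_nonneg _))]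
    refine lintegral_le_lintegral_of_slices i (by fun_prop) (by fun_prop) fun y => ?_
    simpa only [partialDeriv_update, Function.update_self] using
      lintegral_schrodinger_le_twisted hv hw (locallyLipschitz_comp_update hG y i) hδ hδ1
  calc ENNReal.ofReal (1 - δ) * schrodingerEnergy v G
      ≤ ∑ i, ((∫⁻ y, ENNReal.ofReal ((partialDeriv i G y + v (y i) * G y / 2) ^ 2)) +
          ENNReal.ofReal ((A ^ 2 + B ^ 2) / (4 * δ)) * mass volume G) := by
        rw [schrodingerEnergy, Finset.mul_sum]
        exact Finset.sum_le_sum fun i _ => hslice i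
    _ = _ := by
        rw [Finset.sum_add_distrib, Finset.sum_const, Finset.card_univ, nsmul_eq_mul,
          ENNReal.ofReal_mul (Nat.cast_nonneg _), ENNReal.ofReal_natCast, mul_assoc, twistedEnergy]

theorem twistedEnergy_le_schrodingerEnergy (hvm : Monotone v) (hv : Continuous v)
    {G : (ι → ℝ) → ℝ} (hG : LocallyLipschitz G) (hc : HasCompactSupport G) :
    twistedEnergy v G ≤ schrodingerEnergy v G := by
  refine Finset.sum_le_sum fun i _ => lintegral_le_lintegral_of_slices i
    (measurable_twisted hG.continuous hv i).ennreal_ofReal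
    (measurable_schrodinger hG.continuous hv i).ennreal_ofReal fun y => ?_
  simpa only [partialDeriv_update, Function.update_self] using
    lintegral_twisted_le_schrodinger hvm hv (locallyLipschitz_comp_update hG y i)
      (hasCompactSupport_comp_update hc y i)

end GroundState

/-! ### Trigonometric modes on the cells of a lattice -/

/-- The `j`-th half-open cell of the lattice `l ℤ`. -/
def cell (l : ℝ) (j : ℤ) : Set ℝ := Set.Ico (j * l) (j * l + l)

theorem measurableSet_cell (l : ℝ) (j : ℤ) : MeasurableSet (cell l j) := measurableSet_Ico

theorem mem_cell_iff {l : ℝ} (hl : 0 < l) {j : ℤ} {s : ℝ} : s ∈ cell l j ↔ ⌊s / l⌋ = j := by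
  rw [Int.floor_eq_iff, le_div_iff₀ hl, div_lt_iff₀ hl, add_mul, one_mul]
  rfl

theorem integral_indicator_cell {l : ℝ} (hl : 0 < l) (j : ℤ) (φ : ℝ → ℝ) :
    ∫ s, (cell l j).indicator φ s = ∫ s in (j * l)..(j * l + l), φ s := by
  rw [integral_indicator (measurableSet_cell l j),
    intervalIntegral.integral_of_le (le_add_of_nonneg_right hl.le)]
  exact setIntegral_congr_set Ico_ae_eq_Ioc

theorem integral_cos_int_mul_pi_div {l : ℝ} (hl : 0 < l) (a : ℝ) (k : ℤ) :
    ∫ s in a..a + l, Real.cos (k * Real.pi / l * (s - a)) = if k = 0 then l else 0 := by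
  rcases eq_or_ne k 0 with rfl | hk
  · simp
  have hc : k * Real.pi / l ≠ 0 :=
    div_ne_zero (mul_ne_zero (Int.cast_ne_zero.2 hk) Real.pi_ne_zero) hl.ne'
  simp only [mul_sub, intervalIntegral.integral_comp_mul_sub _ hc, integral_cos, if_neg hk]
  have : k * Real.pi / l * (a + l) - k * Real.pi / l * a = k * Real.pi := by field_simp; ring
  rw [this, Real.sin_int_mul_pi]
  simp

/-- The constant normalizing the `m`-th cosine (or sine) on an interval of length `l` in `L²`. -/
noncomputable def modeNorm (l : ℝ) (m : ℕ) : ℝ := √(if m = 0 then 1 / l else 2 / l)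

theorem modeNorm_mul_self {l : ℝ} (hl : 0 < l) (m : ℕ) :
    modeNorm l m * modeNorm l m = if m = 0 then 1 / l else 2 / l :=
  Real.mul_self_sqrt (by split_ifs <;> positivity)

theorem modeNorm_pos {l : ℝ} (hl : 0 < l) (m : ℕ) : 0 < modeNorm l m :=
  Real.sqrt_pos.2 (by split_ifs <;> positivity)

/-- The trigonometric function of frequency `m π / l` that vanishes (`b = true`, sine) or is
critical (`b = false`, cosine) at the ends of the `j`-th cell, where `q = (j, m)`. -/
noncomputable def wave (l : ℝ) (b : Bool) (q : ℤ × ℕ) (s : ℝ) : ℝ :=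
  modeNorm l q.2 * (bif b then Real.sin else Real.cos) (q.2 * Real.pi / l * (s - q.1 * l))

/-- The `L²`-normalized Dirichlet (`b = true`) or Neumann (`b = false`) eigenfunction of a cell,
extended by zero; it is indexed by the cell and the frequency. -/
noncomputable def mode (l : ℝ) (b : Bool) (q : ℤ × ℕ) : ℝ → ℝ :=
  (cell l q.1).indicator (wave l b q)

section OneDimensional

variable {l : ℝ} {b : Bool} {q r : ℤ × ℕ}

theorem contDiff_wave : ContDiff ℝ 1 (wave l b q) := by
  unfold wave
  cases b <;> simp only [cond_true, cond_false] <;> fun_prop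

theorem measurable_mode (l : ℝ) (b : Bool) (q : ℤ × ℕ) : Measurable (mode l b q) :=
  contDiff_wave.continuous.measurable.indicator (measurableSet_cell l q.1)

theorem mode_of_mem {s : ℝ} (hs : s ∈ cell l q.1) : mode l b q s = wave l b q s :=
  Set.indicator_of_mem hs _

theorem mode_of_notMem {s : ℝ} (hs : s ∉ cell l q.1) : mode l b q s = 0 :=
  Set.indicator_of_notMem hs _

theorem integrable_mode_sq (l : ℝ) (b : Bool) (q : ℤ × ℕ) :
    Integrable fun s => mode l b q s ^ 2 := by
  have : (fun s => mode l b q s ^ 2) = (cell l q.1).indicator fun s => wave l b q s ^ 2 := by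
    ext s
    by_cases hs : s ∈ cell l q.1 <;> simp [mode, hs]
  rw [this, integrable_indicator_iff (measurableSet_cell l q.1)]
  exact ((contDiff_wave.continuous.pow 2).integrableOn_Icc).mono_set Set.Ico_subset_Icc_self

theorem wave_mul_wave (hj : q.1 = r.1) (s : ℝ) :
    wave l b q s * wave l b r s = modeNorm l q.2 * modeNorm l r.2 / 2 *
      (Real.cos (((q.2 - r.2 : ℤ) : ℝ) * Real.pi / l * (s - q.1 * l)) +
        (bif b then -1 else 1) *
          Real.cos (((q.2 + r.2 : ℤ) : ℝ) * Real.pi / l * (s - q.1 * l))) := by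
  have hsub := Real.cos_sub (q.2 * Real.pi / l * (s - r.1 * l)) (r.2 * Real.pi / l * (s - r.1 * l))
  have hadd := Real.cos_add (q.2 * Real.pi / l * (s - r.1 * l)) (r.2 * Real.pi / l * (s - r.1 * l))
  rw [← sub_mul, ← sub_div, ← sub_mul] at hsub
  rw [← add_mul, ← add_div, ← add_mul] at hadd
  push_cast
  cases b <;> simp only [wave, hj, hsub, hadd, cond_false, cond_true] <;> ring

theorem integral_mode_mul_mode_of_fst_eq (hl : 0 < l) (hj : q.1 = r.1) (hq : b → q.2 ≠ 0) :
    ∫ s, mode l b q s * mode l b r s = if q = r then 1 else 0 := by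
  have hprod : (fun s => mode l b q s * mode l b r s) =
      (cell l q.1).indicator fun s => wave l b q s * wave l b r s := by
    ext s
    by_cases hs : s ∈ cell l q.1 <;> simp [mode, ← hj, hs]
  simp only [hprod, integral_indicator_cell hl, wave_mul_wave hj,
    intervalIntegral.integral_const_mul]
  rw [intervalIntegral.integral_add (Continuous.intervalIntegrable (by fun_prop) _ _)
    (Continuous.intervalIntegrable (by fun_prop) _ _), intervalIntegral.integral_const_mul,
    integral_cos_int_mul_pi_div hl, integral_cos_int_mul_pi_div hl]
  by_cases hm : q.2 = r.2
  · obtain rfl : q = r := Prod.ext hj hm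
    rw [modeNorm_mul_self hl]
    rcases eq_or_ne q.2 0 with h0 | h0
    · obtain rfl : b = false := by simpa using fun hb => hq hb h0
      simp only [h0, ↓reduceIte, one_div, CharP.cast_eq_zero, sub_self, cond_false,
        add_zero, one_mul]
      field
    · simp only [h0, ↓reduceIte, sub_self, add_self_eq_zero, Int.natCast_eq_zero,
        mul_zero, add_zero]
      field
  · have hsub : (q.2 : ℤ) - r.2 ≠ 0 := by omega
    have hadd : (q.2 : ℤ) + r.2 ≠ 0 := by omega
    have hqr : q ≠ r := fun h => hm (h ▸ rfl)
    simp [hsub, hadd, hqr]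

theorem integral_mode_mul_mode (hl : 0 < l) (hq : b → q.2 ≠ 0) :
    ∫ s, mode l b q s * mode l b r s = if q = r then 1 else 0 := by
  by_cases hj : q.1 = r.1
  · exact integral_mode_mul_mode_of_fst_eq hl hj hq
  have hzero (s : ℝ) : mode l b q s * mode l b r s = 0 := by
    by_cases hs : s ∈ cell l q.1
    · have : s ∉ cell l r.1 := fun hs' =>
        hj (((mem_cell_iff hl).1 hs).symm.trans ((mem_cell_iff hl).1 hs'))
      rw [mode_of_notMem this, mul_zero]
    · rw [mode_of_notMem hs, zero_mul]
  have hqr : q ≠ r := fun h => hj (h ▸ rfl)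
  simp [hzero, hqr]

theorem hasDerivAt_wave_true (s : ℝ) :
    HasDerivAt (wave l true q) (q.2 * Real.pi / l * wave l false q s) s := by
  have hphase : HasDerivAt (fun s => q.2 * Real.pi / l * (s - q.1 * l)) (q.2 * Real.pi / l) s := by
    simpa using ((hasDerivAt_id s).sub_const (q.1 * l)).const_mul (q.2 * Real.pi / l)
  refine (hphase.sin.const_mul (modeNorm l q.2)).congr_deriv ?_
  simp only [wave, cond_false]
  ring

theorem wave_true_left : wave l true q (q.1 * l) = 0 := by simp [wave]

theorem wave_true_right (hl : 0 < l) : wave l true q (q.1 * l + l) = 0 := by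
  simp [wave, div_mul_cancel₀ _ hl.ne', Real.sin_nat_mul_pi]

theorem hasDerivAt_mode_true {s : ℝ} (hleft : s ≠ q.1 * l) (hright : s ≠ q.1 * l + l) :
    HasDerivAt (mode l true q) (q.2 * Real.pi / l * mode l false q s) s := by
  by_cases hs : s ∈ cell l q.1
  · have : cell l q.1 ∈ 𝓝 s := Ico_mem_nhds (hs.1.lt_of_ne' hleft) hs.2
    rw [mode_of_mem hs]
    exact (hasDerivAt_wave_true s).congr_of_eventuallyEq
      (eventually_of_mem this fun t ht => mode_of_mem ht)
  · have : s < q.1 * l ∨ q.1 * l + l < s := by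
      by_contra! h
      exact hs ⟨h.1, h.2.lt_of_ne hright⟩
    have : mode l true q =ᶠ[𝓝 s] fun _ => 0 := by
      rcases this with hlt | hgt
      · filter_upwards [Iio_mem_nhds hlt] with t ht using mode_of_notMem fun h => ht.not_ge h.1
      · filter_upwards [Ioi_mem_nhds hgt] with t ht using mode_of_notMem fun h => ht.not_gt h.2
    rw [mode_of_notMem hs, mul_zero]
    exact (hasDerivAt_const s 0).congr_of_eventuallyEq this

theorem mode_true_eq_wave_clamp (hl : 0 < l) (s : ℝ) :
    mode l true q s = wave l true q (max (q.1 * l) (min s (q.1 * l + l))) := by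
  by_cases hs : s ∈ cell l q.1
  · rw [mode_of_mem hs, min_eq_left hs.2.le, max_eq_right hs.1]
  · rw [mode_of_notMem hs]
    rcases lt_or_ge s (q.1 * l) with hlt | hge
    · rw [max_eq_left (min_le_of_left_le hlt.le), wave_true_left]
    · have : q.1 * l + l ≤ s := not_lt.1 fun h => hs ⟨hge, h⟩
      rw [min_eq_right this, max_eq_right (by linarith), wave_true_right hl]

theorem locallyLipschitz_mode_true (hl : 0 < l) : LocallyLipschitz (mode l true q) := by
  rw [funext (mode_true_eq_wave_clamp hl)]
  exact contDiff_wave.locallyLipschitz.comp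
    ((LipschitzWith.id.min_const _).const_max _).locallyLipschitz

theorem deriv_mul_mode_add_mul_mode (hl : 0 < l) (q : ℤ × ℕ) {g : ℝ → ℝ} (hg : LocallyLipschitz g) :
    Integrable (fun s => deriv g s * mode l true q s +
        q.2 * Real.pi / l * (g s * mode l false q s)) ∧
      ∫ s, (deriv g s * mode l true q s + q.2 * Real.pi / l * (g s * mode l false q s)) = 0 := by
  have hprod : LocallyLipschitz fun s => g s * wave l true q s :=
    locallyLipschitz_mul hg contDiff_wave.locallyLipschitz
  have hac := absolutelyContinuousOnInterval_of_locallyLipschitz hprod (q.1 * l) (q.1 * l + l)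
  have hderiv : (fun s => deriv g s * mode l true q s +
      q.2 * Real.pi / l * (g s * mode l false q s)) =ᵐ[volume]
        (cell l q.1).indicator (deriv fun s => g s * wave l true q s) := by
    filter_upwards [ae_differentiableAt_of_locallyLipschitz hg] with s hs
    by_cases h : s ∈ cell l q.1
    · have := (hs.hasDerivAt.mul (hasDerivAt_wave_true (l := l) (q := q) s)).deriv
      rw [mode_of_mem h, mode_of_mem h, Set.indicator_of_mem h]
      exact (this.trans (by ring)).symm
    · simp [mode_of_notMem, h]
  constructor
  · rw [integrable_congr hderiv, integrable_indicator_iff (measurableSet_cell l q.1)]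
    exact (intervalIntegrable_iff_integrableOn_Ico_of_le (by linarith)).1
      hac.intervalIntegrable_deriv
  · rw [integral_congr_ae hderiv, integral_indicator_cell hl, hac.integral_deriv_eq_sub,
      wave_true_left, wave_true_right hl, mul_zero, mul_zero, sub_self]

end OneDimensional

/-! ### Products of modes -/

section BoxMode

variable {ι : Type*} [Fintype ι]

/-- The product of the modes `α k` in the coordinates `k`, of Dirichlet type where `b k` is true and
of Neumann type elsewhere. -/
noncomputable def boxMode (l : ℝ) (b : ι → Bool) (α : ι → ℤ × ℕ) (y : ι → ℝ) : ℝ :=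
  ∏ k, mode l (b k) (α k) (y k)

theorem measurable_boxMode (l : ℝ) (b : ι → Bool) (α : ι → ℤ × ℕ) : Measurable (boxMode l b α) :=
  Finset.measurable_prod _ fun k _ => (measurable_mode l (b k) (α k)).comp (measurable_pi_apply k)

theorem memLp_boxMode (l : ℝ) (b : ι → Bool) (α : ι → ℤ × ℕ) : MemLp (boxMode l b α) 2 := by
  rw [memLp_two_iff_integrable_sq (measurable_boxMode l b α).aestronglyMeasurable]
  simpa only [boxMode, Finset.prod_pow, volume_pi] using
    Integrable.fintype_prod fun k => integrable_mode_sq l (b k) (α k)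

theorem boxMode_eq_zero {l : ℝ} {b : ι → Bool} {α : ι → ℤ × ℕ} {y : ι → ℝ} {i : ι}
    (hy : y i ∉ cell l (α i).1) : boxMode l b α y = 0 :=
  Finset.prod_eq_zero (Finset.mem_univ i) (mode_of_notMem hy)

theorem comp_floor_mul_boxMode {l : ℝ} (hl : 0 < l) (b : ι → Bool) (α : ι → ℤ × ℕ) (φ : ℤ → ℝ)
    (i : ι) (y : ι → ℝ) :
    φ ⌊y i / l⌋ * boxMode l b α y = φ (α i).1 * boxMode l b α y := by
  by_cases hy : y i ∈ cell l (α i).1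
  · rw [(mem_cell_iff hl).1 hy]
  · rw [boxMode_eq_zero hy, mul_zero, mul_zero]

theorem integral_boxMode_mul_boxMode {l : ℝ} (hl : 0 < l) {b : ι → Bool} {α : ι → ℤ × ℕ}
    (hα : ∀ k, b k → (α k).2 ≠ 0) (β : ι → ℤ × ℕ) :
    ∫ y, boxMode l b α y * boxMode l b β y = if α = β then 1 else 0 := by
  simp only [boxMode, ← Finset.prod_mul_distrib]
  rw [integral_fintype_prod_volume_eq_prod fun k s => mode l (b k) (α k) s * mode l (b k) (β k) s]
  simp only [integral_mode_mul_mode hl (hα _)]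
  split_ifs with h
  · simp [h]
  · obtain ⟨k, hk⟩ := Function.ne_iff.1 h
    exact Finset.prod_eq_zero (Finset.mem_univ k) (if_neg hk)

variable [DecidableEq ι]

theorem boxMode_update (l : ℝ) (b : ι → Bool) (i : ι) (c : Bool) (α : ι → ℤ × ℕ)
    (y : ι → ℝ) (s : ℝ) :
    boxMode l (Function.update b i c) α (Function.update y i s) =
      (∏ k ∈ Finset.univ.erase i, mode l (b k) (α k) (y k)) * mode l c (α i) s := by
  rw [boxMode, ← Finset.prod_erase_mul _ _ (Finset.mem_univ i), Function.update_self,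
    Function.update_self]
  congr 1
  refine Finset.prod_congr rfl fun k hk => ?_
  rw [Function.update_of_ne (Finset.ne_of_mem_erase hk),
    Function.update_of_ne (Finset.ne_of_mem_erase hk)]

theorem integral_eq_zero_of_slices (i : ι) {H : (ι → ℝ) → ℝ} (hm : Measurable H)
    (hi : Integrable H) (hslice : ∀ y, Integrable (fun s => H (Function.update y i s)) ∧
      ∫ s, H (Function.update y i s) = 0) :
    ∫ y, H y = 0 := by
  have hparts (y : ι → ℝ) : ∫⁻ s, ENNReal.ofReal (H (Function.update y i s)) =
      ∫⁻ s, ENNReal.ofReal (-H (Function.update y i s)) := by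
    obtain ⟨hint, hzero⟩ := hslice y
    rw [integral_eq_lintegral_pos_part_sub_lintegral_neg_part hint, sub_eq_zero] at hzero
    exact (ENNReal.toReal_eq_toReal_iff' hint.lintegral_lt_top.ne
      hint.neg.lintegral_lt_top.ne).1 hzero
  have : ∫⁻ y, ENNReal.ofReal (H y) = ∫⁻ y, ENNReal.ofReal (-H y) :=
    le_antisymm
      (lintegral_le_lintegral_of_slices i (by fun_prop) (by fun_prop) fun y => (hparts y).le)
      (lintegral_le_lintegral_of_slices i (by fun_prop) (by fun_prop) fun y => (hparts y).ge)
  rw [integral_eq_lintegral_pos_part_sub_lintegral_neg_part hi, this, sub_self]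

theorem integral_partialDeriv_mul_boxMode {l : ℝ} (hl : 0 < l) {b : ι → Bool} {i : ι}
    (hb : b i = false) (α : ι → ℤ × ℕ) {G : (ι → ℝ) → ℝ} (hG : LocallyLipschitz G) (hG2 : MemLp G 2)
    (hdG : MemLp (partialDeriv i G) 2) :
    ∫ y, partialDeriv i G y * boxMode l (Function.update b i true) α y =
      -((α i).2 * Real.pi / l) * ∫ y, G y * boxMode l b α y := by
  have hint₁ : Integrable fun y => partialDeriv i G y * boxMode l (Function.update b i true) α y :=
    hdG.integrable_mul (memLp_boxMode l (Function.update b i true) α)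
  have hint₂ : Integrable fun y => (α i).2 * Real.pi / l * (G y * boxMode l b α y) :=
    (hG2.integrable_mul (memLp_boxMode l b α)).const_mul _
  have hmeas : Measurable fun y => partialDeriv i G y * boxMode l (Function.update b i true) α y +
      (α i).2 * Real.pi / l * (G y * boxMode l b α y) :=
    ((measurable_partialDeriv i hG.continuous).mul (measurable_boxMode _ _ _)).add
      ((hG.continuous.measurable.mul (measurable_boxMode _ _ _)).const_mul _)
  have hzero := integral_eq_zero_of_slices i hmeas (hint₁.add hint₂) fun y => by
    have hslice (s : ℝ) : partialDeriv i G (Function.update y i s) *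
        boxMode l (Function.update b i true) α (Function.update y i s) +
          (α i).2 * Real.pi / l *
            (G (Function.update y i s) * boxMode l b α (Function.update y i s)) =
        (∏ k ∈ Finset.univ.erase i, mode l (b k) (α k) (y k)) *
          (deriv (fun s => G (Function.update y i s)) s * mode l true (α i) s +
            (α i).2 * Real.pi / l * (G (Function.update y i s) * mode l false (α i) s)) := by
      have := boxMode_update l b i false α y s
      rw [← hb, Function.update_eq_self, hb] at this
      rw [partialDeriv_update, boxMode_update, this]
      ring
    have hparts := deriv_mul_mode_add_mul_mode hl (α i) (locallyLipschitz_comp_update hG y i)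
    simp only [hslice]
    exact ⟨hparts.1.const_mul _, by rw [integral_const_mul, hparts.2, mul_zero]⟩
  rw [integral_add hint₁ hint₂, integral_const_mul] at hzero
  linarith

end BoxMode

/-! ### Completeness of the Neumann modes -/

theorem cos_mul_cos_succ_mul (k : ℕ) (t : ℝ) :
    Real.cos t * Real.cos ((k + 1 : ℕ) * t) =
      1 / 2 * Real.cos ((k + 2 : ℕ) * t) + 1 / 2 * Real.cos (k * t) := by
  have hadd := Real.cos_add ((k + 1 : ℕ) * t) t
  have hsub := Real.cos_sub ((k + 1 : ℕ) * t) t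
  rw [show ((k + 1 : ℕ) : ℝ) * t + t = (k + 2 : ℕ) * t by push_cast; ring] at hadd
  rw [show ((k + 1 : ℕ) : ℝ) * t - t = k * t by push_cast; ring] at hsub
  linear_combination (-1 / 2) * hadd - 1 / 2 * hsub

/-- The cube of side `l` with corner `l j`. -/
def box {ι : Type*} (l : ℝ) (j : ι → ℤ) : Set (ι → ℝ) := Set.univ.pi fun k => cell l (j k)

/-- The closure of `box l j`. -/
abbrev closedBox {ι : Type*} (l : ℝ) (j : ι → ℤ) : Set (ι → ℝ) :=
  Set.univ.pi fun k => Set.Icc (j k * l) (j k * l + l)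

section Completeness

variable {ι : Type*}

/-- The cosine of lowest nonzero frequency in the `i`-th coordinate of a closed box. -/
noncomputable def cosCoord (l : ℝ) (j : ι → ℤ) (i : ι) : C(closedBox l j, ℝ) where
  toFun y := Real.cos (Real.pi / l * (y.1 i - j i * l))
  continuous_toFun := Real.continuous_cos.comp (continuous_const.mul
    (((continuous_apply i).comp continuous_subtype_val).sub continuous_const))

theorem measurableSet_box [Countable ι] (l : ℝ) (j : ι → ℤ) : MeasurableSet (box l j) :=
  MeasurableSet.univ_pi fun k => measurableSet_cell l (j k)

theorem separatesPoints_adjoin_cosCoord {l : ℝ} (hl : 0 < l) (j : ι → ℤ) :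
    (Algebra.adjoin ℝ (Set.range (cosCoord l j))).SeparatesPoints := by
  intro x y hxy
  obtain ⟨i, hi⟩ := Function.ne_iff.1 (Subtype.coe_injective.ne hxy)
  refine ⟨cosCoord l j i, ⟨_, Algebra.subset_adjoin ⟨i, rfl⟩, rfl⟩, fun h => hi ?_⟩
  have hpi : 0 < Real.pi / l := div_pos Real.pi_pos hl
  have hmem (z : closedBox l j) : Real.pi / l * (z.1 i - j i * l) ∈ Set.Icc 0 Real.pi := by
    obtain ⟨hleft, hright⟩ := z.2 i (Set.mem_univ i)
    refine ⟨mul_nonneg hpi.le (sub_nonneg.2 hleft), ?_⟩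
    calc Real.pi / l * (z.1 i - j i * l) ≤ Real.pi / l * l := by gcongr; linarith
      _ = Real.pi := div_mul_cancel₀ _ hl.ne'
  have := mul_left_cancel₀ hpi.ne' (Real.injOn_cos (hmem x) (hmem y) h)
  linarith

variable [Fintype ι]

/-- The product of cosines of frequencies `m k π / l` on a closed box. -/
noncomputable def cosProd (l : ℝ) (j : ι → ℤ) (m : ι → ℕ) : C(closedBox l j, ℝ) where
  toFun y := ∏ k, Real.cos (m k * (Real.pi / l * (y.1 k - j k * l)))
  continuous_toFun := continuous_finsetProd _ fun k _ => Real.continuous_cos.comp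
    (continuous_const.mul (continuous_const.mul
      (((continuous_apply k).comp continuous_subtype_val).sub continuous_const)))

theorem cosCoord_mul_cosProd_mem_span (l : ℝ) (j : ι → ℤ) (i : ι) (m : ι → ℕ) :
    cosCoord l j i * cosProd l j m ∈ Submodule.span ℝ (Set.range (cosProd l j)) := by
  classical
  have hupdate (r : ℕ) (y : closedBox l j) : cosProd l j (Function.update m i r) y =
      (∏ k ∈ Finset.univ.erase i, Real.cos (m k * (Real.pi / l * (y.1 k - j k * l)))) *
        Real.cos (r * (Real.pi / l * (y.1 i - j i * l))) := by
    simp only [cosProd, ContinuousMap.coe_mk]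
    rw [← Finset.prod_erase_mul _ _ (Finset.mem_univ i), Function.update_self]
    congr 1
    refine Finset.prod_congr rfl fun k hk => ?_
    rw [Function.update_of_ne (Finset.ne_of_mem_erase hk)]
  have hself (y : closedBox l j) := hupdate (m i) y
  simp only [Function.update_eq_self] at hself
  have hspan (r : ℕ) : cosProd l j (Function.update m i r) ∈
      Submodule.span ℝ (Set.range (cosProd l j)) := Submodule.subset_span ⟨_, rfl⟩
  rcases hm : m i with _ | k
  · convert hspan 1 using 2
    ext y
    rw [ContinuousMap.mul_apply, hupdate, hself, hm]
    simp [cosCoord, mul_comm]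
  · convert add_mem (Submodule.smul_mem _ (1 / 2 : ℝ) (hspan (k + 2)))
      (Submodule.smul_mem _ (1 / 2 : ℝ) (hspan k)) using 2
    ext y
    simp only [ContinuousMap.mul_apply, ContinuousMap.add_apply, ContinuousMap.smul_apply, hupdate,
      hself, hm, cosCoord, ContinuousMap.coe_mk, smul_eq_mul]
    linear_combination (∏ k ∈ Finset.univ.erase i,
      Real.cos (m k * (Real.pi / l * (y.1 k - j k * l)))) *
        cos_mul_cos_succ_mul k (Real.pi / l * (y.1 i - j i * l))

theorem adjoin_cosCoord_le_span_cosProd (l : ℝ) (j : ι → ℤ) :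
    Subalgebra.toSubmodule (Algebra.adjoin ℝ (Set.range (cosCoord l j))) ≤
      Submodule.span ℝ (Set.range (cosProd l j)) := by
  rw [Algebra.adjoin_eq_span, Submodule.span_le]
  intro f hf
  induction hf using Submonoid.closure_induction_left with
  | one => exact Submodule.subset_span ⟨0, by ext y; simp [cosProd]⟩
  | mul_left g hg f _ ih =>
    obtain ⟨i, rfl⟩ := hg
    have : Submodule.span ℝ (Set.range (cosProd l j)) ≤
        (Submodule.span ℝ (Set.range (cosProd l j))).comap (LinearMap.mulLeft ℝ (cosCoord l j i)) :=
      Submodule.span_le.2 (Set.range_subset_iff.2 (cosCoord_mul_cosProd_mem_span l j i))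
    exact this ih

theorem cosProd_eq_boxMode {l : ℝ} (hl : 0 < l) (j : ι → ℤ) (m : ι → ℕ) {y : ι → ℝ}
    (hy : y ∈ box l j) (hy' : y ∈ closedBox l j) :
    cosProd l j m ⟨y, hy'⟩ =
      (∏ k, modeNorm l (m k))⁻¹ * boxMode l (fun _ => false) (fun k => (j k, m k)) y := by
  have hmode (k : ι) : mode l false (j k, m k) (y k) =
      modeNorm l (m k) * Real.cos (m k * (Real.pi / l * (y k - j k * l))) := by
    rw [mode_of_mem (hy k (Set.mem_univ k)), wave, cond_false, ← mul_assoc (m k : ℝ), mul_div_assoc]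
  have : ∏ k, modeNorm l (m k) ≠ 0 := Finset.prod_ne_zero_iff.2 fun k _ => (modeNorm_pos hl _).ne'
  simp only [boxMode, hmode, Finset.prod_mul_distrib, inv_mul_cancel_left₀ this]
  rfl

theorem exists_mem_span_boxMode_near {l : ℝ} (hl : 0 < l) (j : ι → ℤ) {g : (ι → ℝ) → ℝ}
    (hg : Continuous g) {ε : ℝ} (hε : 0 < ε) :
    ∃ P ∈ Submodule.span ℝ (Set.range fun m : ι → ℕ =>
      boxMode l (fun _ => false) fun k => (j k, m k)), ∀ y ∈ box l j, |g y - P y| ≤ ε := by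
  have : CompactSpace (closedBox l j) :=
    isCompact_iff_compactSpace.1 (isCompact_univ_pi fun k => isCompact_Icc)
  let g' : C(closedBox l j, ℝ) := ⟨fun y => g y.1, by fun_prop⟩
  obtain ⟨f, hf⟩ := ContinuousMap.exists_mem_subalgebra_near_continuousMap_of_separatesPoints _
    (separatesPoints_adjoin_cosCoord hl j) g' ε hε
  obtain ⟨c, hc⟩ := Finsupp.mem_span_range_iff_exists_finsupp.1
    (adjoin_cosCoord_le_span_cosProd l j f.2)
  refine ⟨∑ m ∈ c.support, (c m * (∏ k, modeNorm l (m k))⁻¹) •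
    boxMode l (fun _ => false) fun k => (j k, m k), Submodule.sum_mem _ fun m _ =>
      Submodule.smul_mem _ _ (Submodule.subset_span ⟨m, rfl⟩), fun y hy => ?_⟩
  have hy' : y ∈ closedBox l j := fun k _ => Set.Ico_subset_Icc_self (hy k (Set.mem_univ k))
  have hfy : f.1 ⟨y, hy'⟩ = (∑ m ∈ c.support, (c m * (∏ k, modeNorm l (m k))⁻¹) •
      boxMode l (fun _ => false) fun k => (j k, m k)) y := by
    simp only [← hc, Finsupp.sum, ContinuousMap.sum_apply, ContinuousMap.smul_apply,
      cosProd_eq_boxMode hl j _ hy hy', Finset.sum_apply, Pi.smul_apply, smul_eq_mul, mul_assoc]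
  rw [← hfy, abs_sub_comm]
  exact (ContinuousMap.norm_coe_le_norm (f.1 - g') ⟨y, hy'⟩).trans hf.le

variable {l : ℝ} {f : (ι → ℝ) → ℝ}

theorem integrableOn_box (hf : MemLp f 2) (j : ι → ℤ) : IntegrableOn f (box l j) := by
  have hbounded : Bornology.IsBounded (box l j) :=
    Bornology.IsBounded.pi fun k => Metric.isBounded_Ico _ _
  have : IsFiniteMeasure (volume.restrict (box l j)) :=
    ⟨by simpa using hbounded.measure_lt_top⟩
  exact (hf.restrict _).integrable one_le_two

theorem setIntegral_box_mul_eq_zero_of_mem_span (hf : MemLp f 2)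
    (horth : ∀ α, ∫ y, f y * boxMode l (fun _ => false) α y = 0) (j : ι → ℤ) {P : (ι → ℝ) → ℝ}
    (hP : P ∈ Submodule.span ℝ (Set.range fun m : ι → ℕ =>
      boxMode l (fun _ => false) fun k => (j k, m k))) :
    IntegrableOn (fun y => f y * P y) (box l j) ∧ ∫ y in box l j, f y * P y = 0 := by
  induction hP using Submodule.span_induction with
  | mem P hP =>
    obtain ⟨m, rfl⟩ := hP
    refine ⟨(hf.integrable_mul (memLp_boxMode l _ _)).integrableOn, ?_⟩
    rw [setIntegral_eq_integral_of_forall_compl_eq_zero, horth]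
    intro y hy
    obtain ⟨k, hk⟩ : ∃ k, y k ∉ cell l (j k) := by simpa [box] using hy
    exact mul_eq_zero_of_right _ (boxMode_eq_zero (i := k) hk)
  | zero => simp
  | add P Q _ _ hP hQ =>
    simp only [Pi.add_apply, mul_add]
    exact ⟨hP.1.add hQ.1, by rw [integral_add hP.1 hQ.1, hP.2, hQ.2, add_zero]⟩
  | smul a P _ hP =>
    simp only [Pi.smul_apply, smul_eq_mul, mul_left_comm _ a]
    exact ⟨hP.1.const_mul a, by rw [integral_const_mul, hP.2, mul_zero]⟩

theorem setIntegral_box_mul_eq_zero (hl : 0 < l) (hf : MemLp f 2)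
    (horth : ∀ α, ∫ y, f y * boxMode l (fun _ => false) α y = 0) (j : ι → ℤ) {g : (ι → ℝ) → ℝ}
    (hg : Continuous g) : ∫ y in box l j, f y * g y = 0 := by
  have hfbox : IntegrableOn f (box l j) := integrableOn_box hf j
  have hle (ε : ℝ) (hε : 0 < ε) :
      |∫ y in box l j, f y * g y| ≤ ε * ∫ y in box l j, |f y| := by
    obtain ⟨P, hP, hnear⟩ := exists_mem_span_boxMode_near hl j hg hε
    obtain ⟨hint, hzero⟩ := setIntegral_box_mul_eq_zero_of_mem_span hf horth j hP
    have hbound : ∀ y ∈ box l j, ‖f y * (g y - P y)‖ ≤ ε * |f y| := fun y hy => by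
      rw [norm_mul, mul_comm ε]
      exact mul_le_mul_of_nonneg_left (hnear y hy) (abs_nonneg _)
    have hmeas : AEStronglyMeasurable (fun y => f y * (g y - P y)) (volume.restrict (box l j)) := by
      simp only [mul_sub]
      exact (hfbox.1.mul hg.aestronglyMeasurable).sub hint.1
    have hint' : IntegrableOn (fun y => f y * (g y - P y)) (box l j) :=
      (hfbox.abs.const_mul ε).mono' hmeas
        (ae_restrict_of_forall_mem (measurableSet_box l j) hbound)
    have hsplit : ∫ y in box l j, f y * g y = ∫ y in box l j, f y * (g y - P y) := by
      rw [← add_zero (∫ y in box l j, f y * (g y - P y)), ← hzero, ← integral_add hint' hint]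
      simp only [← mul_add, sub_add_cancel]
    rw [hsplit, ← integral_const_mul]
    exact norm_integral_le_of_norm_le (hfbox.abs.const_mul ε)
      (ae_restrict_of_forall_mem (measurableSet_box l j) hbound)
  have hlim : Tendsto (fun ε => ε * ∫ y in box l j, |f y|) (𝓝[>] 0) (𝓝 0) :=
    ((continuous_id.mul continuous_const).tendsto' 0 0 (zero_mul _)).mono_left nhdsWithin_le_nhds
  exact abs_nonpos_iff.1 (ge_of_tendsto hlim (eventually_mem_nhdsWithin.mono hle))

theorem ae_eq_zero_of_integral_mul_boxMode_eq_zero (hl : 0 < l) (hf : MemLp f 2)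
    (horth : ∀ α, ∫ y, f y * boxMode l (fun _ => false) α y = 0) : f =ᵐ[volume] 0 := by
  have hbox (j : ι → ℤ) : ∀ᵐ y, (box l j).indicator f y = 0 := by
    refine ae_eq_zero_of_integral_contDiff_smul_eq_zero
      ((integrable_indicator_iff (measurableSet_box l j)).2
        (integrableOn_box hf j)).locallyIntegrable fun g hg _ => ?_
    have (y : ι → ℝ) : g y • (box l j).indicator f y =
        (box l j).indicator (fun y => f y * g y) y := by
      by_cases hy : y ∈ box l j <;> simp [hy, mul_comm]
    simp only [this, integral_indicator (measurableSet_box l j)]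
    exact setIntegral_box_mul_eq_zero hl hf horth j hg.continuous
  filter_upwards [ae_all_iff.2 hbox] with y hy
  have : y ∈ box l fun k => ⌊y k / l⌋ := fun k _ => (mem_cell_iff hl).2 rfl
  simpa [this] using hy fun k => ⌊y k / l⌋

section OrthonormalFunctions

variable {X κ : Type*} [MeasurableSpace X] {μ : Measure X} {e : κ → X → ℝ}

theorem inner_toLp_eq_integral_mul {f g : X → ℝ} (hf : MemLp f 2 μ) (hg : MemLp g 2 μ) :
    inner ℝ (hf.toLp f) (hg.toLp g) = ∫ x, f x * g x ∂μ := by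
  rw [L2.inner_def]
  refine integral_congr_ae ?_
  filter_upwards [hf.coeFn_toLp, hg.coeFn_toLp] with x hfx hgx
  rw [hfx, hgx, real_inner_comm]
  rfl

theorem orthonormal_toLp [DecidableEq κ] (he : ∀ α, MemLp (e α) 2 μ)
    (horth : ∀ α β, ∫ x, e α x * e β x ∂μ = if α = β then 1 else 0) :
    Orthonormal ℝ fun α => (he α).toLp (e α) := by
  rw [orthonormal_iff_ite]
  intro α β
  rw [inner_toLp_eq_integral_mul, horth]

theorem ofReal_integral_sq {f : X → ℝ} (hf : MemLp f 2 μ) :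
    ENNReal.ofReal (∫ x, f x ^ 2 ∂μ) = mass μ f :=
  ofReal_integral_eq_lintegral_ofReal hf.integrable_sq (.of_forall fun _ => sq_nonneg _)

theorem ofReal_sum_sq_integral_mul_le_mass [DecidableEq κ] (he : ∀ α, MemLp (e α) 2 μ)
    (horth : ∀ α β, ∫ x, e α x * e β x ∂μ = if α = β then 1 else 0) {f : X → ℝ}
    (hf : AEStronglyMeasurable f μ) (M : Finset κ) :
    ENNReal.ofReal (∑ α ∈ M, (∫ x, f x * e α x ∂μ) ^ 2) ≤ mass μ f := by
  rcases eq_or_ne (mass μ f) ⊤ with htop | hfin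
  · exact htop ▸ le_top
  have hf2 := memLp_two_of_mass_lt_top hf hfin.lt_top
  have := (orthonormal_toLp he horth).sum_inner_products_le (hf2.toLp f) (s := M)
  simp only [inner_toLp_eq_integral_mul, ← real_inner_self_eq_norm_sq, Real.norm_eq_abs, sq_abs,
    ← sq] at this
  rw [← ofReal_integral_sq hf2]
  refine ENNReal.ofReal_le_ofReal ?_
  simpa only [mul_comm] using this

end OrthonormalFunctions

theorem hasSum_sq_integral_mul_boxMode (hl : 0 < l) (hf : MemLp f 2) :
    HasSum (fun α => (∫ y, f y * boxMode l (fun _ => false) α y) ^ 2) (∫ y, f y ^ 2) := by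
  have horthonormal := orthonormal_toLp (fun α : ι → ℤ × ℕ => memLp_boxMode l (fun _ => false) α)
    fun α β => integral_boxMode_mul_boxMode hl (by simp) β
  have hcomplete : (Submodule.span ℝ (Set.range fun α : ι → ℤ × ℕ =>
      (memLp_boxMode l (fun _ => false) α).toLp _))ᗮ = ⊥ := by
    rw [Submodule.eq_bot_iff]
    intro g hg
    refine Lp.eq_zero_iff_ae_eq_zero.2
      (ae_eq_zero_of_integral_mul_boxMode_eq_zero hl (Lp.memLp g) fun α => ?_)
    rw [← inner_toLp_eq_integral_mul (Lp.memLp g) (memLp_boxMode l _ α), Lp.toLp_coeFn]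
    exact (Submodule.mem_orthogonal' _ _).1 hg _ (Submodule.subset_span ⟨α, rfl⟩)
  have := (HilbertBasis.mkOfOrthogonalEqBot horthonormal hcomplete).hasSum_inner_mul_inner
    (hf.toLp f) (hf.toLp f)
  simp only [HilbertBasis.coe_mkOfOrthogonalEqBot, inner_toLp_eq_integral_mul] at this
  simpa only [mul_comm, sq] using this

end Completeness

/-! ### Dirichlet–Neumann bracketing -/

section Bracketing

variable {ι : Type*} [Fintype ι]

/-- The energy of the box mode `α` when the potential is `u j` on the `j`-th cell of each axis. -/
noncomputable def boxLevel (l : ℝ) (u : ℤ → ℝ) (α : ι → ℤ × ℕ) : ℝ :=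
  ∑ i, (u (α i).1 + ((α i).2 * Real.pi / l) ^ 2)

section Neumann

variable {l : ℝ} {G : (ι → ℝ) → ℝ}

theorem ofReal_sum_potential_le_mass (hl : 0 < l) {u : ℤ → ℝ} (hu : ∀ j, 0 ≤ u j)
    (hG : AEStronglyMeasurable G) (i : ι) (M : Finset (ι → ℤ × ℕ)) :
    ENNReal.ofReal (∑ α ∈ M, u (α i).1 * (∫ y, G y * boxMode l (fun _ => false) α y) ^ 2) ≤
      mass volume fun y => √(u ⌊y i / l⌋) * G y := by
  classical
  have hmeas : Measurable fun y : ι → ℝ => √(u ⌊y i / l⌋) := by fun_prop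
  have hcoeff (α : ι → ℤ × ℕ) :
      ∫ y, √(u ⌊y i / l⌋) * G y * boxMode l (fun _ => false) α y =
        √(u (α i).1) * ∫ y, G y * boxMode l (fun _ => false) α y := by
    rw [← integral_const_mul]
    refine integral_congr_ae (.of_forall fun y => ?_)
    have := comp_floor_mul_boxMode hl (fun _ => false) α (fun j => √(u j)) i y
    linear_combination G y * this
  have hbessel := ofReal_sum_sq_integral_mul_le_mass (f := fun y => √(u ⌊y i / l⌋) * G y)
    (fun α : ι → ℤ × ℕ => memLp_boxMode l (fun _ => false) α)
    (fun α β => integral_boxMode_mul_boxMode hl (by simp) β) (hmeas.aestronglyMeasurable.mul hG) M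
  simpa only [hcoeff, mul_pow, Real.sq_sqrt (hu _)] using hbessel

variable [DecidableEq ι]

theorem ofReal_sum_kinetic_le_mass_partialDeriv (hl : 0 < l) (hG : LocallyLipschitz G)
    (hG2 : MemLp G 2) (i : ι) (M : Finset (ι → ℤ × ℕ)) :
    ENNReal.ofReal (∑ α ∈ M, ((α i).2 * Real.pi / l) ^ 2 *
      (∫ y, G y * boxMode l (fun _ => false) α y) ^ 2) ≤ mass volume (partialDeriv i G) := by
  have hdG : AEStronglyMeasurable (partialDeriv i G) :=
    (measurable_partialDeriv i hG.continuous).aestronglyMeasurable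
  rcases eq_or_ne (mass volume (partialDeriv i G)) ⊤ with htop | hfin
  · exact htop ▸ le_top
  let b : ι → Bool := Function.update (fun _ => false) i true
  have hb (k : ι) (hk : b k) : k = i := by
    by_contra h
    simp [b, Function.update_of_ne h] at hk
  have hbessel := ofReal_sum_sq_integral_mul_le_mass (κ := {α : ι → ℤ × ℕ // (α i).2 ≠ 0})
    (fun α => memLp_boxMode l b α.1) (fun α β => by
      simpa only [Subtype.ext_iff] using integral_boxMode_mul_boxMode hl
        (fun k hk => (hb k hk).symm ▸ α.2) β.1) hdG (M.subtype _)
  refine le_of_eq_of_le (congrArg _ ?_) hbessel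
  rw [Finset.sum_subtype_eq_sum_filter (p := fun α : ι → ℤ × ℕ => (α i).2 ≠ 0)
    (f := fun α => (∫ y, partialDeriv i G y * boxMode l b α y) ^ 2)]
  have hdG2 := memLp_two_of_mass_lt_top hdG hfin.lt_top
  simp only [b, integral_partialDeriv_mul_boxMode (b := fun _ => false) hl rfl _ hG hG2 hdG2,
    mul_pow, neg_sq]
  refine (Finset.sum_filter_of_ne (p := fun α : ι → ℤ × ℕ => (α i).2 ≠ 0)
    fun α _ hα h0 => hα ?_).symm
  simp [h0]

theorem ofReal_sum_boxLevel_le_schrodingerEnergy (hl : 0 < l) {u : ℤ → ℝ} {v : ℝ → ℝ}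
    (hu : ∀ j, 0 ≤ u j) (huv : ∀ s, u ⌊s / l⌋ ≤ v s ^ 2 / 4) (hG : LocallyLipschitz G)
    (hG2 : MemLp G 2) (M : Finset (ι → ℤ × ℕ)) :
    ENNReal.ofReal (∑ α ∈ M, boxLevel l u α *
      (∫ y, G y * boxMode l (fun _ => false) α y) ^ 2) ≤ schrodingerEnergy v G := by
  simp only [boxLevel, Finset.sum_mul, add_mul]
  rw [Finset.sum_comm, ENNReal.ofReal_sum_of_nonneg fun i _ => Finset.sum_nonneg fun α _ =>
    add_nonneg (mul_nonneg (hu _) (sq_nonneg _)) (by positivity)]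
  refine Finset.sum_le_sum fun i _ => ?_
  have hdG : Measurable (partialDeriv i G) := measurable_partialDeriv i hG.continuous
  rw [Finset.sum_add_distrib, add_comm, ENNReal.ofReal_add
    (Finset.sum_nonneg fun α _ => by positivity)
    (Finset.sum_nonneg fun α _ => mul_nonneg (hu _) (sq_nonneg _))]
  refine (add_le_add (ofReal_sum_kinetic_le_mass_partialDeriv hl hG hG2 i M)
    (ofReal_sum_potential_le_mass hl hu hG2.1 i M)).trans ?_
  rw [mass, mass, ← lintegral_add_left (by fun_prop)]
  refine lintegral_mono fun y => ?_
  rw [← ENNReal.ofReal_add (sq_nonneg _) (sq_nonneg _), mul_pow, Real.sq_sqrt (hu _)]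
  refine ENNReal.ofReal_le_ofReal (add_le_add_right ?_ _)
  linarith [mul_le_mul_of_nonneg_right (huv (y i)) (sq_nonneg (G y))]

theorem ofReal_mul_mass_le_schrodingerEnergy (hl : 0 < l) {u : ℤ → ℝ} {v : ℝ → ℝ}
    (hu : ∀ j, 0 ≤ u j) (huv : ∀ s, u ⌊s / l⌋ ≤ v s ^ 2 / 4) {L : ℝ} (hL : 0 ≤ L)
    (hG : LocallyLipschitz G) (hG2 : MemLp G 2)
    (horth : ∀ α, boxLevel l u α ≤ L → ∫ y, G y * boxMode l (fun _ => false) α y = 0) :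
    ENNReal.ofReal L * mass volume G ≤ schrodingerEnergy v G := by
  rw [← ofReal_integral_sq hG2, ← ENNReal.ofReal_mul hL]
  refine le_of_tendsto ((ENNReal.continuous_ofReal.tendsto _).comp
    ((hasSum_sq_integral_mul_boxMode hl hG2).mul_left L)) (.of_forall fun M => ?_)
  refine (ENNReal.ofReal_le_ofReal (Finset.sum_le_sum fun α _ => ?_)).trans
    (ofReal_sum_boxLevel_le_schrodingerEnergy hl hu huv hG hG2 M)
  rcases le_or_gt (boxLevel l u α) L with hα | hα
  · simp [horth α hα]
  · gcongr

end Neumann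

section Counting

theorem finrank_le_ncard_of_orthogonal_eq_zero {X κ : Type*} [MeasurableSpace X] {μ : Measure X}
    {S : Set κ} (hS : S.Finite) {e : κ → X → ℝ} (he : ∀ α, MemLp (e α) 2 μ)
    {W : Submodule ℝ (X → ℝ)} (hW : ∀ f ∈ W, MemLp f 2 μ)
    (h : ∀ f ∈ W, (∀ α ∈ S, ∫ x, f x * e α x ∂μ = 0) → f = 0) :
    Module.finrank ℝ W ≤ S.ncard := by
  have := hS.fintype
  have hint (f : W) (α : κ) := (hW f f.2).integrable_mul (he α)
  let coeff : W →ₗ[ℝ] (S → ℝ) :=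
    { toFun f α := ∫ x, f.1 x * e α x ∂μ
      map_add' f g := by
        ext α
        simp only [Submodule.coe_add, Pi.add_apply, add_mul]
        exact integral_add (hint f α) (hint g α)
      map_smul' c f := by
        ext α
        simp only [Submodule.coe_smul, Pi.smul_apply, smul_eq_mul, mul_assoc]
        exact integral_const_mul _ _ }
  have hinj : Function.Injective coeff := by
    rw [← LinearMap.ker_eq_bot, LinearMap.ker_eq_bot']
    exact fun f hf => Subtype.ext (h f f.2 fun α hα => congrFun hf ⟨α, hα⟩)
  have hle := LinearMap.finrank_le_finrank_of_injective hinj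
  rwa [Module.finrank_fintype_fun_eq_card, ← Nat.card_eq_fintype_card,
    Nat.card_coe_set_eq] at hle

variable {l : ℝ} {V v w : ℝ → ℝ} {u : ℤ → ℝ} {A B δ a L : ℝ}

theorem mass_eq_zero_of_orthogonal_boxMode [Nonempty ι] (hV : ∀ s, HasDerivAt V (v s) s)
    (hv : Continuous v) (hw : IsLipschitzSubstitute v w A B) (hδ : 0 < δ) (hδ1 : δ < 1)
    (hl : 0 < l) (hu : ∀ j, 0 ≤ u j) (huv : ∀ s, u ⌊s / l⌋ ≤ v s ^ 2 / 4) (ha : 0 ≤ a)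
    (haL : a + Fintype.card ι * ((A ^ 2 + B ^ 2) / (4 * δ)) < (1 - δ) * L)
    {f : EuclideanSpace ℝ ι → ℝ} (hf : LocallyLipschitz f) (hmass : mass (gibbs ι V) f < ⊤)
    (hen : lipEnergy (gibbs ι V) f ≤ ENNReal.ofReal a * mass (gibbs ι V) f)
    (horth : ∀ α, boxLevel l u α ≤ L →
      ∫ y, groundStateTransform ι V f y * boxMode l (fun _ => false) α y = 0) :
    mass (gibbs ι V) f = 0 := by
  classical
  have hVc : Continuous V := continuous_iff_continuousAt.2 fun s => (hV s).continuousAt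
  set G := groundStateTransform ι V f
  set κ : ℝ := Fintype.card ι * ((A ^ 2 + B ^ 2) / (4 * δ))
  have hδ' : 0 < 1 - δ := by linarith
  have hκ : 0 ≤ κ := by positivity
  have hL : 0 ≤ L := nonneg_of_mul_nonneg_right ((add_nonneg ha hκ).trans haL.le) hδ'
  have hG : LocallyLipschitz G := locallyLipschitz_groundStateTransform hV hv hf
  rw [lipEnergy_gibbs hV hv hf] at hen
  rw [mass_gibbs hVc] at hen hmass ⊢
  have hG2 := memLp_two_of_mass_lt_top hG.continuous.aestronglyMeasurable hmass
  by_contra hne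
  have hle : ENNReal.ofReal ((1 - δ) * L) * mass volume G ≤
      ENNReal.ofReal (a + κ) * mass volume G :=
    calc ENNReal.ofReal ((1 - δ) * L) * mass volume G
        = ENNReal.ofReal (1 - δ) * (ENNReal.ofReal L * mass volume G) := by
          rw [ENNReal.ofReal_mul hδ'.le, mul_assoc]
      _ ≤ ENNReal.ofReal (1 - δ) * schrodingerEnergy v G := by
          gcongr
          exact ofReal_mul_mass_le_schrodingerEnergy hl hu huv hL hG hG2 horth
      _ ≤ twistedEnergy v G + ENNReal.ofReal κ * mass volume G :=
          ofReal_mul_schrodingerEnergy_le hv hw hδ hδ1 hG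
      _ ≤ ENNReal.ofReal a * mass volume G + ENNReal.ofReal κ * mass volume G := by gcongr
      _ = ENNReal.ofReal (a + κ) * mass volume G := by rw [ENNReal.ofReal_add ha hκ, add_mul]
  rw [ENNReal.mul_le_mul_iff_left hne hmass.ne, ENNReal.ofReal_le_ofReal_iff (by positivity)] at hle
  exact haL.not_ge hle

theorem finrank_le_ncard_boxLevel_le [Nonempty ι] (hV : ∀ s, HasDerivAt V (v s) s)
    (hv : Continuous v) (hw : IsLipschitzSubstitute v w A B) (hδ : 0 < δ) (hδ1 : δ < 1)
    (hl : 0 < l) (hu : ∀ j, 0 ≤ u j) (huv : ∀ s, u ⌊s / l⌋ ≤ v s ^ 2 / 4) (ha : 0 ≤ a)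
    (haL : a + Fintype.card ι * ((A ^ 2 + B ^ 2) / (4 * δ)) < (1 - δ) * L)
    (hfin : {α : ι → ℤ × ℕ | boxLevel l u α ≤ L}.Finite)
    {F : Submodule ℝ (EuclideanSpace ℝ ι → ℝ)} (hF : ∀ f ∈ F, memW12Lip (gibbs ι V) f ∧
      lipEnergy (gibbs ι V) f ≤ ENNReal.ofReal a * mass (gibbs ι V) f) :
    Module.finrank ℝ F ≤ {α : ι → ℤ × ℕ | boxLevel l u α ≤ L}.ncard := by
  have hVc : Continuous V := continuous_iff_continuousAt.2 fun s => (hV s).continuousAt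
  have := isOpenPosMeasure_gibbs (ι := ι) hVc
  rw [← LinearEquiv.finrank_map_eq (groundStateTransform ι V) F]
  refine finrank_le_ncard_of_orthogonal_eq_zero hfin (fun α => memLp_boxMode l (fun _ => false) α)
    ?_ ?_
  · rintro _ ⟨f, hf, rfl⟩
    obtain ⟨hflip, hmass, -⟩ := memW12Lip_iff.1 (hF f hf).1
    exact memLp_two_of_mass_lt_top
      (locallyLipschitz_groundStateTransform hV hv hflip).continuous.aestronglyMeasurable
      (mass_gibbs hVc f ▸ hmass)
  · rintro _ ⟨f, hf, rfl⟩ horth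
    obtain ⟨hflip, hmass, -⟩ := memW12Lip_iff.1 (hF f hf).1
    have hfzero : f = 0 := eq_zero_of_mass_eq_zero hflip.continuous
      (mass_eq_zero_of_orthogonal_boxMode hV hv hw hδ hδ1 hl hu huv ha haL hflip hmass
        (hF f hf).2 horth)
    rw [hfzero, map_zero]

end Counting

end Bracketing

section Dirichlet

theorem hasCompactSupport_finsetSum {X κ : Type*} [TopologicalSpace X] (M : Finset κ)
    {f : κ → X → ℝ} (hf : ∀ α ∈ M, HasCompactSupport (f α)) :
    HasCompactSupport fun x => ∑ α ∈ M, f α x := by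
  refine .intro' (M.isCompact_biUnion hf)
    (M.finite_toSet.isClosed_biUnion fun α _ => isClosed_tsupport _) fun x hx => ?_
  exact Finset.sum_eq_zero fun α hα => image_eq_zero_of_notMem_tsupport fun hmem =>
    hx (Set.mem_biUnion hα hmem)

theorem mass_sum_mul_of_orthonormal {X κ : Type*} [MeasurableSpace X] {μ : Measure X}
    [DecidableEq κ] {e : κ → X → ℝ} (he : ∀ α, MemLp (e α) 2 μ) {M : Finset κ}
    (horth : ∀ α ∈ M, ∀ β, ∫ x, e α x * e β x ∂μ = if α = β then 1 else 0) (c : κ → ℝ) :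
    mass μ (fun x => ∑ α ∈ M, c α * e α x) = ENNReal.ofReal (∑ α ∈ M, c α ^ 2) := by
  have hsum : MemLp (fun x => ∑ α ∈ M, c α * e α x) 2 μ :=
    memLp_finsetSum M fun α _ => (he α).const_mul (c α)
  have hint (α β : κ) : Integrable (fun x => c α * c β * (e α x * e β x)) μ :=
    ((he α).integrable_mul (he β)).const_mul _
  rw [← ofReal_integral_sq hsum]
  congr 1
  calc ∫ x, (∑ α ∈ M, c α * e α x) ^ 2 ∂μ
      = ∫ x, ∑ α ∈ M, ∑ β ∈ M, c α * c β * (e α x * e β x) ∂μ := by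
        simp only [sq, Finset.sum_mul_sum, mul_mul_mul_comm]
    _ = ∑ α ∈ M, ∑ β ∈ M, c α * c β * ∫ x, e α x * e β x ∂μ := by
        rw [integral_finsetSum _ fun α _ => integrable_finsetSum _ fun β _ => hint α β]
        refine Finset.sum_congr rfl fun α _ => ?_
        rw [integral_finsetSum _ fun β _ => hint α β]
        simp only [integral_const_mul]
    _ = ∑ α ∈ M, c α ^ 2 := by
        refine Finset.sum_congr rfl fun α hα => ?_
        simp only [horth α hα, mul_ite, mul_one, mul_zero, Finset.sum_ite_eq, hα, if_true, sq]

theorem linearIndepOn_of_orthonormal {X κ : Type*} [MeasurableSpace X] {μ : Measure X}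
    [DecidableEq κ] {e : κ → X → ℝ} (he : ∀ α, MemLp (e α) 2 μ) {M : Finset κ}
    (horth : ∀ α ∈ M, ∀ β, ∫ x, e α x * e β x ∂μ = if α = β then 1 else 0) :
    LinearIndepOn ℝ e M := by
  refine linearIndepOn_finset_iff.2 fun c hc => ?_
  have hzero : (fun x => ∑ α ∈ M, c α * e α x) = 0 := by
    rw [← hc]
    ext x
    simp only [Finset.sum_apply, Pi.smul_apply, smul_eq_mul]
  have hmass := mass_sum_mul_of_orthonormal he horth c
  rw [hzero] at hmass
  have hsum : ∑ α ∈ M, c α ^ 2 ≤ 0 := by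
    simpa [mass] using hmass.symm
  intro α hα
  exact sq_nonpos_iff _ |>.1 ((Finset.single_le_sum (fun β _ => sq_nonneg (c β)) hα).trans hsum)

variable {ι : Type*} [Fintype ι] {l : ℝ}

theorem locallyLipschitz_boxMode_true (hl : 0 < l) (α : ι → ℤ × ℕ) :
    LocallyLipschitz (boxMode l (fun _ => true) α) :=
  locallyLipschitz_finsetProd Finset.univ fun i _ => ((locallyLipschitz_mode_true hl).comp
    (LipschitzWith.eval (α := fun _ => ℝ) i).locallyLipschitz)

theorem hasCompactSupport_boxMode (l : ℝ) (b : ι → Bool) (α : ι → ℤ × ℕ) :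
    HasCompactSupport (boxMode l b α) := by
  refine .intro (isCompact_univ_pi fun i =>
    isCompact_Icc (a := ((α i).1 * l : ℝ)) (b := (α i).1 * l + l)) fun y hy => ?_
  simp only [Set.mem_univ_pi, not_forall] at hy
  obtain ⟨i, hi⟩ := hy
  exact boxMode_eq_zero fun hmem => hi (Set.Ico_subset_Icc_self hmem)

theorem comp_floor_mul_sum_boxMode (hl : 0 < l) (b : ι → Bool) (M : Finset (ι → ℤ × ℕ))
    (c : (ι → ℤ × ℕ) → ℝ) (φ : ℤ → ℝ) (i : ι) (y : ι → ℝ) :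
    φ ⌊y i / l⌋ * ∑ α ∈ M, c α * boxMode l b α y =
      ∑ α ∈ M, c α * φ (α i).1 * boxMode l b α y := by
  rw [Finset.mul_sum]
  refine Finset.sum_congr rfl fun α _ => ?_
  linear_combination c α * comp_floor_mul_boxMode hl b α φ i y

theorem ae_forall_notMem_cell_endpoints (l : ℝ) (M : Finset (ι → ℤ × ℕ)) (i : ι) :
    ∀ᵐ y : ι → ℝ, ∀ α ∈ M, y i ≠ (α i).1 * l ∧ y i ≠ (α i).1 * l + l := by
  refine (ae_ball_iff M.countable_toSet).2 fun α _ => ?_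
  have hne := Measure.ae_eval_ne (fun _ : ι => (volume : Measure ℝ)) i
  exact (hne _).and (hne _)

variable [DecidableEq ι]

theorem partialDeriv_sum_mul_boxMode_true (M : Finset (ι → ℤ × ℕ)) (c : (ι → ℤ × ℕ) → ℝ) {i : ι}
    {y : ι → ℝ} (hy : ∀ α ∈ M, y i ≠ (α i).1 * l ∧ y i ≠ (α i).1 * l + l) :
    partialDeriv i (fun y => ∑ α ∈ M, c α * boxMode l (fun _ => true) α y) y =
      ∑ α ∈ M, c α * ((α i).2 * Real.pi / l) *
        boxMode l (Function.update (fun _ => true) i false) α y := by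
  refine (HasDerivAt.fun_sum fun α hα => ?_).deriv
  have hupdate (b : Bool) (s : ℝ) := boxMode_update l (fun _ => true) i b α y s
  have htrue := hupdate true
  rw [Function.update_eq_self i (fun _ : ι => true)] at htrue
  have hfalse := hupdate false (y i)
  rw [Function.update_eq_self] at hfalse
  simp only [htrue, hfalse]
  exact (((hasDerivAt_mode_true (hy α hα).1 (hy α hα).2).const_mul _).const_mul _).congr_deriv
    (by ring)

theorem lintegral_schrodinger_sum_mul_boxMode_true_le (hl : 0 < l) {u : ℤ → ℝ} {v : ℝ → ℝ}
    (hu : ∀ j, 0 ≤ u j) (huv : ∀ s, v s ^ 2 / 4 ≤ u ⌊s / l⌋) {M : Finset (ι → ℤ × ℕ)}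
    (hM : ∀ α ∈ M, ∀ i, (α i).2 ≠ 0) (c : (ι → ℤ × ℕ) → ℝ) (i : ι) {G : (ι → ℝ) → ℝ}
    (hG : G = fun y => ∑ α ∈ M, c α * boxMode l (fun _ => true) α y) :
    ∫⁻ y, ENNReal.ofReal (partialDeriv i G y ^ 2 + v (y i) ^ 2 * G y ^ 2 / 4) ≤
      ENNReal.ofReal (∑ α ∈ M, (u (α i).1 + ((α i).2 * Real.pi / l) ^ 2) * c α ^ 2) := by
  have horth (b : ι → Bool) (α) (hα : α ∈ M) (β : ι → ℤ × ℕ) :=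
    integral_boxMode_mul_boxMode hl (b := b) (fun k _ => hM α hα k) β
  let dG (y : ι → ℝ) : ℝ := ∑ α ∈ M, c α * ((α i).2 * Real.pi / l) *
    boxMode l (Function.update (fun _ => true) i false) α y
  let uG (y : ι → ℝ) : ℝ := ∑ α ∈ M, c α * √(u (α i).1) * boxMode l (fun _ => true) α y
  have hdG : Measurable dG :=
    Finset.measurable_fun_sum _ fun α _ => (measurable_boxMode l _ α).const_mul _
  have huG (y : ι → ℝ) : uG y = √(u ⌊y i / l⌋) * G y := by
    rw [hG]
    exact (comp_floor_mul_sum_boxMode hl (fun _ => true) M c (fun j => √(u j)) i y).symm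
  calc ∫⁻ y, ENNReal.ofReal (partialDeriv i G y ^ 2 + v (y i) ^ 2 * G y ^ 2 / 4)
      ≤ ∫⁻ y, (ENNReal.ofReal (dG y ^ 2) + ENNReal.ofReal (uG y ^ 2)) := by
        refine lintegral_mono_ae ?_
        filter_upwards [ae_forall_notMem_cell_endpoints l M i] with y hy
        have hpartial : partialDeriv i G y = dG y := hG ▸ partialDeriv_sum_mul_boxMode_true M c hy
        rw [hpartial, ← ENNReal.ofReal_add (by positivity) (by positivity), huG, mul_pow,
          Real.sq_sqrt (hu _)]
        gcongr
        linarith [mul_le_mul_of_nonneg_right (huv (y i)) (sq_nonneg (G y))]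
    _ = mass volume dG + mass volume uG := lintegral_add_left (by fun_prop) _
    _ = _ := by
        rw [mass_sum_mul_of_orthonormal (memLp_boxMode l _) (horth _),
          mass_sum_mul_of_orthonormal (memLp_boxMode l _) (horth _), ← ENNReal.ofReal_add
          (by positivity) (by positivity), ← Finset.sum_add_distrib]
        congr 1
        refine Finset.sum_congr rfl fun α _ => ?_
        rw [mul_pow, mul_pow, Real.sq_sqrt (hu _)]
        ring

theorem schrodingerEnergy_sum_mul_boxMode_true_le (hl : 0 < l) {u : ℤ → ℝ} {v : ℝ → ℝ}
    (hu : ∀ j, 0 ≤ u j) (huv : ∀ s, v s ^ 2 / 4 ≤ u ⌊s / l⌋) {M : Finset (ι → ℤ × ℕ)}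
    (hM : ∀ α ∈ M, ∀ i, (α i).2 ≠ 0) (c : (ι → ℤ × ℕ) → ℝ) :
    schrodingerEnergy v (fun y => ∑ α ∈ M, c α * boxMode l (fun _ => true) α y) ≤
      ENNReal.ofReal (∑ α ∈ M, boxLevel l u α * c α ^ 2) := by
  simp only [boxLevel, Finset.sum_mul]
  rw [Finset.sum_comm, ENNReal.ofReal_sum_of_nonneg fun i _ => Finset.sum_nonneg fun α _ =>
    mul_nonneg (add_nonneg (hu _) (sq_nonneg _)) (sq_nonneg _)]
  exact Finset.sum_le_sum fun i _ =>
    lintegral_schrodinger_sum_mul_boxMode_true_le hl hu huv hM c i rfl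

end Dirichlet

section TrialSpace

variable {ι : Type*} [Fintype ι] [Nonempty ι] {l : ℝ} {V v : ℝ → ℝ} {u : ℤ → ℝ} {a : ℝ}
  {M : Finset (ι → ℤ × ℕ)}

theorem memW12Lip_and_lipEnergy_le_of_groundStateTransform_eq_sum (hV : ∀ s, HasDerivAt V (v s) s)
    (hv : Continuous v) (hvm : Monotone v) (hl : 0 < l) (hu : ∀ j, 0 ≤ u j)
    (huv : ∀ s, v s ^ 2 / 4 ≤ u ⌊s / l⌋) (hM : ∀ α ∈ M, ∀ i, (α i).2 ≠ 0)
    (hMa : ∀ α ∈ M, boxLevel l u α ≤ a) (c : (ι → ℤ × ℕ) → ℝ)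
    {f : EuclideanSpace ℝ ι → ℝ}
    (hf : groundStateTransform ι V f = fun y => ∑ α ∈ M, c α * boxMode l (fun _ => true) α y) :
    memW12Lip (gibbs ι V) f ∧
      lipEnergy (gibbs ι V) f ≤ ENNReal.ofReal a * mass (gibbs ι V) f := by
  classical
  have hVc : Continuous V := continuous_iff_continuousAt.2 fun s => (hV s).continuousAt
  have hG : LocallyLipschitz (groundStateTransform ι V f) := hf ▸
    locallyLipschitz_finsetSum M fun α _ => locallyLipschitz_mul (.const (c α))
      (locallyLipschitz_boxMode_true hl α)
  have hGc : HasCompactSupport (groundStateTransform ι V f) := hf ▸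
    hasCompactSupport_finsetSum M fun α _ => (hasCompactSupport_boxMode l _ α).mul_left
  have hflip : LocallyLipschitz f := by
    simpa only [LinearEquiv.symm_apply_apply] using
      locallyLipschitz_groundStateTransform_symm hV hv hG
  have hmass : mass (gibbs ι V) f = ENNReal.ofReal (∑ α ∈ M, c α ^ 2) := by
    rw [mass_gibbs hVc, hf, mass_sum_mul_of_orthonormal (memLp_boxMode l _)]
    exact fun α hα β => integral_boxMode_mul_boxMode hl (fun k _ => hM α hα k) β
  have henergy : lipEnergy (gibbs ι V) f ≤ ENNReal.ofReal (∑ α ∈ M, boxLevel l u α * c α ^ 2) := by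
    rw [lipEnergy_gibbs hV hv hflip]
    refine (twistedEnergy_le_schrodingerEnergy hvm hv hG hGc).trans ?_
    rw [hf]
    exact schrodingerEnergy_sum_mul_boxMode_true_le hl hu huv hM c
  refine ⟨memW12Lip_iff.2 ⟨hflip, hmass ▸ ENNReal.ofReal_lt_top,
    henergy.trans_lt ENNReal.ofReal_lt_top⟩, henergy.trans ?_⟩
  rw [hmass, ← ENNReal.ofReal_mul' (by positivity), Finset.mul_sum]
  gcongr with α hα
  exact hMa α hα

theorem exists_submodule_lipEnergy_le_of_boxLevel_le (hV : ∀ s, HasDerivAt V (v s) s)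
    (hv : Continuous v) (hvm : Monotone v) (hl : 0 < l) (hu : ∀ j, 0 ≤ u j)
    (huv : ∀ s, v s ^ 2 / 4 ≤ u ⌊s / l⌋) (hM : ∀ α ∈ M, ∀ i, (α i).2 ≠ 0)
    (hMa : ∀ α ∈ M, boxLevel l u α ≤ a) :
    ∃ F : Submodule ℝ (EuclideanSpace ℝ ι → ℝ), Module.finrank ℝ F = M.card ∧
      ∀ f ∈ F, memW12Lip (gibbs ι V) f ∧
        lipEnergy (gibbs ι V) f ≤ ENNReal.ofReal a * mass (gibbs ι V) f := by
  classical
  refine ⟨(Submodule.span ℝ (boxMode l (fun _ => true) '' M)).map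
    (groundStateTransform ι V).symm.toLinearMap, ?_, ?_⟩
  · have hind : LinearIndependent ℝ fun α : M => boxMode l (fun _ => true) α.1 :=
      linearIndepOn_of_orthonormal (memLp_boxMode l _) fun α hα β =>
        integral_boxMode_mul_boxMode hl (fun k _ => hM α hα k) β
    rw [LinearEquiv.finrank_map_eq, Set.image_eq_range]
    exact (finrank_span_eq_card hind).trans (Fintype.card_coe M)
  · rintro _ ⟨G, hGspan, rfl⟩
    obtain ⟨c, rfl⟩ := (Submodule.mem_span_image_finset_iff_exists_fun' ℝ).1 hGspan
    refine memW12Lip_and_lipEnergy_le_of_groundStateTransform_eq_sum hV hv hvm hl hu huv hM hMa c ?_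
    ext y
    simp only [LinearEquiv.coe_coe, LinearEquiv.apply_symm_apply, Finset.sum_apply, Pi.smul_apply,
      smul_eq_mul]

end TrialSpace

/-! ### The potential `|s| ^ p / p` -/

theorem isFiniteMeasure_gibbs {ι : Type*} [Fintype ι] {V : ℝ → ℝ} (hV : Continuous V)
    (hint : Integrable fun s => Real.exp (-V s)) : IsFiniteMeasure (gibbs ι V) := by
  constructor
  rw [← lintegral_one, lintegral_gibbs hV]
  simp only [one_mul, ← Finset.sum_neg_distrib, Real.exp_sum]
  exact (Integrable.fintype_prod fun _ : ι => hint).lintegral_lt_top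

/-- The derivative of `|s| ^ p / p`. -/
noncomputable def powDeriv (p s : ℝ) : ℝ := |s| ^ (p - 2) * s

/-- The odd function vanishing on `[-1, 1]` and equal to `powDeriv p s - 1` for `1 ≤ s`. Unlike
`powDeriv p`, it is Lipschitz near the origin also when `p < 2`. -/
noncomputable def truncPowDeriv (p s : ℝ) : ℝ := max s 1 ^ (p - 1) - max (-s) 1 ^ (p - 1)

theorem powDeriv_neg (p s : ℝ) : powDeriv p (-s) = -powDeriv p s := by
  rw [powDeriv, powDeriv, abs_neg, mul_neg]

theorem truncPowDeriv_neg (p s : ℝ) : truncPowDeriv p (-s) = -truncPowDeriv p s := by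
  rw [truncPowDeriv, truncPowDeriv, neg_neg, neg_sub]

theorem truncPowDeriv_eq_zero (p : ℝ) {s : ℝ} (hs : |s| ≤ 1) : truncPowDeriv p s = 0 := by
  obtain ⟨hs1, hs2⟩ := abs_le.1 hs
  rw [truncPowDeriv, max_eq_right hs2, max_eq_right (by linarith), sub_self]

theorem truncPowDeriv_of_one_le (p : ℝ) {s : ℝ} (hs : 1 ≤ s) :
    truncPowDeriv p s = s ^ (p - 1) - 1 := by
  rw [truncPowDeriv, max_eq_left hs, max_eq_right (by linarith), Real.one_rpow]

theorem locallyLipschitz_truncPowDeriv (p : ℝ) : LocallyLipschitz (truncPowDeriv p) := by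
  have hpow : LocallyLipschitz fun s : ℝ => max s 1 ^ (p - 1) := fun s => by
    have hpos : max s 1 ≠ 0 := (lt_max_of_lt_right one_pos).ne'
    obtain ⟨K, t, ht, hK⟩ :=
      (Real.contDiffAt_rpow_const_of_ne (p := p - 1) (n := 1) hpos).exists_lipschitzOnWith
    have hmax : LipschitzWith 1 fun s : ℝ => max s 1 := LipschitzWith.id.max_const 1
    exact ⟨K * 1, _, hmax.continuous.continuousAt ht, hK.comp hmax.lipschitzOnWith fun _ h => h⟩
  exact hpow.sub (hpow.comp (LipschitzWith.id.neg.locallyLipschitz))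

section PowDeriv

variable {p : ℝ}

theorem hasDerivAt_abs_rpow_div (hp : 1 < p) (s : ℝ) :
    HasDerivAt (fun s => |s| ^ p / p) (powDeriv p s) s := by
  have hp0 : p ≠ 0 := by positivity
  refine ((hasDerivAt_abs_rpow s hp).div_const p).congr_deriv ?_
  rw [powDeriv]
  field_simp

theorem powDeriv_of_nonneg (hp : 1 < p) {s : ℝ} (hs : 0 ≤ s) : powDeriv p s = s ^ (p - 1) := by
  rw [powDeriv, abs_of_nonneg hs, ← Real.rpow_add_one' hs (by linarith)]
  congr 1
  ring

theorem abs_powDeriv (hp : 1 < p) (s : ℝ) : |powDeriv p s| = |s| ^ (p - 1) := by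
  rw [← powDeriv_of_nonneg hp (abs_nonneg s), powDeriv, powDeriv, abs_mul, abs_abs,
    abs_of_nonneg (by positivity)]

theorem powDeriv_sq (hp : 1 < p) (s : ℝ) : powDeriv p s ^ 2 = |s| ^ (2 * (p - 1)) := by
  rw [← sq_abs, abs_powDeriv hp, mul_comm, Real.rpow_mul (abs_nonneg s), Real.rpow_two]

theorem continuous_powDeriv (hp : 1 < p) : Continuous (powDeriv p) := by
  have hIci : ContinuousOn (powDeriv p) (Set.Ici 0) :=
    (Real.continuous_rpow_const (by linarith)).continuousOn.congr fun s hs =>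
      powDeriv_of_nonneg hp hs
  have hIic : ContinuousOn (powDeriv p) (Set.Iic 0) := by
    refine (hIci.comp continuousOn_neg fun s (hs : s ≤ 0) => neg_nonneg.2 hs).neg.congr
      fun s _ => ?_
    rw [Pi.neg_apply, Function.comp_apply, powDeriv_neg, neg_neg]
  rw [← continuousOn_univ, ← Set.Iic_union_Ici (a := (0 : ℝ))]
  exact hIic.union_of_isClosed hIci isClosed_Iic isClosed_Ici

theorem monotone_powDeriv (hp : 1 < p) : Monotone (powDeriv p) := by
  have hIci : MonotoneOn (powDeriv p) (Set.Ici 0) := fun a ha b hb hab => by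
    rw [powDeriv_of_nonneg hp ha, powDeriv_of_nonneg hp hb]
    exact Real.rpow_le_rpow ha hab (by linarith)
  have hIic : MonotoneOn (powDeriv p) (Set.Iic 0) := fun a ha b hb hab => by
    have := hIci (Set.mem_Ici.2 (neg_nonneg.2 hb)) (Set.mem_Ici.2 (neg_nonneg.2 ha))
      (neg_le_neg hab)
    rwa [powDeriv_neg, powDeriv_neg, neg_le_neg_iff] at this
  exact hIic.Iic_union_Ici hIci

theorem abs_powDeriv_sub_truncPowDeriv_le (hp : 1 < p) (s : ℝ) :
    |powDeriv p s - truncPowDeriv p s| ≤ 1 := by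
  rcases le_total |s| 1 with hs | hs
  · rw [truncPowDeriv_eq_zero p hs, sub_zero, abs_powDeriv hp]
    exact Real.rpow_le_one (abs_nonneg s) hs (by linarith)
  · have hpos {s : ℝ} (hs : 1 ≤ s) : |powDeriv p s - truncPowDeriv p s| = 1 := by
      rw [powDeriv_of_nonneg hp (by linarith), truncPowDeriv_of_one_le p hs, _root_.sub_sub_cancel,
        abs_one]
    rcases le_abs.1 hs with hs | hs
    · exact (hpos hs).le
    · rw [← hpos hs, powDeriv_neg, truncPowDeriv_neg, ← abs_neg (_ - _)]
      exact le_of_eq (by ring_nf)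

theorem mul_truncPowDeriv_nonneg (hp : 1 < p) (s : ℝ) : 0 ≤ s * truncPowDeriv p s := by
  have hmono : Monotone (truncPowDeriv p) := fun a b hab => by
    have : 0 ≤ p - 1 := by linarith
    have hneg : -b ≤ -a := neg_le_neg hab
    unfold truncPowDeriv
    gcongr
  have hzero : truncPowDeriv p 0 = 0 := truncPowDeriv_eq_zero p (by simp)
  rcases le_total 0 s with hs | hs
  · exact mul_nonneg hs (hzero.symm.trans_le (hmono hs))
  · exact mul_nonneg_of_nonpos_of_nonpos hs ((hmono hs).trans_eq hzero)

theorem deriv_truncPowDeriv_le (hp : 1 < p) {s : ℝ} (hs : |s| ≠ 1) :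
    deriv (truncPowDeriv p) s ≤ (p - 1) * |powDeriv p s| := by
  rw [abs_powDeriv hp]
  rcases hs.lt_or_gt with hlt | hgt
  · have heq : truncPowDeriv p =ᶠ[𝓝 s] fun _ => 0 := by
      filter_upwards [continuous_abs.continuousAt.eventually_lt continuousAt_const hlt] with t ht
      exact truncPowDeriv_eq_zero p (le_of_lt ht)
    rw [heq.deriv_eq, deriv_const]
    exact mul_nonneg (by linarith) (by positivity)
  · have hpos {s : ℝ} (hs : 1 < s) : deriv (truncPowDeriv p) s ≤ (p - 1) * s ^ (p - 1) := by
      have heq : truncPowDeriv p =ᶠ[𝓝 s] fun t => t ^ (p - 1) - 1 := by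
        filter_upwards [lt_mem_nhds hs] with t ht using truncPowDeriv_of_one_le p ht.le
      rw [heq.deriv_eq, deriv_sub_const,
        (Real.hasDerivAt_rpow_const (p := p - 1) (.inl (by linarith))).deriv]
      gcongr
      · exact hs.le
      · linarith
    rcases lt_abs.1 hgt with hs | hs
    · rw [abs_of_pos (by linarith)]
      exact hpos hs
    · have hodd : truncPowDeriv p = fun t => -truncPowDeriv p (-t) :=
        funext fun t => by rw [truncPowDeriv_neg, neg_neg]
      rw [abs_of_neg (by linarith), hodd, deriv.fun_neg, deriv_comp_neg, neg_neg]
      exact hpos hs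

theorem isLipschitzSubstitute_truncPowDeriv (hp : 1 < p) :
    IsLipschitzSubstitute (powDeriv p) (truncPowDeriv p) 1 (p - 1) where
  locallyLipschitz := locallyLipschitz_truncPowDeriv p
  abs_sub_le := abs_powDeriv_sub_truncPowDeriv_le hp
  sign := mul_truncPowDeriv_nonneg hp
  deriv_le := by
    filter_upwards [(Set.toFinite {1, -1}).countable.ae_notMem volume] with s hs
    exact deriv_truncPowDeriv_le hp fun h => hs (by simpa using eq_or_eq_neg_of_abs_eq h)

theorem continuous_abs_rpow_div (hp : 1 < p) : Continuous fun s : ℝ => |s| ^ p / p :=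
  continuous_iff_continuousAt.2 fun s => (hasDerivAt_abs_rpow_div hp s).continuousAt

theorem integrable_exp_neg_abs_rpow_div (hp : 1 < p) :
    Integrable fun s : ℝ => Real.exp (-(|s| ^ p / p)) := by
  have hp0 : 0 < p := by linarith
  refine .of_integral_ne_zero (ne_of_gt ?_)
  rw [integral_comp_abs (f := fun s => Real.exp (-(s ^ p / p)))]
  have hexponent (s : ℝ) : -(s ^ p / p) = -(1 / p) * s ^ p := by ring
  simp only [hexponent]
  rw [integral_exp_neg_mul_rpow hp0 (by positivity)]
  have := Real.Gamma_pos_of_pos (s := 1 / p + 1) (by positivity)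
  positivity

theorem lambdaLip_nuP (hp : 1 < p) (n k : ℕ) :
    lambdaLip (nuP n p) k = lambdaLip (gibbs (Fin n) fun s => |s| ^ p / p) k := by
  have hdensity : (volume.withDensity fun x : EuclideanSpace ℝ (Fin n) =>
      ENNReal.ofReal (Real.exp (-(∑ i, |x i| ^ p) / p))) = gibbs (Fin n) fun s => |s| ^ p / p := by
    simp only [gibbs, neg_div, Finset.sum_div]
  have := isFiniteMeasure_gibbs (ι := Fin n) (continuous_abs_rpow_div hp)
    (integrable_exp_neg_abs_rpow_div hp)
  have := isOpenPosMeasure_gibbs (ι := Fin n) (continuous_abs_rpow_div hp)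
  rw [nuP, hdensity]
  exact lambdaLip_smul (ENNReal.inv_ne_zero.2 (measure_ne_top _ _))
    (ENNReal.inv_ne_top.2 (isOpen_univ.measure_pos _ Set.univ_nonempty).ne') _ k

end PowDeriv

/-- The index of a cell `[j * l, (j + 1) * l)` counted from the origin, so that the cells `j`
and `-1 - j` have the same index. -/
def cellIndex : ℤ → ℕ
  | Int.ofNat k => k
  | Int.negSucc k => k

theorem abs_mem_Icc_cellIndex {l : ℝ} (hl : 0 < l) (s : ℝ) :
    |s| ∈ Set.Icc (cellIndex ⌊s / l⌋ * l) ((cellIndex ⌊s / l⌋ + 1) * l) := by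
  have hlower : ⌊s / l⌋ * l ≤ s := (le_div_iff₀ hl).1 (Int.floor_le _)
  have hupper : s < (⌊s / l⌋ + 1) * l := (div_lt_iff₀ hl).1 (Int.lt_floor_add_one _)
  generalize ⌊s / l⌋ = j at hlower hupper ⊢
  rcases j with k | k
  all_goals have hk : 0 ≤ k * l := by positivity
  · simp only [Int.ofNat_eq_natCast, Int.cast_natCast] at hlower hupper
    rw [abs_of_nonneg (by linarith)]
    constructor <;> simp only [cellIndex] <;> linarith
  · simp only [Int.cast_negSucc, Nat.cast_add, Nat.cast_one] at hlower hupper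
    rw [abs_of_nonpos (by linarith)]
    constructor <;> simp only [cellIndex] <;> linarith

/-- The infimum (`σ = 0`) or the supremum (`σ = 1`) of `powDeriv p ^ 2 / 4` over the `j`-th cell of
length `l`. -/
noncomputable def cellPotential (p l : ℝ) (σ : ℕ) (j : ℤ) : ℝ :=
  ((cellIndex j + σ) * l) ^ (2 * (p - 1)) / 4

theorem cellPotential_nonneg (p : ℝ) {l : ℝ} (hl : 0 < l) (σ : ℕ) (j : ℤ) :
    0 ≤ cellPotential p l σ j := by
  unfold cellPotential
  positivity

theorem cellPotential_zero_le {p l : ℝ} (hp : 1 < p) (hl : 0 < l) (s : ℝ) :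
    cellPotential p l 0 ⌊s / l⌋ ≤ powDeriv p s ^ 2 / 4 := by
  rw [cellPotential, powDeriv_sq hp, Nat.cast_zero, add_zero]
  have : 0 ≤ 2 * (p - 1) := by linarith
  gcongr
  exact (abs_mem_Icc_cellIndex hl s).1

theorem le_cellPotential_one {p l : ℝ} (hp : 1 < p) (hl : 0 < l) (s : ℝ) :
    powDeriv p s ^ 2 / 4 ≤ cellPotential p l 1 ⌊s / l⌋ := by
  rw [cellPotential, powDeriv_sq hp, Nat.cast_one]
  have : 0 ≤ 2 * (p - 1) := by linarith
  gcongr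
  exact (abs_mem_Icc_cellIndex hl s).2

/-! ### Lattice points in superellipsoids -/

theorem lintegral_exp_neg_eq_lintegral_measure_lt {α : Type*} [MeasurableSpace α] (μ : Measure α)
    [SFinite μ] {g : α → ℝ} (hg : Measurable g) (hg0 : ∀ᵐ y ∂μ, 0 ≤ g y) :
    ∫⁻ y, ENNReal.ofReal (Real.exp (-g y)) ∂μ =
      ∫⁻ t in Set.Ioi 0, ENNReal.ofReal (Real.exp (-t)) * μ {y | g y < t} := by
  have htail {a : ℝ} (ha : 0 ≤ a) : ENNReal.ofReal (Real.exp (-a)) =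
      ∫⁻ t in Set.Ioi 0, (Set.Ioi a).indicator (fun t => ENNReal.ofReal (Real.exp (-t))) t := by
    rw [lintegral_indicator measurableSet_Ioi, Measure.restrict_restrict measurableSet_Ioi,
      Set.Ioi_inter_Ioi, sup_of_le_left ha, ← integral_exp_neg_Ioi a,
      ofReal_integral_eq_lintegral_ofReal (integrableOn_exp_neg_Ioi a)
        (.of_forall fun _ => (Real.exp_pos _).le)]
  have hmeas : Measurable fun q : α × ℝ =>
      {q : α × ℝ | g q.1 < q.2}.indicator (fun q => ENNReal.ofReal (Real.exp (-q.2))) q :=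
    Measurable.indicator (by fun_prop) (measurableSet_lt (by fun_prop) (by fun_prop))
  calc ∫⁻ y, ENNReal.ofReal (Real.exp (-g y)) ∂μ
      = ∫⁻ y, (∫⁻ t in Set.Ioi 0,
          (Set.Ioi (g y)).indicator (fun t => ENNReal.ofReal (Real.exp (-t))) t) ∂μ :=
        lintegral_congr_ae (hg0.mono fun _ => htail)
    _ = ∫⁻ t in Set.Ioi 0, ∫⁻ y,
          {y | g y < t}.indicator (fun _ => ENNReal.ofReal (Real.exp (-t))) y ∂μ :=
        lintegral_lintegral_swap hmeas.aemeasurable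
    _ = ∫⁻ t in Set.Ioi 0, ENNReal.ofReal (Real.exp (-t)) * μ {y | g y < t} := by
        simp only [lintegral_indicator_const (measurableSet_lt hg measurable_const)]

section LatticePoints

open scoped Pointwise

variable {ι : Type*} {S : Set (ι → ℝ)}

theorem image_natCast_div_eq_inter_inv_smul_lattice [Finite ι] {x : ℝ}
    (hS : ∀ y ∈ S, ∀ i, 0 ≤ y i) (hx : 0 < x) :
    (fun (z : ι → ℕ) i => (z i : ℝ) / x) '' {z | (fun i => (z i : ℝ) / x) ∈ S} =
      S ∩ x⁻¹ • (Submodule.span ℤ (Set.range (Pi.basisFun ℝ ι)) : Set (ι → ℝ)) := by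
  have hlattice (y : ι → ℝ) : y ∈ x⁻¹ • (Submodule.span ℤ (Set.range (Pi.basisFun ℝ ι)) :
      Set (ι → ℝ)) ↔ ∀ i, ∃ k : ℤ, (k : ℝ) = x * y i := by
    rw [Set.mem_inv_smul_set_iff₀ hx.ne', SetLike.mem_coe, Module.Basis.mem_span_iff_repr_mem]
    simp
  ext y
  rw [Set.mem_inter_iff, hlattice]
  constructor
  · rintro ⟨z, hz, rfl⟩
    exact ⟨hz, fun i => ⟨z i, by simp only [Int.cast_natCast]; field_simp⟩⟩
  · rintro ⟨hy, hint⟩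
    choose k hk using hint
    have hdiv : (fun i => (((k i).toNat : ℕ) : ℝ) / x) = y := by
      ext i
      have hk0 : 0 ≤ k i := by
        have : (0 : ℝ) ≤ k i := hk i ▸ mul_nonneg hx.le (hS y hy i)
        exact_mod_cast this
      have htoNat : (((k i).toNat : ℕ) : ℝ) = k i := by exact_mod_cast Int.toNat_of_nonneg hk0
      rw [htoNat, hk]
      field_simp
    exact ⟨fun i => (k i).toNat, by rwa [Set.mem_ofPred_eq, hdiv], hdiv⟩

theorem tendsto_ncard_natCast_div_mem [Fintype ι] (hS : ∀ y ∈ S, ∀ i, 0 ≤ y i)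
    (hb : Bornology.IsBounded S) (hm : MeasurableSet S) (hfr : volume (frontier S) = 0)
    (hstar : ∀ y ∈ S, ∀ c : ℝ, 0 < c → c ≤ 1 → c • y ∈ S) :
    Tendsto (fun x : ℝ => ({z : ι → ℕ | (fun i => (z i : ℝ) / x) ∈ S}.ncard : ℝ) /
      x ^ Fintype.card ι) atTop (𝓝 (volume.real S)) := by
  refine (tendsto_card_div_pow_atTop_volume' S hb hm hfr fun x y hx hxy => ?_).congr' ?_
  · rintro _ ⟨w, hw, rfl⟩
    have hy := hx.trans_le hxy
    refine ⟨(x / y) • w, hstar w hw _ (by positivity) ((div_le_one hy).2 hxy), ?_⟩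
    simp only [smul_smul]
    congr 1
    field_simp
  · filter_upwards [eventually_gt_atTop 0] with x hx
    have hinj : Function.Injective fun (z : ι → ℕ) i => (z i : ℝ) / x := fun z w h =>
      funext fun i => by exact_mod_cast (div_left_inj' hx.ne').1 (congrFun h i)
    rw [Nat.card_coe_set_eq, ← image_natCast_div_eq_inter_inv_smul_lattice hS hx,
      Set.ncard_image_of_injective _ hinj]

end LatticePoints

theorem Gamma_one_div_add_one_pos {a : ℝ} (ha : 0 < a) : 0 < Real.Gamma (1 / a + 1) :=
  Real.Gamma_pos_of_pos (by positivity)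

theorem isOpen_posOrthant {ι : Type*} [Finite ι] : IsOpen {y : ι → ℝ | ∀ i, 0 < y i} := by
  simp only [Set.ofPred_forall]
  exact isOpen_iInter_of_finite fun i => isOpen_lt continuous_const (continuous_apply i)

section Superellipsoid

variable {ι : Type*} [Fintype ι] {r : ι → ℝ}

/-- The sum of powers `∑ y i ^ r i`, whose sublevel sets in the orthant are superellipsoids. -/
noncomputable def powSum (r y : ι → ℝ) : ℝ := ∑ i, y i ^ r i

/-- The open superellipsoid of level `t` in the open positive orthant. -/
def openSuperellipsoid (r : ι → ℝ) (t : ℝ) : Set (ι → ℝ) := {y | (∀ i, 0 < y i) ∧ powSum r y < t}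

/-- The closed superellipsoid of level `1` in the closed positive orthant. -/
def closedSuperellipsoid (r : ι → ℝ) : Set (ι → ℝ) := {y | (∀ i, 0 ≤ y i) ∧ powSum r y ≤ 1}

/-- The volume `∏ Γ(1 / r i + 1) / Γ(∑ 1 / r i + 1)` of the superellipsoid of level `1`. -/
noncomputable def superellipsoidVolume (r : ι → ℝ) : ℝ :=
  (∏ i, Real.Gamma (1 / r i + 1)) / Real.Gamma ((∑ i, 1 / r i) + 1)

theorem openSuperellipsoid_subset_closedSuperellipsoid :
    openSuperellipsoid r 1 ⊆ closedSuperellipsoid r :=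
  fun _ hy => ⟨fun i => (hy.1 i).le, hy.2.le⟩

theorem sum_one_div_nonneg (hr : ∀ i, 0 < r i) : 0 ≤ ∑ i, 1 / r i :=
  Finset.sum_nonneg fun i _ => (one_div_pos.2 (hr i)).le

theorem superellipsoidVolume_pos (hr : ∀ i, 0 < r i) : 0 < superellipsoidVolume r :=
  div_pos (Finset.prod_pos fun i _ => Gamma_one_div_add_one_pos (hr i))
    (Real.Gamma_pos_of_pos (by linarith [sum_one_div_nonneg hr]))

theorem continuous_powSum (hr : ∀ i, 0 < r i) : Continuous (powSum r) :=
  continuous_finsetSum _ fun i _ =>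
    (Real.continuous_rpow_const (hr i).le).comp (continuous_apply i)

theorem powSum_smul_le (hr : ∀ i, 0 < r i) {y : ι → ℝ} (hy : ∀ i, 0 ≤ y i) {c : ℝ}
    (hc0 : 0 < c) (hc1 : c ≤ 1) :
    powSum r (c • y) ≤ powSum r y :=
  Finset.sum_le_sum fun i _ => Real.rpow_le_rpow (mul_nonneg hc0.le (hy i))
    (mul_le_of_le_one_left (hy i) hc1) (hr i).le

theorem isOpen_openSuperellipsoid (hr : ∀ i, 0 < r i) (t : ℝ) : IsOpen (openSuperellipsoid r t) :=
  isOpen_posOrthant.inter (isOpen_lt (continuous_powSum hr) continuous_const)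

theorem isClosed_closedSuperellipsoid (hr : ∀ i, 0 < r i) : IsClosed (closedSuperellipsoid r) := by
  refine IsClosed.inter (s₁ := {y : ι → ℝ | ∀ i, 0 ≤ y i}) ?_
    (isClosed_le (continuous_powSum hr) continuous_const)
  simp only [Set.ofPred_forall]
  exact isClosed_iInter fun i => isClosed_le continuous_const (continuous_apply i)

theorem closedSuperellipsoid_subset_Icc (hr : ∀ i, 0 < r i) :
    closedSuperellipsoid r ⊆ Set.Icc 0 1 := by
  refine fun y hy => ⟨hy.1, fun i => not_lt.1 fun h => ?_⟩
  have hle : y i ^ r i ≤ 1 := (Finset.single_le_sum (f := fun i => y i ^ r i)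
    (fun j _ => Real.rpow_nonneg (hy.1 j) _) (Finset.mem_univ i)).trans hy.2
  exact hle.not_gt (Real.one_lt_rpow h (hr i))

theorem volume_openSuperellipsoid_eq_mul (hr : ∀ i, 0 < r i) {t : ℝ} (ht : 0 < t) :
    volume (openSuperellipsoid r t) =
      ENNReal.ofReal (t ^ ∑ i, 1 / r i) * volume (openSuperellipsoid r 1) := by
  classical
  let D : ι → ℝ := fun i => t ^ (1 / r i)
  have hD (i : ι) : 0 < D i := Real.rpow_pos_of_pos ht _
  have hdet : (Matrix.diagonal D).det = t ^ ∑ i, 1 / r i := by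
    rw [Matrix.det_diagonal, Real.rpow_sum_of_pos ht]
  have hdet_pos : 0 < t ^ ∑ i, 1 / r i := Real.rpow_pos_of_pos ht _
  have hpreimage : Matrix.toLin' (Matrix.diagonal D) ⁻¹' openSuperellipsoid r t =
      openSuperellipsoid r 1 := by
    ext y
    have happly (i : ι) : Matrix.toLin' (Matrix.diagonal D) y i = D i * y i := by
      simp [Matrix.toLin'_apply, Matrix.mulVec_diagonal]
    simp only [Set.mem_preimage, openSuperellipsoid, Set.mem_ofPred_eq, powSum, happly,
      mul_pos_iff_of_pos_left (hD _)]
    refine and_congr_right fun hy => ?_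
    have hsum : ∑ i, (D i * y i) ^ r i = t * ∑ i, y i ^ r i := by
      rw [Finset.mul_sum]
      refine Finset.sum_congr rfl fun i _ => ?_
      rw [Real.mul_rpow (hD i).le (hy i).le, ← Real.rpow_mul ht.le,
        one_div_mul_cancel (hr i).ne', Real.rpow_one]
    rw [hsum, mul_lt_iff_lt_one_right ht]
  have hscale := Real.smul_map_diagonal_volume_pi (D := D) (by rw [hdet]; exact hdet_pos.ne')
  rw [hdet, abs_of_pos hdet_pos] at hscale
  conv_lhs => rw [← hscale]
  rw [Measure.smul_apply, smul_eq_mul, Measure.map_apply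
    (LinearMap.continuous_on_pi _).measurable (isOpen_openSuperellipsoid hr t).measurableSet,
    hpreimage]

theorem lintegral_posOrthant_exp_neg_powSum (hr : ∀ i, 0 < r i) :
    ∫⁻ y in {y : ι → ℝ | ∀ i, 0 < y i}, ENNReal.ofReal (Real.exp (-powSum r y)) =
      ENNReal.ofReal (∏ i, Real.Gamma (1 / r i + 1)) := by
  have hprod := integral_fintype_prod_eq_prod
    (μ := fun _ : ι => volume.restrict (Set.Ioi (0 : ℝ))) fun i s => Real.exp (-s ^ r i)
  simp only [integral_exp_neg_rpow (hr _), ← Real.exp_sum, Finset.sum_neg_distrib] at hprod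
  have hrestrict : volume.restrict {y : ι → ℝ | ∀ i, 0 < y i} =
      Measure.pi fun _ : ι => volume.restrict (Set.Ioi (0 : ℝ)) := by
    rw [← Measure.restrict_pi_pi, volume_pi]
    congr 1
    ext y
    simp
  rw [hrestrict, ← hprod]
  refine (ofReal_integral_eq_lintegral_ofReal (.of_integral_ne_zero ?_)
    (.of_forall fun _ => (Real.exp_pos _).le)).symm
  exact hprod.trans_ne
    (Finset.prod_pos fun i _ => Gamma_one_div_add_one_pos (hr i)).ne'

theorem volume_openSuperellipsoid_one (hr : ∀ i, 0 < r i) :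
    volume (openSuperellipsoid r 1) = ENNReal.ofReal (superellipsoidVolume r) := by
  have hd := sum_one_div_nonneg hr
  have hGamma : 0 < Real.Gamma ((∑ i, 1 / r i) + 1) := Real.Gamma_pos_of_pos (by linarith)
  have hmeas := (continuous_powSum hr).measurable
  have hmul : ENNReal.ofReal (∏ i, Real.Gamma (1 / r i + 1)) =
      ENNReal.ofReal (Real.Gamma ((∑ i, 1 / r i) + 1)) * volume (openSuperellipsoid r 1) := by
    rw [← lintegral_posOrthant_exp_neg_powSum hr, lintegral_exp_neg_eq_lintegral_measure_lt _ hmeas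
        (ae_restrict_of_forall_mem isOpen_posOrthant.measurableSet fun y hy =>
          Finset.sum_nonneg fun i _ => Real.rpow_nonneg (hy i).le _),
      Real.Gamma_eq_integral (by linarith),
      ofReal_integral_eq_lintegral_ofReal (Real.GammaIntegral_convergent (by linarith))
        (ae_restrict_of_forall_mem measurableSet_Ioi fun t (ht : 0 < t) => by
          dsimp only [Pi.zero_apply]; positivity),
      ← lintegral_mul_const _ (by fun_prop)]
    refine setLIntegral_congr_fun measurableSet_Ioi fun t (ht : 0 < t) => ?_
    have hlevel : volume.restrict {y : ι → ℝ | ∀ i, 0 < y i} {y | powSum r y < t} =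
        volume (openSuperellipsoid r t) := by
      rw [Measure.restrict_apply (measurableSet_lt hmeas measurable_const), Set.inter_comm]
      rfl
    rw [hlevel, volume_openSuperellipsoid_eq_mul hr ht, ← mul_assoc,
      ← ENNReal.ofReal_mul (Real.exp_pos _).le, add_sub_cancel_right]
  rw [superellipsoidVolume, ENNReal.ofReal_div_of_pos hGamma, hmul, mul_comm,
    ENNReal.mul_div_cancel_right (ENNReal.ofReal_pos.2 hGamma).ne' ENNReal.ofReal_ne_top]

theorem volume_closedSuperellipsoid_le (hr : ∀ i, 0 < r i) :
    volume (closedSuperellipsoid r) ≤ volume (openSuperellipsoid r 1) := by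
  have hnull : volume (⋃ i, {y : ι → ℝ | y i = 0}) = 0 :=
    measure_iUnion_null fun i => Measure.pi_hyperplane (fun _ : ι => (volume : Measure ℝ)) i 0
  have hle {t : ℝ} (ht : 1 < t) : volume (closedSuperellipsoid r) ≤
      ENNReal.ofReal (t ^ ∑ i, 1 / r i) * volume (openSuperellipsoid r 1) := by
    rw [← volume_openSuperellipsoid_eq_mul hr (one_pos.trans ht)]
    refine (measure_mono (t := (⋃ i, {y | y i = 0}) ∪ openSuperellipsoid r t) fun y hy => ?_).trans
      ((measure_union_le _ _).trans_eq (by rw [hnull, zero_add]))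
    by_cases hpos : ∀ i, 0 < y i
    · exact .inr ⟨hpos, hy.2.trans_lt ht⟩
    · obtain ⟨i, hi⟩ := not_forall.1 hpos
      exact .inl (Set.mem_iUnion.2 ⟨i, le_antisymm (not_lt.1 hi) (hy.1 i)⟩)
  have hlim : Tendsto (fun t : ℝ => ENNReal.ofReal (t ^ ∑ i, 1 / r i)) (𝓝[>] 1) (𝓝 1) := by
    have := (ENNReal.continuous_ofReal.comp
      (Real.continuous_rpow_const (sum_one_div_nonneg hr))).tendsto 1
    simp only [Function.comp_apply, Real.one_rpow, ENNReal.ofReal_one] at this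
    exact this.mono_left nhdsWithin_le_nhds
  refine ge_of_tendsto (one_mul (volume (openSuperellipsoid r 1)) ▸ ENNReal.Tendsto.mul_const hlim
    (.inl one_ne_zero)) ?_
  filter_upwards [self_mem_nhdsWithin] with t ht using hle ht

theorem tendsto_ncard_natCast_div_mem_superellipsoid (hr : ∀ i, 0 < r i) {S : Set (ι → ℝ)}
    (hopen : openSuperellipsoid r 1 ⊆ S) (hclosed : S ⊆ closedSuperellipsoid r)
    (hm : MeasurableSet S) (hstar : ∀ y ∈ S, ∀ c : ℝ, 0 < c → c ≤ 1 → c • y ∈ S) :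
    Tendsto (fun x : ℝ => ({z : ι → ℕ | (fun i => (z i : ℝ) / x) ∈ S}.ncard : ℝ) /
      x ^ Fintype.card ι) atTop (𝓝 (superellipsoidVolume r)) := by
  have hvol : volume S = ENNReal.ofReal (superellipsoidVolume r) := by
    rw [← volume_openSuperellipsoid_one hr]
    exact le_antisymm ((measure_mono hclosed).trans (volume_closedSuperellipsoid_le hr))
      (measure_mono hopen)
  have hfrontier : volume (frontier S) = 0 := by
    refine measure_mono_null (t := closedSuperellipsoid r \ openSuperellipsoid r 1)
      (Set.sdiff_subset_sdiff (closure_minimal hclosed (isClosed_closedSuperellipsoid hr))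
        (interior_maximal hopen (isOpen_openSuperellipsoid hr 1))) ?_
    rw [measure_sdiff openSuperellipsoid_subset_closedSuperellipsoid
      (isOpen_openSuperellipsoid hr 1).measurableSet.nullMeasurableSet
      (by rw [volume_openSuperellipsoid_one hr]; exact ENNReal.ofReal_ne_top)]
    exact tsub_eq_zero_of_le (volume_closedSuperellipsoid_le hr)
  have hreal : volume.real S = superellipsoidVolume r := by
    rw [Measure.real, hvol, ENNReal.toReal_ofReal (superellipsoidVolume_pos hr).le]
  rw [← hreal]
  exact tendsto_ncard_natCast_div_mem (fun y hy => (hclosed hy).1)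
    ((Metric.isBounded_Icc 0 1).subset (hclosed.trans (closedSuperellipsoid_subset_Icc hr)))
    hm hfrontier hstar

theorem tendsto_ncard_powSum_natCast_div_le (hr : ∀ i, 0 < r i) :
    Tendsto (fun x : ℝ => ({z : ι → ℕ | powSum r (fun i => (z i : ℝ) / x) ≤ 1}.ncard : ℝ) /
      x ^ Fintype.card ι) atTop (𝓝 (superellipsoidVolume r)) := by
  refine (tendsto_ncard_natCast_div_mem_superellipsoid hr
    openSuperellipsoid_subset_closedSuperellipsoid subset_rfl
    (isClosed_closedSuperellipsoid hr).measurableSet fun y hy c hc0 hc1 =>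
      ⟨fun i => mul_nonneg hc0.le (hy.1 i), (powSum_smul_le hr hy.1 hc0 hc1).trans hy.2⟩).congr' ?_
  filter_upwards [eventually_gt_atTop 0] with x hx
  congr 3
  ext z
  exact and_iff_right fun i => by positivity

theorem tendsto_ncard_ne_zero_powSum_natCast_div_le (hr : ∀ i, 0 < r i) :
    Tendsto (fun x : ℝ =>
      ({z : ι → ℕ | (∀ i, z i ≠ 0) ∧ powSum r (fun i => (z i : ℝ) / x) ≤ 1}.ncard : ℝ) /
        x ^ Fintype.card ι) atTop (𝓝 (superellipsoidVolume r)) := by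
  refine (tendsto_ncard_natCast_div_mem_superellipsoid hr
    (S := {y | (∀ i, 0 < y i) ∧ powSum r y ≤ 1}) (fun y hy => ⟨hy.1, hy.2.le⟩)
    (fun y hy => ⟨fun i => (hy.1 i).le, hy.2⟩)
    (isOpen_posOrthant.measurableSet.inter
      (isClosed_le (continuous_powSum hr) continuous_const).measurableSet)
    fun y hy c hc0 hc1 => ⟨fun i => mul_pos hc0 (hy.1 i),
      (powSum_smul_le hr (fun i => (hy.1 i).le) hc0 hc1).trans hy.2⟩).congr' ?_
  filter_upwards [eventually_gt_atTop 0] with x hx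
  congr 3
  ext z
  refine and_congr_left fun _ => forall_congr' fun i => ?_
  rw [div_pos_iff_of_pos_right hx, Nat.cast_pos, Nat.pos_iff_ne_zero]

theorem finite_powSum_natCast_div_le (hr : ∀ i, 0 < r i) {x : ℝ} (hx : 0 < x) :
    {z : ι → ℕ | powSum r (fun i => (z i : ℝ) / x) ≤ 1}.Finite := by
  classical
  refine (Set.finite_Icc (0 : ι → ℕ) fun _ => ⌊x⌋₊).subset fun z hz =>
    ⟨fun i => Nat.zero_le _, fun i => Nat.le_floor ((div_le_one hx).1 ?_)⟩
  exact (closedSuperellipsoid_subset_Icc hr (show (fun i => (z i : ℝ) / x) ∈ _ from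
    ⟨fun i => by positivity, hz⟩)).2 i

end Superellipsoid

/-! ### Counting the cube modes -/

theorem eq_of_cellIndex_eq {j k : ℤ} (hindex : cellIndex j = cellIndex k)
    (hsign : 0 ≤ j ↔ 0 ≤ k) : j = k := by
  rcases j with j | j <;> rcases k with k | k <;> simp_all [cellIndex]

theorem exists_cellIndex_eq (b : Bool) (k : ℕ) : ∃ j : ℤ, decide (0 ≤ j) = b ∧ cellIndex j = k := by
  cases b
  · exact ⟨Int.negSucc k, by simp, rfl⟩
  · exact ⟨Int.ofNat k, by simp, rfl⟩

section ModeIndex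

variable {ι : Type*}

/-- The lattice point of a cube mode `α`: the cell indices, shifted by `σ` as in `cellPotential`,
followed by the frequencies. -/
def modeIndex (σ : ℕ) (α : ι → ℤ × ℕ) : ι ⊕ ι → ℕ :=
  Sum.elim (fun i => cellIndex (α i).1 + σ) fun i => (α i).2

/-- The lattice point `modeIndex σ α` together with the sides of the origin on which the cells of
`α` lie. -/
def signedModeIndex (σ : ℕ) (α : ι → ℤ × ℕ) : (ι → Bool) × (ι ⊕ ι → ℕ) :=
  (fun i => decide (0 ≤ (α i).1), modeIndex σ α)

theorem signedModeIndex_injective (σ : ℕ) :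
    Function.Injective (signedModeIndex σ : (ι → ℤ × ℕ) → _) := by
  intro α β h
  obtain ⟨hsign, hindex⟩ := Prod.ext_iff.1 h
  funext i
  refine Prod.ext (eq_of_cellIndex_eq (Nat.add_right_cancel (congrFun hindex (Sum.inl i))) ?_)
    (congrFun hindex (Sum.inr i))
  exact decide_eq_decide.1 (congrFun hsign i)

variable {σ : ℕ} {Z : Set (ι ⊕ ι → ℕ)}

theorem image_signedModeIndex_preimage (hZ : ∀ z ∈ Z, ∀ i, σ ≤ z (Sum.inl i)) :
    signedModeIndex σ '' (modeIndex σ ⁻¹' Z) = Set.univ ×ˢ Z := by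
  ext ⟨b, z⟩
  constructor
  · rintro ⟨α, hα, hαz⟩
    obtain ⟨-, rfl⟩ := Prod.ext_iff.1 hαz
    exact ⟨trivial, hα⟩
  · rintro ⟨-, hz⟩
    choose j hsign hindex using fun i => exists_cellIndex_eq (b i) (z (Sum.inl i) - σ)
    have hmode : modeIndex σ (fun i => (j i, z (Sum.inr i))) = z := by
      funext i
      rcases i with i | i
      · simp only [modeIndex, Sum.elim_inl, hindex, Nat.sub_add_cancel (hZ z hz i)]
      · rfl
    exact ⟨fun i => (j i, z (Sum.inr i)), hmode.symm ▸ hz, Prod.ext (funext hsign) hmode⟩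

theorem ncard_modeIndex_preimage [Fintype ι] (hZ : ∀ z ∈ Z, ∀ i, σ ≤ z (Sum.inl i)) :
    (modeIndex σ ⁻¹' Z).ncard = 2 ^ Fintype.card ι * Z.ncard := by
  classical
  rw [← Set.ncard_image_of_injective _ (signedModeIndex_injective σ),
    image_signedModeIndex_preimage hZ, Set.ncard_prod, Set.ncard_univ, Nat.card_eq_fintype_card,
    Fintype.card_fun, Fintype.card_bool]

theorem finite_modeIndex_preimage [Finite ι] (hZ : ∀ z ∈ Z, ∀ i, σ ≤ z (Sum.inl i))
    (hfin : Z.Finite) : (modeIndex σ ⁻¹' Z).Finite := by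
  refine Set.Finite.of_finite_image ?_ (signedModeIndex_injective σ).injOn
  rw [image_signedModeIndex_preimage hZ]
  exact Set.finite_univ.prod hfin

end ModeIndex

section Scaling

variable {p Λ : ℝ}

/-- The number of lattice steps in which `|s| ^ (p - 1) / 2 = √Λ` or the frequency `√Λ` is reached
when the cells have length `cellLength p Λ`. -/
noncomputable def latticeScale (p Λ : ℝ) : ℝ :=
  √((4 * Λ) ^ (1 / (2 * (p - 1))) * √Λ / Real.pi)

/-- The length of the cells used at energy `Λ`, chosen so that the level of a cube mode rescales
isotropically: see `boxLevel_eq_mul_powSum`. -/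
noncomputable def cellLength (p Λ : ℝ) : ℝ :=
  (4 * Λ) ^ (1 / (2 * (p - 1))) / latticeScale p Λ

theorem latticeScale_pos (p : ℝ) (hΛ : 0 < Λ) : 0 < latticeScale p Λ := by
  have := Real.pi_pos
  unfold latticeScale
  positivity

theorem latticeScale_sq (p : ℝ) (hΛ : 0 < Λ) :
    latticeScale p Λ ^ 2 = (4 * Λ) ^ (1 / (2 * (p - 1))) * √Λ / Real.pi :=
  Real.sq_sqrt (by have := Real.pi_pos; positivity)

theorem cellLength_pos (p : ℝ) (hΛ : 0 < Λ) : 0 < cellLength p Λ := by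
  have := latticeScale_pos p hΛ
  unfold cellLength
  positivity

theorem pi_div_cellLength (p : ℝ) (hΛ : 0 < Λ) :
    Real.pi / cellLength p Λ = √Λ / latticeScale p Λ := by
  have hx := latticeScale_pos p hΛ
  have hpow : 0 < (4 * Λ) ^ (1 / (2 * (p - 1))) := by positivity
  rw [cellLength, div_div_eq_mul_div, div_eq_div_iff hpow.ne' hx.ne', mul_assoc, ← sq,
    latticeScale_sq p hΛ, mul_div_cancel₀ _ Real.pi_ne_zero, mul_comm]

theorem tendsto_latticeScale (hp : 1 < p) : Tendsto (latticeScale p) atTop atTop := by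
  have hexp : 0 < 1 / (2 * (p - 1)) := by
    have : 0 < p - 1 := by linarith
    positivity
  exact Real.tendsto_sqrt_atTop.comp <| Tendsto.atTop_div_const Real.pi_pos <|
    Tendsto.atTop_mul_atTop₀ ((tendsto_rpow_atTop hexp).comp
      (tendsto_id.const_mul_atTop (by norm_num))) Real.tendsto_sqrt_atTop

theorem cellPotential_cellLength (hp : 1 < p) (hΛ : 0 < Λ) (σ : ℕ) (j : ℤ) :
    cellPotential p (cellLength p Λ) σ j =
      Λ * (((cellIndex j + σ : ℕ) : ℝ) / latticeScale p Λ) ^ (2 * (p - 1)) := by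
  have := latticeScale_pos p hΛ
  have hpow : 0 ≤ (4 * Λ) ^ (1 / (2 * (p - 1))) := by positivity
  rw [cellPotential, cellLength, ← Nat.cast_add, mul_div_left_comm,
    Real.mul_rpow hpow (by positivity), ← Real.rpow_mul (by positivity),
    one_div_mul_cancel (by linarith), Real.rpow_one]
  ring

theorem frequency_cellLength_sq (p : ℝ) (hΛ : 0 < Λ) (m : ℕ) :
    (m * Real.pi / cellLength p Λ) ^ 2 = Λ * ((m : ℝ) / latticeScale p Λ) ^ (2 : ℝ) := by
  rw [mul_div_assoc, pi_div_cellLength p hΛ, Real.rpow_two, mul_pow, div_pow, div_pow,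
    Real.sq_sqrt hΛ.le]
  ring

/-- The exponents of the superellipsoid of admissible lattice points: `2 (p - 1)` for the cell
indices and `2` for the frequencies. -/
def modeExponent (ι : Type*) (p : ℝ) : ι ⊕ ι → ℝ := Sum.elim (fun _ => 2 * (p - 1)) fun _ => 2

theorem modeExponent_pos {ι : Type*} (hp : 1 < p) : ∀ i, 0 < modeExponent ι p i := by
  rintro (_ | _)
  · simp only [modeExponent, Sum.elim_inl]
    linarith
  · simp [modeExponent]

theorem boxLevel_eq_mul_powSum {ι : Type*} [Fintype ι] (hp : 1 < p) (hΛ : 0 < Λ) (σ : ℕ)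
    (α : ι → ℤ × ℕ) : boxLevel (cellLength p Λ) (cellPotential p (cellLength p Λ) σ) α =
      Λ * powSum (modeExponent ι p) fun i => (modeIndex σ α i : ℝ) / latticeScale p Λ := by
  simp only [boxLevel, powSum, modeExponent, modeIndex, Fintype.sum_sum_type, Sum.elim_inl,
    Sum.elim_inr, cellPotential_cellLength hp hΛ, frequency_cellLength_sq p hΛ,
    Finset.sum_add_distrib, mul_add, Finset.mul_sum]

end Scaling

section Modes

variable {ι : Type*} [Fintype ι] {p Λ : ℝ}

/-- The Neumann modes on the cubes of side `cellLength p Λ` whose level, computed with the minimum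
of the potential on each cube, is at most `Λ`. -/
def neumannModes (ι : Type*) [Fintype ι] (p Λ : ℝ) : Set (ι → ℤ × ℕ) :=
  {α | boxLevel (cellLength p Λ) (cellPotential p (cellLength p Λ) 0) α ≤ Λ}

/-- The Dirichlet modes on the cubes of side `cellLength p Λ` whose level, computed with the maximum
of the potential on each cube, is at most `Λ`. -/
def dirichletModes (ι : Type*) [Fintype ι] (p Λ : ℝ) : Set (ι → ℤ × ℕ) :=
  {α | (∀ i, (α i).2 ≠ 0) ∧
    boxLevel (cellLength p Λ) (cellPotential p (cellLength p Λ) 1) α ≤ Λ}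

theorem neumannModes_eq_preimage (hp : 1 < p) (hΛ : 0 < Λ) :
    neumannModes ι p Λ = modeIndex 0 ⁻¹'
      {z | powSum (modeExponent ι p) (fun i => (z i : ℝ) / latticeScale p Λ) ≤ 1} := by
  ext α
  simp only [neumannModes, boxLevel_eq_mul_powSum hp hΛ, Set.mem_ofPred_eq, Set.mem_preimage,
    mul_le_iff_le_one_right hΛ]

theorem dirichletModes_eq_preimage (hp : 1 < p) (hΛ : 0 < Λ) :
    dirichletModes ι p Λ = modeIndex 1 ⁻¹' {z | (∀ i, z i ≠ 0) ∧
      powSum (modeExponent ι p) (fun i => (z i : ℝ) / latticeScale p Λ) ≤ 1} := by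
  ext α
  simp only [dirichletModes, boxLevel_eq_mul_powSum hp hΛ, Set.mem_ofPred_eq, Set.mem_preimage,
    mul_le_iff_le_one_right hΛ]
  simp [modeIndex]

theorem finite_neumannModes (hp : 1 < p) (hΛ : 0 < Λ) : (neumannModes ι p Λ).Finite := by
  rw [neumannModes_eq_preimage hp hΛ]
  exact finite_modeIndex_preimage (fun _ _ _ => Nat.zero_le _)
    (finite_powSum_natCast_div_le (modeExponent_pos hp) (latticeScale_pos p hΛ))

theorem finite_dirichletModes (hp : 1 < p) (hΛ : 0 < Λ) : (dirichletModes ι p Λ).Finite := by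
  rw [dirichletModes_eq_preimage hp hΛ]
  exact finite_modeIndex_preimage (fun _ hz i => Nat.one_le_iff_ne_zero.2 (hz.1 _))
    ((finite_powSum_natCast_div_le (modeExponent_pos hp) (latticeScale_pos p hΛ)).subset
      fun _ hz => hz.2)

end Modes

section WeylConstant

variable {n : ℕ} {p : ℝ}

/-- The growth exponent of the eigenvalue counting function. -/
noncomputable def weylExponent (n : ℕ) (p : ℝ) : ℝ := (n / 2 : ℝ) * p / (p - 1)

/-- The leading coefficient of the eigenvalue counting function. -/
noncomputable def weylConstant (n : ℕ) (p : ℝ) : ℝ :=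
  (2 : ℝ) ^ ((n : ℝ) / (p - 1)) * Real.Gamma (1 / (2 * (p - 1)) + 1) ^ n /
    (Real.pi ^ ((n : ℝ) / 2) * Real.Gamma (weylExponent n p + 1))

theorem weylExponent_eq (hp : 1 < p) : weylExponent n p = n * (1 / (2 * (p - 1)) + 1 / 2) := by
  have : p - 1 ≠ 0 := by linarith
  unfold weylExponent
  field_simp
  ring

theorem weylExponent_pos (hn : n ≠ 0) (hp : 1 < p) : 0 < weylExponent n p := by
  have : (0 : ℝ) < n := by positivity
  have : 0 < p - 1 := by linarith
  unfold weylExponent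
  positivity

theorem latticeScale_pow (ι : Type*) [Fintype ι] {Λ : ℝ} (hp : 1 < p) (hΛ : 0 < Λ) :
    latticeScale p Λ ^ Fintype.card (ι ⊕ ι) =
      (4 ^ (1 / (2 * (p - 1))) / Real.pi) ^ Fintype.card ι *
        Λ ^ weylExponent (Fintype.card ι) p := by
  rw [Fintype.card_sum, ← two_mul, pow_mul, latticeScale_sq p hΛ, weylExponent_eq hp,
    mul_comm (Fintype.card ι : ℝ), Real.rpow_mul hΛ.le, Real.rpow_natCast, ← mul_pow,
    Real.rpow_add hΛ, Real.mul_rpow (by norm_num) hΛ.le, Real.sqrt_eq_rpow]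
  ring

theorem superellipsoidVolume_modeExponent (ι : Type*) [Fintype ι] (hp : 1 < p) :
    superellipsoidVolume (modeExponent ι p) =
      (Real.Gamma (1 / (2 * (p - 1)) + 1) * (√Real.pi / 2)) ^ Fintype.card ι /
        Real.Gamma (weylExponent (Fintype.card ι) p + 1) := by
  have hsum : ∑ i, 1 / modeExponent ι p i = weylExponent (Fintype.card ι) p := by
    simp only [modeExponent, Fintype.sum_sum_type, Sum.elim_inl, Sum.elim_inr, Finset.sum_const,
      Finset.card_univ, nsmul_eq_mul, weylExponent_eq hp, mul_add]
  have hhalf : Real.Gamma (1 / 2 + 1) = √Real.pi / 2 := by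
    rw [Real.Gamma_add_one (by norm_num), Real.Gamma_one_half_eq]
    ring
  rw [superellipsoidVolume, hsum]
  simp only [modeExponent, Fintype.prod_sum_type, Sum.elim_inl, Sum.elim_inr, hhalf,
    Finset.prod_const, Finset.card_univ, mul_pow]

theorem mul_superellipsoidVolume_modeExponent (ι : Type*) [Fintype ι] (hp : 1 < p) :
    2 ^ Fintype.card ι * (4 ^ (1 / (2 * (p - 1))) / Real.pi) ^ Fintype.card ι *
      superellipsoidVolume (modeExponent ι p) = weylConstant (Fintype.card ι) p := by
  have htwo : (2 : ℝ) ^ ((Fintype.card ι : ℝ) / (p - 1)) =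
      ((4 : ℝ) ^ (1 / (2 * (p - 1)))) ^ Fintype.card ι := by
    rw [show (4 : ℝ) = 2 ^ (2 : ℝ) by norm_num, ← Real.rpow_mul (by norm_num), ← Real.rpow_natCast,
      ← Real.rpow_mul (by norm_num)]
    have : p - 1 ≠ 0 := by linarith
    field_simp
  have hpi : Real.pi ^ ((Fintype.card ι : ℝ) / 2) = √Real.pi ^ Fintype.card ι := by
    rw [Real.sqrt_eq_rpow, ← Real.rpow_natCast, ← Real.rpow_mul Real.pi_pos.le]
    ring_nf
  have hsqrt : 2 * (4 ^ (1 / (2 * (p - 1))) / Real.pi) *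
      (Real.Gamma (1 / (2 * (p - 1)) + 1) * (√Real.pi / 2)) =
        4 ^ (1 / (2 * (p - 1))) * Real.Gamma (1 / (2 * (p - 1)) + 1) / √Real.pi := by
    have : 0 < √Real.pi := Real.sqrt_pos.2 Real.pi_pos
    nth_rewrite 1 [← Real.sq_sqrt Real.pi_pos.le]
    field_simp
  rw [superellipsoidVolume_modeExponent ι hp, weylConstant, htwo, hpi, ← mul_pow, ← mul_div_assoc,
    ← mul_pow, hsqrt, div_pow, mul_pow, div_div]

theorem weylConstant_pos (n : ℕ) (hp : 1 < p) : 0 < weylConstant n p := by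
  rw [← Fintype.card_fin n, ← mul_superellipsoidVolume_modeExponent (Fin n) hp]
  have := superellipsoidVolume_pos (modeExponent_pos (ι := Fin n) hp)
  have := Real.pi_pos
  positivity

end WeylConstant

section ModeAsymptotics

variable {ι : Type*} [Fintype ι] {p : ℝ}

theorem tendsto_ncard_div_rpow_weylExponent (hp : 1 < p) {A : ℝ → Set (ι → ℤ × ℕ)}
    {Z : ℝ → Set (ι ⊕ ι → ℕ)}
    (hA : ∀ Λ, 0 < Λ → (A Λ).ncard = 2 ^ Fintype.card ι * (Z (latticeScale p Λ)).ncard)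
    (hZ : Tendsto (fun x => ((Z x).ncard : ℝ) / x ^ Fintype.card (ι ⊕ ι)) atTop
      (𝓝 (superellipsoidVolume (modeExponent ι p)))) :
    Tendsto (fun Λ => ((A Λ).ncard : ℝ) / Λ ^ weylExponent (Fintype.card ι) p) atTop
      (𝓝 (weylConstant (Fintype.card ι) p)) := by
  rw [← mul_superellipsoidVolume_modeExponent ι hp]
  refine ((hZ.comp (tendsto_latticeScale hp)).const_mul _).congr' ?_
  filter_upwards [eventually_gt_atTop 0] with Λ hΛ
  rw [Function.comp_apply, latticeScale_pow ι hp hΛ, hA Λ hΛ]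
  have := Real.pi_pos
  push_cast
  field_simp

theorem tendsto_ncard_neumannModes_div (hp : 1 < p) :
    Tendsto (fun Λ => ((neumannModes ι p Λ).ncard : ℝ) / Λ ^ weylExponent (Fintype.card ι) p)
      atTop (𝓝 (weylConstant (Fintype.card ι) p)) := by
  refine tendsto_ncard_div_rpow_weylExponent hp (fun Λ hΛ => ?_)
    (tendsto_ncard_powSum_natCast_div_le (modeExponent_pos hp))
  rw [neumannModes_eq_preimage hp hΛ, ncard_modeIndex_preimage fun _ _ _ => Nat.zero_le _]

theorem tendsto_ncard_dirichletModes_div (hp : 1 < p) :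
    Tendsto (fun Λ => ((dirichletModes ι p Λ).ncard : ℝ) / Λ ^ weylExponent (Fintype.card ι) p)
      atTop (𝓝 (weylConstant (Fintype.card ι) p)) := by
  refine tendsto_ncard_div_rpow_weylExponent hp (fun Λ hΛ => ?_)
    (tendsto_ncard_ne_zero_powSum_natCast_div_le (modeExponent_pos hp))
  rw [dirichletModes_eq_preimage hp hΛ,
    ncard_modeIndex_preimage fun _ hz i => Nat.one_le_iff_ne_zero.2 (hz.1 _)]

end ModeAsymptotics

/-! ### The eigenvalue counting function -/

section NeumannCutoff

variable {p a δ : ℝ}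

/-- The energy up to which Neumann modes are counted when bounding the number of eigenvalues at most
`a`: it absorbs the loss of `finrank_le_ncard_boxLevel_le`, in which `δ` is a free parameter. -/
noncomputable def neumannCutoff (n : ℕ) (p δ a : ℝ) : ℝ :=
  (a + (n * ((1 ^ 2 + (p - 1) ^ 2) / (4 * δ)) + 2)) / (1 - δ)

theorem neumannCutoff_pos (n : ℕ) (p : ℝ) (hδ : 0 < δ) (hδ1 : δ < 1) (ha : 0 < a) :
    0 < neumannCutoff n p δ a := by
  have : 0 < 1 - δ := by linarith
  unfold neumannCutoff
  positivity

theorem tendsto_neumannCutoff_atTop (n : ℕ) (p : ℝ) (hδ1 : δ < 1) :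
    Tendsto (neumannCutoff n p δ) atTop atTop :=
  (tendsto_atTop_add_const_right _ _ tendsto_id).atTop_div_const (sub_pos.2 hδ1)

theorem tendsto_neumannCutoff_div (n : ℕ) (p δ : ℝ) :
    Tendsto (fun a => neumannCutoff n p δ a / a) atTop (𝓝 (1 - δ)⁻¹) := by
  have hlim : Tendsto (fun a : ℝ => (1 + (n * ((1 ^ 2 + (p - 1) ^ 2) / (4 * δ)) + 2) / a) *
      (1 - δ)⁻¹) atTop (𝓝 ((1 + 0) * (1 - δ)⁻¹)) :=
    (tendsto_const_nhds.add (tendsto_const_nhds.div_atTop tendsto_id)).mul_const _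
  rw [add_zero, one_mul] at hlim
  refine hlim.congr' ?_
  filter_upwards [eventually_gt_atTop 0] with a ha
  rw [neumannCutoff, one_add_div ha.ne', div_mul_eq_mul_div, div_eq_mul_inv _ (1 - δ)]

theorem tendsto_ncard_neumannModes_neumannCutoff_div {ι : Type*} [Fintype ι] (hp : 1 < p)
    (hδ : 0 < δ) (hδ1 : δ < 1) :
    Tendsto (fun a => ((neumannModes ι p (neumannCutoff (Fintype.card ι) p δ a)).ncard : ℝ) /
        a ^ weylExponent (Fintype.card ι) p) atTop
      (𝓝 (weylConstant (Fintype.card ι) p * (1 - δ)⁻¹ ^ weylExponent (Fintype.card ι) p)) := by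
  have hδ' : (1 - δ)⁻¹ ≠ 0 := inv_ne_zero (by linarith)
  refine (((tendsto_ncard_neumannModes_div (ι := ι) hp).comp
    (tendsto_neumannCutoff_atTop (Fintype.card ι) p hδ1)).mul
      ((tendsto_neumannCutoff_div (Fintype.card ι) p δ).rpow_const (.inl hδ'))).congr' ?_
  filter_upwards [eventually_gt_atTop 0] with a ha
  have hcut := neumannCutoff_pos (Fintype.card ι) p hδ hδ1 ha
  rw [Function.comp_apply, Real.div_rpow hcut.le ha.le,
    div_mul_div_cancel₀ (Real.rpow_pos_of_pos hcut _).ne']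

theorem exists_weylConstant_mul_lt {n : ℕ} {c : ℝ} (hc : weylConstant n p < c) :
    ∃ δ : ℝ, 0 < δ ∧ δ < 1 ∧ weylConstant n p * (1 - δ)⁻¹ ^ weylExponent n p < c := by
  have hcont : ContinuousAt
      (fun δ : ℝ => weylConstant n p * (1 - δ)⁻¹ ^ weylExponent n p) 0 := by
    refine continuousAt_const.mul (ContinuousAt.rpow_const ?_ (.inl (by norm_num)))
    exact (continuousAt_const.sub continuousAt_id).inv₀ (by norm_num)
  have hev : ∀ᶠ δ : ℝ in 𝓝 0, weylConstant n p * (1 - δ)⁻¹ ^ weylExponent n p < c :=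
    hcont.eventually_lt_const (by simpa using hc)
  obtain ⟨δ, hδc, hδ, hδ1⟩ :=
    ((hev.filter_mono nhdsWithin_le_nhds).and (Ioo_mem_nhdsGT one_pos)).exists
  exact ⟨δ, hδ, hδ1, hδc⟩

end NeumannCutoff

section CountingFunction

variable {ι : Type*} [Fintype ι] [Nonempty ι] {p a δ : ℝ} {k : ℕ}

theorem exists_submodule_of_le_ncard_dirichletModes (hp : 1 < p) (ha : 0 < a)
    (hk : k ≤ (dirichletModes ι p a).ncard) :
    ∃ F : Submodule ℝ (EuclideanSpace ℝ ι → ℝ), Module.finrank ℝ F = k ∧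
      ∀ f ∈ F, memW12Lip (gibbs ι fun s => |s| ^ p / p) f ∧
        lipEnergy (gibbs ι fun s => |s| ^ p / p) f ≤
          ENNReal.ofReal a * mass (gibbs ι fun s => |s| ^ p / p) f := by
  have hfin := finite_dirichletModes (ι := ι) hp ha
  have hl := cellLength_pos p ha
  rw [Set.ncard_eq_toFinset_card _ hfin] at hk
  obtain ⟨M, hM, rfl⟩ := Finset.exists_subset_card_eq hk
  have hmem : ∀ α ∈ M, α ∈ dirichletModes ι p a := fun α hα => hfin.mem_toFinset.1 (hM hα)
  exact exists_submodule_lipEnergy_le_of_boxLevel_le (hasDerivAt_abs_rpow_div hp)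
    (continuous_powDeriv hp) (monotone_powDeriv hp) hl (cellPotential_nonneg p hl 1)
    (le_cellPotential_one hp hl) (fun α hα => (hmem α hα).1) fun α hα => (hmem α hα).2

theorem lambdaLip_le_of_le_ncard_dirichletModes (hp : 1 < p) (ha : 0 < a)
    (hk : k ≤ (dirichletModes ι p a).ncard) :
    lambdaLip (gibbs ι fun s => |s| ^ p / p) k ≤ a := by
  obtain ⟨F, rfl, hF⟩ := exists_submodule_of_le_ncard_dirichletModes hp ha hk
  exact lambdaLip_finrank_le gibbs_absolutelyContinuous ha.le hF

theorem exists_submodule_memW12Lip (hp : 1 < p) (k : ℕ) :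
    ∃ F : Submodule ℝ (EuclideanSpace ℝ ι → ℝ), Module.finrank ℝ F = k ∧
      ∀ f ∈ F, memW12Lip (gibbs ι fun s => |s| ^ p / p) f := by
  have hexp : 0 < weylExponent (Fintype.card ι) p := weylExponent_pos Fintype.card_ne_zero hp
  have htop := (tendsto_ncard_dirichletModes_div (ι := ι) hp).pos_mul_atTop
    (weylConstant_pos _ hp) (tendsto_rpow_atTop hexp)
  obtain ⟨a, hak, ha⟩ :=
    ((htop.eventually_ge_atTop (k : ℝ)).and (eventually_gt_atTop 0)).exists
  rw [div_mul_cancel₀ _ (Real.rpow_pos_of_pos ha _).ne', Nat.cast_le] at hak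
  obtain ⟨F, hFk, hF⟩ := exists_submodule_of_le_ncard_dirichletModes hp ha hak
  exact ⟨F, hFk, fun f hf => (hF f hf).1⟩

theorem le_ncard_neumannModes_of_lambdaLip_le (hp : 1 < p) (hδ : 0 < δ) (hδ1 : δ < 1) (ha : 0 < a)
    (hk : k ≠ 0) (hka : lambdaLip (gibbs ι fun s => |s| ^ p / p) k ≤ a) :
    k ≤ (neumannModes ι p (neumannCutoff (Fintype.card ι) p δ a)).ncard := by
  have := isOpenPosMeasure_gibbs (ι := ι) (continuous_abs_rpow_div hp)
  obtain ⟨F, rfl, hF⟩ := exists_submodule_of_lambdaLip_lt gibbs_absolutelyContinuous hk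
    (exists_submodule_memW12Lip hp k) (hka.trans_lt (lt_add_one a))
  have hcut := neumannCutoff_pos (Fintype.card ι) p hδ hδ1 ha
  have hl := cellLength_pos p hcut
  refine finrank_le_ncard_boxLevel_le (hasDerivAt_abs_rpow_div hp) (continuous_powDeriv hp)
    (isLipschitzSubstitute_truncPowDeriv hp) hδ hδ1 hl (cellPotential_nonneg p hl 0)
    (cellPotential_zero_le hp hl) (by linarith) ?_ (finite_neumannModes hp hcut) hF
  have : 1 - δ ≠ 0 := by linarith
  rw [neumannCutoff, mul_div_cancel₀ _ this]
  linarith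

theorem setOf_lambdaLip_le_subset_Icc (hp : 1 < p) (hδ : 0 < δ) (hδ1 : δ < 1) (ha : 0 < a) :
    {k : ℕ | 1 ≤ k ∧ lambdaLip (gibbs ι fun s => |s| ^ p / p) k ≤ a} ⊆
      Set.Icc 1 (neumannModes ι p (neumannCutoff (Fintype.card ι) p δ a)).ncard :=
  fun _ hk => ⟨hk.1, le_ncard_neumannModes_of_lambdaLip_le hp hδ hδ1 ha
    (Nat.one_le_iff_ne_zero.1 hk.1) hk.2⟩

theorem finite_lambdaLip_le (hp : 1 < p) (ha : 0 < a) :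
    {k : ℕ | 1 ≤ k ∧ lambdaLip (gibbs ι fun s => |s| ^ p / p) k ≤ a}.Finite :=
  (Set.finite_Icc _ _).subset
    (setOf_lambdaLip_le_subset_Icc hp one_half_pos one_half_lt_one ha)

theorem ncard_lambdaLip_le_le_ncard_neumannModes (hp : 1 < p) (hδ : 0 < δ) (hδ1 : δ < 1)
    (ha : 0 < a) :
    {k : ℕ | 1 ≤ k ∧ lambdaLip (gibbs ι fun s => |s| ^ p / p) k ≤ a}.ncard ≤
      (neumannModes ι p (neumannCutoff (Fintype.card ι) p δ a)).ncard := by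
  simpa using Set.ncard_le_ncard (setOf_lambdaLip_le_subset_Icc hp hδ hδ1 ha) (Set.finite_Icc _ _)

theorem ncard_dirichletModes_le_ncard_lambdaLip_le (hp : 1 < p) (ha : 0 < a) :
    (dirichletModes ι p a).ncard ≤
      {k : ℕ | 1 ≤ k ∧ lambdaLip (gibbs ι fun s => |s| ^ p / p) k ≤ a}.ncard := by
  have hsub : Set.Icc 1 (dirichletModes ι p a).ncard ⊆
      {k : ℕ | 1 ≤ k ∧ lambdaLip (gibbs ι fun s => |s| ^ p / p) k ≤ a} :=
    fun _ hk => ⟨hk.1, lambdaLip_le_of_le_ncard_dirichletModes hp ha hk.2⟩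
  simpa using Set.ncard_le_ncard hsub (finite_lambdaLip_le hp ha)

theorem tendsto_ncard_lambdaLip_le_div (hp : 1 < p) :
    Tendsto (fun a => ({k : ℕ | 1 ≤ k ∧
        lambdaLip (gibbs ι fun s => |s| ^ p / p) k ≤ a}.ncard : ℝ) /
          a ^ weylExponent (Fintype.card ι) p) atTop
      (𝓝 (weylConstant (Fintype.card ι) p)) := by
  refine tendsto_order.2 ⟨fun c hc => ?_, fun c hc => ?_⟩
  · filter_upwards [(tendsto_ncard_dirichletModes_div hp).eventually_const_lt hc,
      eventually_gt_atTop 0] with a hlt ha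
    refine hlt.trans_le ?_
    gcongr
    exact ncard_dirichletModes_le_ncard_lambdaLip_le hp ha
  · obtain ⟨δ, hδ, hδ1, hδc⟩ := exists_weylConstant_mul_lt hc
    filter_upwards [(tendsto_ncard_neumannModes_neumannCutoff_div hp hδ hδ1).eventually_lt_const
      hδc, eventually_gt_atTop 0] with a hlt ha
    refine lt_of_le_of_lt ?_ hlt
    gcongr
    exact ncard_lambdaLip_le_le_ncard_neumannModes hp hδ hδ1 ha

end CountingFunction

end WeylAsymptotics

/-- **Weyl asymptotics for the measures `ν_pⁿ`, `p ∈ (1,∞)`:** the eigenvalue counting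
function `N(λ) = #{k ≥ 1 : λ_k^Lip(ℝⁿ,|·|,ν_pⁿ) ≤ λ}` is finite for each `λ > 0`, and
`N(λ)/λ^{(n/2)·p/(p-1)} → 2^{n/(p-1)}·Γ(1/(2(p-1))+1)ⁿ / (π^{n/2}·Γ((n/2)·p/(p-1)+1))`
as `λ → ∞`. -/
theorem weyl_asymptotics_nuP
    (n : ℕ) (hn : 1 ≤ n) (p : ℝ) (hp : 1 < p) :
    (∀ lam : ℝ, 0 < lam →
      {k : ℕ | 1 ≤ k ∧ lambdaLip (nuP n p) k ≤ lam}.Finite) ∧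
    Tendsto
      (fun lam : ℝ =>
        (Set.ncard {k : ℕ | 1 ≤ k ∧ lambdaLip (nuP n p) k ≤ lam} : ℝ) /
          lam ^ ((n / 2 : ℝ) * p / (p - 1)))
      atTop
      (𝓝 ((2 : ℝ) ^ ((n : ℝ) / (p - 1)) * Real.Gamma (1 / (2 * (p - 1)) + 1) ^ n /
        (Real.pi ^ ((n : ℝ) / 2) * Real.Gamma ((n / 2 : ℝ) * p / (p - 1) + 1)))) := by
  have : Nonempty (Fin n) := Fin.pos_iff_nonempty.1 hn
  simp only [WeylAsymptotics.lambdaLip_nuP hp]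
  refine ⟨fun lam hlam => WeylAsymptotics.finite_lambdaLip_le hp hlam, ?_⟩
  have hweyl := WeylAsymptotics.tendsto_ncard_lambdaLip_le_div (ι := Fin n) hp
  rw [Fintype.card_fin] at hweyl
  exact hweyl
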